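/- arXiv:1906.05161 — 3 statements merged into one kernel-verified Lean document; each statement's English description precedes it below -/
import Mathlib

section
/- Let u : ℝⁿ → ℝ be continuous on the closed half-space {x ∈ ℝⁿ : xₙ ≥ 0} and twice continuously differentiable on the open half-space ℝⁿ₊, satisfying −Δu(x) = |∇u(x)|^p for every x ∈ ℝⁿ₊ and u(x̃, 0) = 0 for every x̃ ∈ ℝ^{n−1}. Then u depends only on the variable xₙ: for all x, y in the closed half-space with xₙ = yₙ one has u(x) = u(y). -/
open Set Metric Filter RealInnerProductSpace

noncomputable section

set_option linter.unusedVariables false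

/-- The Laplacian of `u : ℝⁿ → ℝ`, as the sum of the second derivatives
`∂²u/∂xᵢ²` (computed via iterated Fréchet derivatives). -/
def lap {n : ℕ} (u : EuclideanSpace ℝ (Fin n) → ℝ) (x : EuclideanSpace ℝ (Fin n)) : ℝ :=
  ∑ i : Fin n, fderiv ℝ (fun y => fderiv ℝ u y (EuclideanSpace.single i (1 : ℝ))) x
    (EuclideanSpace.single i (1 : ℝ))


open Topology

open Topology

/-- One-variable second order data at `0`. -/
def Has2 (f : ℝ → ℝ) (a b : ℝ) : Prop :=
  ∃ f' : ℝ → ℝ, (∀ᶠ t in 𝓝 (0:ℝ), HasDerivAt f (f' t) t) ∧ f' 0 = a ∧ HasDerivAt f' b 0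

lemma Has2.add {f g : ℝ → ℝ} {a b c d : ℝ} (hf : Has2 f a b) (hg : Has2 g c d) :
    Has2 (fun t => f t + g t) (a + c) (b + d) := by
  obtain ⟨f', h1, h2, h3⟩ := hf
  obtain ⟨g', k1, k2, k3⟩ := hg
  refine ⟨fun t => f' t + g' t, ?_, by simp [h2, k2], h3.add k3⟩
  filter_upwards [h1, k1] with t ht kt using ht.add kt

lemma Has2.sub {f g : ℝ → ℝ} {a b c d : ℝ} (hf : Has2 f a b) (hg : Has2 g c d) :
    Has2 (fun t => f t - g t) (a - c) (b - d) := by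
  obtain ⟨f', h1, h2, h3⟩ := hf
  obtain ⟨g', k1, k2, k3⟩ := hg
  refine ⟨fun t => f' t - g' t, ?_, by simp [h2, k2], h3.sub k3⟩
  filter_upwards [h1, k1] with t ht kt using ht.sub kt

lemma Has2.const_mul {f : ℝ → ℝ} {a b : ℝ} (c : ℝ) (hf : Has2 f a b) :
    Has2 (fun t => c * f t) (c * a) (c * b) := by
  obtain ⟨f', h1, h2, h3⟩ := hf
  refine ⟨fun t => c * f' t, ?_, by simp [h2], h3.const_mul c⟩
  filter_upwards [h1] with t ht using ht.const_mul c

lemma Has2.congr {f g : ℝ → ℝ} {a b : ℝ} (hf : Has2 f a b) (h : g =ᶠ[𝓝 0] f) :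
    Has2 g a b := by
  obtain ⟨f', h1, h2, h3⟩ := hf
  refine ⟨f', ?_, h2, h3⟩
  filter_upwards [h1, h.eventuallyEq_nhds] with t ht kt using ht.congr_of_eventuallyEq kt

lemma has2_quad (a b c : ℝ) : Has2 (fun t => c + a * t + b * t ^ 2) a (2 * b) := by
  refine ⟨fun t => a + 2 * b * t, ?_, by simp, ?_⟩
  · refine Eventually.of_forall fun t => ?_
    have := (((hasDerivAt_id t).const_mul a).const_add c).add (((hasDerivAt_id t).pow 2).const_mul b)
    exact this.congr_deriv (by simp; ring)
  · have := ((hasDerivAt_id (0:ℝ)).const_mul (2*b)).const_add a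
    exact this.congr_deriv (by simp)

lemma Has2.comp {g : ℝ → ℝ} {a b : ℝ} (hg : Has2 g a b) {F F' : ℝ → ℝ} {F'' r : ℝ} (hr : g 0 = r)
    (h1 : ∀ᶠ s in 𝓝 r, HasDerivAt F (F' s) s) (h2 : HasDerivAt F' F'' r) :
    Has2 (fun t => F (g t)) (F' r * a) (F'' * a ^ 2 + F' r * b) := by
  obtain ⟨g', k1, k2, k3⟩ := hg
  subst hr
  have hc : ContinuousAt g 0 := k1.self_of_nhds.continuousAt
  refine ⟨fun t => F' (g t) * g' t, ?_, by simp [k2], ?_⟩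
  · filter_upwards [k1, hc.eventually h1] with t ht kt using kt.comp t ht
  · have e := (h2.comp 0 k1.self_of_nhds).mul k3
    exact e.congr_deriv (by simp [k2]; ring)

lemma Has2.localMax {f : ℝ → ℝ} {a b : ℝ} (hf : Has2 f a b) (h : IsLocalMax f 0) :
    a = 0 ∧ b ≤ 0 := by
  obtain ⟨f', h1, h2, h3⟩ := hf
  have ha : a = 0 := by
    rw [← h2]; exact h.hasDerivAt_eq_zero h1.self_of_nhds
  refine ⟨ha, ?_⟩
  by_contra hb
  push Not at hb
  have hd : deriv f =ᶠ[𝓝 0] f' := by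
    filter_upwards [h1] with t ht using ht.deriv
  have hdd : deriv (deriv f) 0 = b := by
    rw [hd.deriv_eq]; exact h3.deriv
  have hmin := isLocalMin_of_deriv_deriv_pos (f := f) (x₀ := 0) (by rw [hdd]; exact hb)
    (by rw [h1.self_of_nhds.deriv, h2, ha]) h1.self_of_nhds.continuousAt
  have hconst : f =ᶠ[𝓝 0] fun _ => f 0 := by
    filter_upwards [h, hmin] with t ht kt using le_antisymm ht kt
  have : deriv f =ᶠ[𝓝 0] fun _ => 0 := by
    have := hconst.deriv
    simpa using this
  have := this.deriv_eq
  rw [hdd] at this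
  simp at this
  linarith

lemma bernoulli_pow {p a b : ℝ} (hp : 1 ≤ p) (ha : 0 ≤ a) (hb : 0 ≤ b) :
    a ^ p + p * a ^ (p - 1) * (b - a) ≤ b ^ p := by
  rcases ha.eq_or_lt with rfl | ha
  · rcases hp.eq_or_lt with rfl | hp
    · simp
    · rw [Real.zero_rpow (by linarith), Real.zero_rpow (by linarith)]
      simp; positivity
  · have h := one_add_mul_self_le_rpow_one_add (s := b / a - 1) (p := p)
      (by have : 0 ≤ b / a := by positivity
          linarith) hp
    have e1 : a ^ p = a ^ (p - 1) * a := by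
      rw [← Real.rpow_add_one ha.ne']; simp
    have e2 : b ^ p = a ^ p * (1 + (b / a - 1)) ^ p := by
      rw [← Real.mul_rpow ha.le (by simp; positivity)]
      congr 1; field_simp; ring
    rw [e2]
    have : a ^ p * (1 + p * (b / a - 1)) ≤ a ^ p * (1 + (b / a - 1)) ^ p := by gcongr
    refine le_trans (le_of_eq ?_) this
    rw [e1]; field_simp

section euclid
variable {N : ℕ}

local notation "E" => EuclideanSpace ℝ (Fin N)

lemma has2_line {w : E → ℝ} {x : E} (h : ContDiffAt ℝ 2 w x) (ξ : E) :
    Has2 (fun t => w (x + t • ξ)) (fderiv ℝ w x ξ) (fderiv ℝ (fderiv ℝ w) x ξ ξ) := by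
  have hl : ∀ t : ℝ, HasDerivAt (fun t : ℝ => x + t • ξ) ξ t := by
    intro t
    have := ((hasDerivAt_id t).smul_const ξ).const_add x
    simpa using this
  have hc : Tendsto (fun t : ℝ => x + t • ξ) (𝓝 0) (𝓝 x) := by
    have := (hl 0).continuousAt.tendsto
    simpa using this
  refine ⟨fun t => fderiv ℝ w (x + t • ξ) ξ, ?_, by simp, ?_⟩
  · have : ∀ᶠ y in 𝓝 x, ContDiffAt ℝ 2 w y := h.eventually (by simp)
    filter_upwards [hc.eventually this] with t ht
    have hd : DifferentiableAt ℝ w (x + t • ξ) := ht.differentiableAt (by norm_num)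
    exact hd.hasFDerivAt.comp_hasDerivAt t (hl t)
  · have h2 : DifferentiableAt ℝ (fderiv ℝ w) (x + (0:ℝ) • ξ) := by
      simpa using (h.fderiv_right (m := 1) (by norm_num)).differentiableAt (by norm_num)
    have := h2.hasFDerivAt.comp_hasDerivAt 0 (hl 0)
    have := this.clm_apply (hasDerivAt_const 0 ξ)
    simpa using this

lemma has2_normsq (z ξ : E) :
    Has2 (fun t => ‖z + t • ξ‖ ^ 2) (2 * inner ℝ z ξ) (2 * ‖ξ‖ ^ 2) := by
  refine (has2_quad (2 * inner ℝ z ξ) (‖ξ‖ ^ 2) (‖z‖ ^ 2)).congr (Eventually.of_forall fun t => ?_)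
  simp only
  rw [norm_add_sq_real, inner_smul_right, norm_smul, mul_pow, Real.norm_eq_abs, sq_abs]
  ring

open InnerProductSpace Laplacian in
lemma lap_eq {w : E → ℝ} {x : E} (h : ContDiffAt ℝ 2 w x) (b : OrthonormalBasis (Fin N) ℝ E) :
    lap w x = ∑ i, fderiv ℝ (fderiv ℝ w) x (b i) (b i) := by
  have h2 : DifferentiableAt ℝ (fderiv ℝ w) x :=
    (h.fderiv_right (m := 1) (by norm_num)).differentiableAt (by norm_num)
  have e0 : lap w x = ∑ i, fderiv ℝ (fderiv ℝ w) x (EuclideanSpace.basisFun (Fin N) ℝ i)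
      (EuclideanSpace.basisFun (Fin N) ℝ i) := by
    unfold lap
    refine Finset.sum_congr rfl fun i _ => ?_
    rw [fderiv_clm_apply h2 (by fun_prop)]
    simp
  have key : ∀ b : OrthonormalBasis (Fin N) ℝ E,
      ∑ i, fderiv ℝ (fderiv ℝ w) x (b i) (b i) = (Δ w) x := by
    intro b
    rw [laplacian_eq_iteratedFDeriv_orthonormalBasis w b]
    refine Finset.sum_congr rfl fun i _ => ?_
    rw [iteratedFDeriv_two_apply]; simp
  rw [e0, key, key]

lemma grad_bound {w : E → ℝ} {y : E} {L : ℝ} (hL : 0 ≤ L) (h : DifferentiableAt ℝ w y)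
    (hw : ∀ᶠ z in 𝓝 y, w y - w z ≤ L * ‖z - y‖) : ‖fderiv ℝ w y‖ ≤ L := by
  have main : ∀ ξ : E, -(L * ‖ξ‖) ≤ fderiv ℝ w y ξ := by
    intro ξ
    have hl : HasDerivAt (fun t : ℝ => y + t • ξ) ξ 0 := by
      have := ((hasDerivAt_id (0:ℝ)).smul_const ξ).const_add y
      simpa using this
    have hc : Tendsto (fun t : ℝ => y + t • ξ) (𝓝 0) (𝓝 y) := by
      have := hl.continuousAt.tendsto
      simpa using this
    have hd : HasDerivAt (fun t : ℝ => w (y + t • ξ)) (fderiv ℝ w y ξ) 0 := by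
      have h' : HasFDerivAt w (fderiv ℝ w y) (y + (0:ℝ) • ξ) := by simpa using h.hasFDerivAt
      exact h'.comp_hasDerivAt 0 hl
    have ht := (hasDerivWithinAt_iff_tendsto_slope' (by simp)).1 (hd.hasDerivWithinAt (s := Ioi 0))
    refine ge_of_tendsto ht ?_
    filter_upwards [self_mem_nhdsWithin, nhdsWithin_le_nhds (hc.eventually hw)] with t ht0 ht
    have ht0 : 0 < t := ht0
    simp only [add_sub_cancel_left, norm_smul, Real.norm_eq_abs, abs_of_pos ht0] at ht
    rw [slope_def_field, le_div_iff₀ (by linarith)]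
    simp
    linarith
  refine ContinuousLinearMap.opNorm_le_bound _ hL fun ξ => ?_
  rw [Real.norm_eq_abs, abs_le]
  refine ⟨main ξ, ?_⟩
  have := main (-ξ)
  simp at this
  linarith

end euclid


section euclid2
variable {N : ℕ}

local notation "E" => EuclideanSpace ℝ (Fin N)

lemma tendsto_line (x ξ : E) : Tendsto (fun t : ℝ => x + t • ξ) (𝓝 0) (𝓝 x) := by
  have : Continuous (fun t : ℝ => x + t • ξ) := by fun_prop
  simpa using this.tendsto 0

lemma max_test {w s : E → ℝ} {x : E} (h : ContDiffAt ℝ 2 w x)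
    (hmax : IsLocalMax (fun z => w z - s z) x) {a b : E → ℝ}
    (hs : ∀ ξ, Has2 (fun t => s (x + t • ξ)) (a ξ) (b ξ)) :
    (∀ ξ, fderiv ℝ w x ξ = a ξ) ∧
      lap w x ≤ ∑ i, b (EuclideanSpace.basisFun (Fin N) ℝ i) := by
  have key : ∀ ξ, fderiv ℝ w x ξ - a ξ = 0 ∧ fderiv ℝ (fderiv ℝ w) x ξ ξ - b ξ ≤ 0 := by
    intro ξ
    refine ((has2_line h ξ).sub (hs ξ)).localMax ?_
    have := (tendsto_line x ξ).eventually hmax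
    simpa [IsLocalMax, IsMaxFilter] using this
  refine ⟨fun ξ => by linarith [(key ξ).1], ?_⟩
  rw [lap_eq h (EuclideanSpace.basisFun (Fin N) ℝ)]
  exact Finset.sum_le_sum fun i _ => by linarith [(key (EuclideanSpace.basisFun (Fin N) ℝ i)).2]

lemma sum_inner_sq (z : E) : ∑ i, inner ℝ z (EuclideanSpace.basisFun (Fin N) ℝ i) ^ 2 = ‖z‖ ^ 2 := by
  simp [EuclideanSpace.norm_sq_eq, EuclideanSpace.inner_single_right]

lemma has2_radial (x y ξ : E) {f f' : ℝ → ℝ} {f'' : ℝ}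
    (h1 : ∀ᶠ s in 𝓝 (‖x - y‖ ^ 2), HasDerivAt f (f' s) s) (h2 : HasDerivAt f' f'' (‖x - y‖ ^ 2)) :
    Has2 (fun t => f (‖x + t • ξ - y‖ ^ 2)) (f' (‖x - y‖ ^ 2) * (2 * inner ℝ (x - y) ξ))
      (f'' * (2 * inner ℝ (x - y) ξ) ^ 2 + f' (‖x - y‖ ^ 2) * (2 * ‖ξ‖ ^ 2)) := by
  have := (has2_normsq (x - y) ξ).comp (F := f) (r := ‖x - y‖ ^ 2) (by simp) h1 h2
  refine this.congr (Eventually.of_forall fun t => ?_)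
  simp only
  congr 3
  abel

lemma sum_radial (z : E) (c d : ℝ) :
    ∑ i, (c * (2 * inner ℝ z (EuclideanSpace.basisFun (Fin N) ℝ i)) ^ 2
      + d * (2 * ‖EuclideanSpace.basisFun (Fin N) ℝ i‖ ^ 2)) = 4 * ‖z‖ ^ 2 * c + 2 * N * d := by
  rw [Finset.sum_add_distrib, ← sum_inner_sq z, ← Finset.mul_sum]
  congr 1
  · simp only [mul_pow, ← Finset.mul_sum]; ring
  · simp; ring

end euclid2

lemma barrier_ineq {p : ℝ} (hp : 2 < p) (N : ℕ) {γ : ℝ} (hγ : γ = (p - 2) / (2 * (p - 1))) :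
    ∃ A : ℝ, 0 < A ∧ ∀ ρ : ℝ, 0 < ρ → ρ < 1 →
      4 * ρ * (A * (γ * ((γ - 1) * ρ ^ (γ - 2)) + 2 * (1 - ρ)⁻¹ ^ 3))
        + 2 * N * (A * (γ * ρ ^ (γ - 1) + (1 - ρ)⁻¹ ^ 2))
      < (2 * (A * (γ * ρ ^ (γ - 1) + (1 - ρ)⁻¹ ^ 2)) * √ρ) ^ p := by
  have hγ0 : 0 < γ := by rw [hγ]; apply div_pos <;> linarith
  have hγ1 : γ < 1 / 2 := by
    rw [hγ, div_lt_div_iff₀ (by linarith) (by norm_num)]; linarith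
  have hγp : (γ - 1 / 2) * p = γ - 1 := by
    rw [hγ]; have : p - 1 ≠ 0 := by linarith
    field_simp; ring
  have hlim : Tendsto (fun A : ℝ => A ^ (p - 1) * (2 * γ) ^ p) atTop atTop :=
    (tendsto_rpow_atTop (by linarith)).atTop_mul_const (by positivity)
  obtain ⟨A, hA1, hA⟩ := ((eventually_gt_atTop 0).and
    (hlim.eventually_gt_atTop (9 * (8 + 4 * (N:ℝ))))).exists
  refine ⟨A, hA1, fun ρ h0 h1 => ?_⟩
  set X := ρ ^ (γ - 1) with hX
  set Y := (1 - ρ)⁻¹ with hY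
  have hX1 : 1 ≤ X := Real.one_le_rpow_of_pos_of_le_one_of_nonpos h0 h1.le (by linarith)
  have hY1 : 1 ≤ Y := by rw [hY]; exact (one_le_inv₀ (by linarith)).2 (by linarith)
  have hNN : (0:ℝ) ≤ N := N.cast_nonneg
  have hAp : A ^ p = A ^ (p - 1) * A := by rw [← Real.rpow_add_one hA1.ne']; simp
  have hYY : Y ^ 2 ≤ Y ^ 3 := pow_le_pow_right₀ hY1 (by norm_num)
  have hLHS : 4 * ρ * (A * (γ * ((γ - 1) * ρ ^ (γ - 2)) + 2 * Y ^ 3))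
        + 2 * N * (A * (γ * X + Y ^ 2)) ≤ A * ((8 + 4 * N) * (X + Y ^ 3)) := by
    have e1 : 4 * ρ * (A * (γ * ((γ - 1) * ρ ^ (γ - 2)) + 2 * Y ^ 3)) ≤ A * (8 * Y ^ 3) := by
      have : γ * ((γ - 1) * ρ ^ (γ - 2)) ≤ 0 := by
        have : 0 < γ * ρ ^ (γ - 2) := by positivity
        nlinarith
      have h2 : ρ * (γ * ((γ - 1) * ρ ^ (γ - 2)) + 2 * Y ^ 3) ≤ 2 * Y ^ 3 := by
        have : 0 ≤ Y ^ 3 := by positivity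
        nlinarith
      nlinarith
    have e2 : 2 * N * (A * (γ * X + Y ^ 2)) ≤ A * (2 * N * (X + Y ^ 3)) := by
      have : γ * X + Y ^ 2 ≤ X + Y ^ 3 := by nlinarith
      calc 2 * N * (A * (γ * X + Y ^ 2)) = A * (2 * N * (γ * X + Y ^ 2)) := by ring
        _ ≤ _ := by gcongr
    have e3 : 0 ≤ A * (N * (X + Y^3)) := by positivity
    have e4 : 0 ≤ A * X := by positivity
    nlinarith
  refine hLHS.trans_lt ?_
  have hsq : √ρ * X = ρ ^ (γ - 1 / 2) := by
    rw [Real.sqrt_eq_rpow, hX, ← Real.rpow_add h0]; congr 1; ring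
  have h2γ : (2 * γ) ^ p ≤ 1 := Real.rpow_le_one (by positivity) (by linarith) (by linarith)
  have hA' : 9 * (8 + 4 * (N:ℝ)) < A ^ (p - 1) := by
    have : 0 < A ^ (p - 1) := by positivity
    nlinarith
  rcases le_total ρ (1 / 2) with hρ | hρ
  · have hY2 : Y ≤ 2 := by
      rw [hY]; exact inv_le_of_inv_le₀ (by norm_num) (by linarith)
    have hY3 : Y ^ 3 ≤ 8 := by
      calc Y ^ 3 ≤ 2 ^ 3 := by gcongr
        _ = 8 := by norm_num
    calc A * ((8 + 4 * N) * (X + Y ^ 3)) ≤ A * ((8 + 4 * N) * (9 * X)) := by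
          gcongr; linarith
      _ = A * X * (9 * (8 + 4 * N)) := by ring
      _ < A * X * (A ^ (p - 1) * (2 * γ) ^ p) := by gcongr
      _ = A ^ p * (2 * γ) ^ p * (√ρ * X) ^ p := by
          rw [hsq, ← Real.rpow_mul h0.le, hγp, hAp]; ring
      _ = (2 * (A * (γ * X)) * √ρ) ^ p := by
          rw [← Real.mul_rpow (by positivity) (by positivity),
            ← Real.mul_rpow (by positivity) (by positivity)]
          congr 1; ring
      _ ≤ _ := by
          gcongr
          nlinarith [sq_nonneg Y]
  · have hX2 : X ≤ 2 := by
      calc X ≤ ρ ^ (-1:ℝ) := Real.rpow_le_rpow_of_exponent_ge h0 h1.le (by linarith)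
        _ = ρ⁻¹ := Real.rpow_neg_one ρ
        _ ≤ 2 := inv_le_of_inv_le₀ (by norm_num) (by linarith)
    have hY3 : 1 ≤ Y ^ 3 := one_le_pow₀ hY1
    have hsq2 : 1 ≤ 2 * √ρ := by
      have : 1 / 2 ≤ √ρ := Real.le_sqrt_of_sq_le (by norm_num; linarith)
      linarith
    have hYp : Y ^ 3 ≤ (Y ^ 2) ^ p := by
      calc Y ^ 3 ≤ Y ^ 4 := pow_le_pow_right₀ hY1 (by norm_num)
        _ = (Y ^ 2) ^ (2:ℝ) := by norm_cast; ring
        _ ≤ _ := Real.rpow_le_rpow_of_exponent_le (one_le_pow₀ hY1) hp.le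
    calc A * ((8 + 4 * N) * (X + Y ^ 3)) ≤ A * ((8 + 4 * N) * (9 * Y ^ 3)) := by
          gcongr; linarith
      _ = A * Y ^ 3 * (9 * (8 + 4 * N)) := by ring
      _ < A * Y ^ 3 * A ^ (p - 1) := by gcongr
      _ = A ^ p * Y ^ 3 := by rw [hAp]; ring
      _ ≤ A ^ p * (Y ^ 2) ^ p := by gcongr
      _ = (A * Y ^ 2) ^ p := by rw [← Real.mul_rpow (by positivity) (by positivity)]
      _ ≤ _ := by
          refine Real.rpow_le_rpow (by positivity) ?_ (by linarith)
          have h3 : A * Y ^ 2 ≤ A * (γ * X + Y ^ 2) := by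
            gcongr; have : 0 ≤ γ * X := by positivity
            linarith
          have h4 : 0 ≤ A * (γ * X + Y ^ 2) := by positivity
          nlinarith


/-- Solutions of `Δ w = |∇ w| ^ p` in the open half-space. -/
structure IsSol {n : ℕ} (p : ℝ) (w : EuclideanSpace ℝ (Fin (n + 1)) → ℝ) : Prop where
  c2 : ∀ x, 0 < x (Fin.last n) → ContDiffAt ℝ 2 w x
  eq : ∀ x, 0 < x (Fin.last n) → lap w x = ‖fderiv ℝ w x‖ ^ p

lemma coord_sub_le {N : ℕ} (x y : EuclideanSpace ℝ (Fin N)) (i : Fin N) :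
    y i - ‖x - y‖ ≤ x i := by
  have := PiLp.norm_apply_le (x - y) i
  rw [Real.norm_eq_abs] at this
  have h2 := neg_abs_le ((x - y) i)
  simp at this h2
  linarith

lemma holder {p : ℝ} (hp : 2 < p) (n : ℕ) :
    ∃ C : ℝ, 0 < C ∧ ∀ w : EuclideanSpace ℝ (Fin (n + 1)) → ℝ, IsSol p w →
      ∀ y x, 1 < y (Fin.last n) → ‖x - y‖ ≤ 1 / 2 →
        w x - w y ≤ C * ‖x - y‖ ^ ((p - 2) / (p - 1)) := by
  obtain ⟨γ, hγ⟩ : ∃ γ : ℝ, γ = (p - 2) / (2 * (p - 1)) := ⟨_, rfl⟩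
  obtain ⟨A, hA, hbar⟩ := barrier_ineq hp (n + 1) hγ
  have hγ0 : 0 < γ := by rw [hγ]; apply div_pos <;> linarith
  have hγ1 : γ < 1 / 2 := by
    rw [hγ, div_lt_div_iff₀ (by linarith) (by norm_num)]; linarith
  refine ⟨3 * A, by positivity, fun w hw y x hy hx => ?_⟩
  set f : ℝ → ℝ := fun ρ => A * (ρ ^ γ + (1 - ρ)⁻¹ - 1) with hf
  set f' : ℝ → ℝ := fun ρ => A * (γ * ρ ^ (γ - 1) + (1 - ρ)⁻¹ ^ 2) with hf'
  have hd1 : ∀ ρ, 0 < ρ → ρ < 1 → HasDerivAt f (f' ρ) ρ := by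
    intro ρ h0 h1
    have e1 := Real.hasDerivAt_rpow_const (x := ρ) (p := γ) (Or.inl h0.ne')
    have e2 := ((hasDerivAt_id ρ).const_sub 1).inv (by simp; linarith)
    have := ((e1.add e2).sub_const 1).const_mul A
    refine this.congr_deriv ?_
    simp [hf']
  have hd2 : ∀ ρ, 0 < ρ → ρ < 1 → HasDerivAt f'
      (A * (γ * ((γ - 1) * ρ ^ (γ - 2)) + 2 * (1 - ρ)⁻¹ ^ 3)) ρ := by
    intro ρ h0 h1
    have e1 := (Real.hasDerivAt_rpow_const (x := ρ) (p := γ - 1) (Or.inl h0.ne')).const_mul γ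
    have e2 := (((hasDerivAt_id ρ).const_sub 1).inv (by simp; linarith)).pow 2
    have := (e1.add e2).const_mul A
    refine this.congr_deriv ?_
    have : (1 - ρ) ≠ 0 := by linarith
    have h3 : γ - 1 - 1 = γ - 2 := by ring
    simp [h3]
    left
    field_simp
  have hcd : ∀ z, ‖z - y‖ ≤ 1 → ContDiffAt ℝ 2 w z := by
    intro z hz
    apply hw.c2
    have := coord_sub_le z y (Fin.last n)
    linarith
  have hwc : ContinuousOn w (closedBall y 1) := by
    intro z hz
    exact (hcd z (by simpa [dist_eq_norm] using hz)).continuousAt.continuousWithinAt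
  have hf0 : f 0 = 0 := by simp [hf, Real.zero_rpow hγ0.ne']
  -- the comparison
  have hcomp : ∀ x, ‖x - y‖ < 1 → w x - w y ≤ f (‖x - y‖ ^ 2) := by
    intro x1 hx1
    by_contra hcon
    push Not at hcon
    obtain ⟨M, hM⟩ := (isCompact_closedBall y 1).bddAbove_image hwc
    have hM' : ∀ z, ‖z - y‖ ≤ 1 → w z ≤ M := fun z hz =>
      hM ⟨z, by simpa [dist_eq_norm] using hz, rfl⟩
    have hMy : 0 ≤ M - w y := by linarith [hM' y (by simp)]
    set ε := min (1 - ‖x1 - y‖ ^ 2) (A / (A + (M - w y))) with hε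
    have hε0 : 0 < ε := by
      refine lt_min ?_ (by positivity)
      nlinarith [norm_nonneg (x1 - y)]
    have hε1 : ε ≤ 1 - ‖x1 - y‖ ^ 2 := min_le_left _ _
    have hε2 : ε ≤ A / (A + (M - w y)) := min_le_right _ _
    have hε3 : ε ≤ 1 := by nlinarith [sq_nonneg ‖x1 - y‖]
    set τ := √(1 - ε) with hτ
    have hτ2 : τ ^ 2 = 1 - ε := Real.sq_sqrt (by linarith)
    have hτ0 : 0 ≤ τ := Real.sqrt_nonneg _
    have hτ1 : τ < 1 := by nlinarith
    have hx1τ : ‖x1 - y‖ ≤ τ := Real.le_sqrt_of_sq_le (by linarith)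
    set g : EuclideanSpace ℝ (Fin (n + 1)) → ℝ := fun z => w z - f (‖z - y‖ ^ 2) with hg
    have hgc : ContinuousOn g (closedBall y τ) := by
      refine (hwc.mono (closedBall_subset_closedBall hτ1.le)).sub ?_
      have hn : ContinuousOn (fun z => ‖z - y‖ ^ 2) (closedBall y τ) := by fun_prop
      refine ContinuousOn.mul continuousOn_const (((hn.rpow_const ?_).add ?_).sub continuousOn_const)
      · intro z hz; right; exact hγ0.le
      · refine (continuousOn_const.sub hn).inv₀ ?_
        intro z hz
        have : ‖z - y‖ ≤ τ := by simpa [dist_eq_norm] using hz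
        have : ‖z - y‖ ^ 2 < 1 := by nlinarith [norm_nonneg (z - y)]
        show 1 - ‖z - y‖ ^ 2 ≠ 0
        linarith
    obtain ⟨x2, hx2, hmax⟩ := (isCompact_closedBall y τ).exists_isMaxOn
      ⟨x1, by simpa [dist_eq_norm] using hx1τ⟩ hgc
    have hx2' : ‖x2 - y‖ ≤ τ := by simpa [dist_eq_norm] using hx2
    have hgx2 : w y < g x2 := by
      have : g x1 ≤ g x2 := hmax (by simpa [dist_eq_norm] using hx1τ)
      simp only [hg] at this ⊢
      linarith
    have hne : 0 < ‖x2 - y‖ := by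
      rw [norm_pos_iff, sub_ne_zero]
      rintro rfl
      simp [hg, hf0] at hgx2
    have hlt : ‖x2 - y‖ < τ := by
      refine lt_of_le_of_ne hx2' fun heq => ?_
      have h1 : M - w y ≤ f (‖x2 - y‖ ^ 2) := by
        rw [heq, hτ2]
        simp only [hf]
        have h3 : (0:ℝ) ≤ (1 - ε) ^ γ := Real.rpow_nonneg (by linarith) _
        have h4 : (A + (M - w y)) / A ≤ ε⁻¹ := by
          rw [le_inv_comm₀ (by positivity) hε0, inv_div]; exact hε2
        have h5 : A + (M - w y) ≤ A * ε⁻¹ := by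
          rw [div_le_iff₀ hA] at h4; linarith
        have h6 : 1 - (1 - ε) = ε := by ring
        rw [h6]
        nlinarith
      have h2 := hM' x2 (by linarith)
      simp only [hg] at hgx2
      linarith
    have hloc : IsLocalMax g x2 := hmax.isLocalMax (closedBall_mem_nhds_of_mem (by simpa [dist_eq_norm] using hlt))
    set ρ := ‖x2 - y‖ ^ 2 with hρ
    have hρ0 : 0 < ρ := by positivity
    have hρ1 : ρ < 1 := by nlinarith
    have hs := fun ξ => has2_radial x2 y ξ (f := f) (f' := f')
      (by filter_upwards [Ioo_mem_nhds hρ0 hρ1] with s hs using hd1 s hs.1 hs.2)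
      (hd2 ρ hρ0 hρ1)
    obtain ⟨hgrad, hlap⟩ := max_test (hcd x2 (by linarith)) hloc hs
    rw [sum_radial, ← hρ, hw.eq x2 (by have := coord_sub_le x2 y (Fin.last n); linarith)] at hlap
    have hf'0 : 0 < f' ρ := by
      simp only [hf']
      have : 0 < 1 - ρ := by linarith
      positivity
    have hgr : 2 * f' ρ * √ρ ≤ ‖fderiv ℝ w x2‖ := by
      have h1 := (fderiv ℝ w x2).le_opNorm (x2 - y)
      rw [hgrad, real_inner_self_eq_norm_sq, ← hρ, Real.norm_eq_abs, abs_of_pos (by positivity)] at h1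
      have h2 : √ρ = ‖x2 - y‖ := by rw [hρ, Real.sqrt_sq hne.le]
      rw [h2]
      have h3 : 2 * f' ρ * ‖x2 - y‖ * ‖x2 - y‖ ≤ ‖fderiv ℝ w x2‖ * ‖x2 - y‖ := by
        calc _ = f' ρ * (2 * ρ) := by rw [hρ]; ring
          _ ≤ _ := h1
      exact le_of_mul_le_mul_right h3 hne
    have h4 := hbar ρ hρ0 hρ1
    have h5 : (2 * f' ρ * √ρ) ^ p ≤ ‖fderiv ℝ w x2‖ ^ p :=
      Real.rpow_le_rpow (by positivity) hgr (by linarith)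
    simp only [hf'] at h5 hlap
    linarith
  refine (hcomp x (by linarith)).trans ?_
  set r := ‖x - y‖ with hr
  have hr0 : 0 ≤ r := norm_nonneg _
  have e1 : r ^ ((p - 2) / (p - 1)) = (r ^ 2) ^ γ := by
    rw [← Real.rpow_natCast, ← Real.rpow_mul hr0]; congr 1; rw [hγ]; push_cast
    have : p - 1 ≠ 0 := by linarith
    field_simp
  rw [e1]
  have hq : r ^ 2 ≤ 1 / 4 := by nlinarith
  have e2 : r ^ 2 ≤ (r ^ 2) ^ γ := by
    calc r ^ 2 = (r ^ 2) ^ (1:ℝ) := (Real.rpow_one _).symm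
      _ ≤ _ := Real.rpow_le_rpow_of_exponent_ge' (by positivity) (by linarith) hγ0.le (by linarith)
  have e3 : (1 - r ^ 2)⁻¹ ≤ 1 + 2 * r ^ 2 := by
    rw [inv_le_iff_one_le_mul₀ (by linarith)]
    nlinarith [sq_nonneg r]
  simp only [hf]
  nlinarith


section doubling
variable {N : ℕ}

local notation "E" => EuclideanSpace ℝ (Fin N)

lemma doubling {w : E → ℝ} {x y x0 : E} (hx : ContDiffAt ℝ 2 w x) (hy : ContDiffAt ℝ 2 w y)
    (hxy : x ≠ y) {K : ℝ} {ψ ψ' : ℝ → ℝ} {ψ'' : ℝ}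
    (h1 : ∀ᶠ s in 𝓝 ‖x - y‖, HasDerivAt ψ (ψ' s) s) (h2 : HasDerivAt ψ' ψ'' ‖x - y‖)
    (hmax : IsLocalMax (fun q : E × E => w q.1 - w q.2 - ψ ‖q.1 - q.2‖ - K * ‖q.1 - x0‖ ^ 2) (x, y)) :
    (∀ ξ, fderiv ℝ w x ξ - fderiv ℝ w y ξ = 2 * K * inner ℝ (x - x0) ξ) ∧
      lap w x - lap w y ≤ 4 * ψ'' + 2 * K * N := by
  have hcurve : ∀ ξ η : E, IsLocalMax (fun t : ℝ => w (x + t • ξ) - w (y + t • η)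
      - ψ ‖(x + t • ξ) - (y + t • η)‖ - K * ‖x + t • ξ - x0‖ ^ 2) 0 := by
    intro ξ η
    have hc : Tendsto (fun t : ℝ => (x + t • ξ, y + t • η)) (𝓝 0) (𝓝 (x, y)) :=
      (tendsto_line x ξ).prodMk_nhds (tendsto_line y η)
    have := hc.eventually hmax
    simpa [IsLocalMax, IsMaxFilter] using this
  have hK : ∀ ξ : E, Has2 (fun t : ℝ => K * ‖x + t • ξ - x0‖ ^ 2)
      (K * (2 * inner ℝ (x - x0) ξ)) (K * (2 * ‖ξ‖ ^ 2)) := by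
    intro ξ
    refine ((has2_normsq (x - x0) ξ).const_mul K).congr (Eventually.of_forall fun t => ?_)
    simp only
    congr 3
    abel
  constructor
  · intro ξ
    have hψ : Has2 (fun t : ℝ => ψ ‖(x + t • ξ) - (y + t • ξ)‖) 0 0 := by
      have := has2_quad 0 0 (ψ ‖x - y‖)
      simp only [mul_zero] at this
      refine this.congr (Eventually.of_forall fun t => ?_)
      simp
    have := ((((has2_line hx ξ).sub (has2_line hy ξ)).sub hψ).sub (hK ξ)).localMax (hcurve ξ ξ)
    linarith [this.1]
  · set r := ‖x - y‖ with hr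
    have hr0 : 0 < r := by rw [hr, norm_pos_iff, sub_ne_zero]; exact hxy
    set e : E := r⁻¹ • (x - y) with he
    have hen : ‖e‖ = 1 := by
      rw [he, norm_smul, ← hr, norm_inv, Real.norm_of_nonneg hr0.le, inv_mul_cancel₀ hr0.ne']
    have hde : x - y = r • e := by rw [he, smul_smul, mul_inv_cancel₀ hr0.ne', one_smul]
    set R : E ≃ₗᵢ[ℝ] E := (ℝ ∙ e)ᗮ.reflection with hR
    have hRξ : ∀ ξ, R ξ = ξ - (2 * inner ℝ e ξ) • e := by
      intro ξ
      rw [hR, Submodule.reflection_orthogonal_apply, Submodule.reflection_apply,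
        Submodule.starProjection_unit_singleton ℝ hen, mul_smul, two_smul, two_smul]
      abel
    have key : ∀ ξ : E, fderiv ℝ (fderiv ℝ w) x ξ ξ - fderiv ℝ (fderiv ℝ w) y (R ξ) (R ξ)
        ≤ 4 * ψ'' * inner ℝ e ξ ^ 2 + 2 * K * ‖ξ‖ ^ 2 := by
      intro ξ
      set c := 2 * inner ℝ e ξ with hc
      have hψ : Has2 (fun t : ℝ => ψ ‖(x + t • ξ) - (y + t • R ξ)‖) (ψ' r * c)
          (ψ'' * c ^ 2 + ψ' r * 0) := by
        have h0 : Has2 (fun t => r + c * t + 0 * t ^ 2) c 0 := by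
          simpa using has2_quad c 0 r
        refine (h0.comp (F := ψ) (r := r) (by simp) h1 h2).congr ?_
        have hpos : ∀ᶠ t : ℝ in 𝓝 0, 0 < r + c * t := by
          have : Continuous fun t : ℝ => r + c * t := by fun_prop
          have := this.tendsto 0
          exact this.eventually_const_lt (by simpa using hr0)
        filter_upwards [hpos] with t ht
        have : (x + t • ξ) - (y + t • R ξ) = (r + c * t) • e := by
          rw [hRξ, add_smul, ← hde, smul_sub, smul_smul, mul_comm c t]
          abel
        rw [this, norm_smul, hen, Real.norm_of_nonneg ht.le]
        simp
      have := ((((has2_line hx ξ).sub (has2_line hy (R ξ))).sub hψ).sub (hK ξ)).localMax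
        (hcurve ξ (R ξ))
      have h3 := this.2
      rw [hc] at h3
      nlinarith [h3]
    set b := EuclideanSpace.basisFun (Fin N) ℝ with hb
    rw [lap_eq hx b, lap_eq hy (b.map R), ← Finset.sum_sub_distrib]
    calc _ ≤ ∑ i, (4 * ψ'' * inner ℝ e (b i) ^ 2 + 2 * K * ‖b i‖ ^ 2) := by
          refine Finset.sum_le_sum fun i _ => ?_
          simpa using key (b i)
      _ = _ := by
          rw [Finset.sum_add_distrib, ← Finset.mul_sum, sum_inner_sq, hen]
          simp; ring

end doubling

lemma phi_lip {α s r : ℝ} (hα0 : 0 < α) (hα1 : α ≤ 1) (hs : 0 ≤ s) (hr : 0 ≤ r) (hr1 : r ≤ 1) :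
    (2 * s - s ^ (1 + α)) - (2 * r - r ^ (1 + α)) ≤ 2 * |s - r| := by
  rcases le_total r s with h | h
  · rw [abs_of_nonneg (by linarith)]
    have := Real.rpow_le_rpow hr h (by linarith : 0 ≤ 1 + α)
    linarith
  · have h1 := bernoulli_pow (p := 1 + α) (by linarith) hr hs
    have h2 : r ^ (1 + α - 1) ≤ 1 := Real.rpow_le_one hr hr1 (by linarith)
    have h3 : 0 ≤ r ^ (1 + α - 1) := Real.rpow_nonneg hr _
    have h4 := abs_nonneg (s - r)
    have h5 : (1 + α) * r ^ (1 + α - 1) ≤ 2 := by nlinarith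
    nlinarith

lemma exists_L {p C K : ℝ} (hp : 2 < p) (hC : 0 < C) (hK : 0 < K) (N : ℕ) {β α : ℝ}
    (hβ0 : 0 < β) (hα : 0 < α) :
    ∃ L : ℝ, 1 ≤ L ∧ C / L ≤ (1 / 8) ^ β ∧
      p * K * (2 * L) ^ (p - 1) + 2 * K * N < 4 * L * α * (L / C) ^ (p - 3 / 2) := by
  have h1 : Tendsto (fun L : ℝ => C / L) atTop (𝓝 0) := tendsto_const_nhds.div_atTop tendsto_id
  have h2 : Tendsto (fun L : ℝ => L ^ (1 / 2 : ℝ) * (4 * α * (C⁻¹) ^ (p - 3 / 2))) atTop atTop :=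
    (tendsto_rpow_atTop (by norm_num)).atTop_mul_const (by positivity)
  obtain ⟨L, hL1, hL2, hL3⟩ := ((eventually_ge_atTop 1).and
    ((h1.eventually_lt_const (by positivity : (0:ℝ) < (1 / 8) ^ β)).and
      (h2.eventually_gt_atTop (p * K * 2 ^ (p - 1) + 2 * K * N)))).exists
  refine ⟨L, hL1, hL2.le, ?_⟩
  have hL0 : 0 < L := by linarith
  have e1 : 1 ≤ L ^ (p - 1) := Real.one_le_rpow hL1 (by linarith)
  calc p * K * (2 * L) ^ (p - 1) + 2 * K * N
      ≤ p * K * (2 * L) ^ (p - 1) + 2 * K * N * L ^ (p - 1) := by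
        have : (0:ℝ) ≤ 2 * K * N := by positivity
        nlinarith
    _ = (p * K * 2 ^ (p - 1) + 2 * K * N) * L ^ (p - 1) := by
        rw [Real.mul_rpow (by norm_num) hL0.le]; ring
    _ < L ^ (1 / 2 : ℝ) * (4 * α * (C⁻¹) ^ (p - 3 / 2)) * L ^ (p - 1) := by gcongr
    _ = _ := by
        rw [div_eq_mul_inv L C, Real.mul_rpow hL0.le (by positivity)]
        have : L ^ (1 / 2 : ℝ) * L ^ (p - 1) = L * L ^ (p - 3 / 2) := by
          rw [← Real.rpow_add hL0, ← Real.rpow_one_add' hL0.le (by linarith)]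
          congr 1; ring
        calc _ = 4 * α * (C⁻¹) ^ (p - 3 / 2) * (L ^ (1 / 2 : ℝ) * L ^ (p - 1)) := by ring
          _ = _ := by rw [this]; ring

set_option maxHeartbeats 1600000 in
lemma grad_unit {p : ℝ} (hp : 2 < p) (n : ℕ) :
    ∃ G : ℝ, 0 < G ∧ ∀ w : EuclideanSpace ℝ (Fin (n + 1)) → ℝ, IsSol p w →
      ∀ x, 2 ≤ x (Fin.last n) → ‖fderiv ℝ w x‖ ≤ G := by
  obtain ⟨C, hC, hHol⟩ := holder hp n
  obtain ⟨β, hβ⟩ : ∃ β : ℝ, β = 1 / (p - 1) := ⟨_, rfl⟩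
  obtain ⟨α, hα⟩ : ∃ α : ℝ, α = β / 2 := ⟨_, rfl⟩
  have hβ0 : 0 < β := by rw [hβ]; apply div_pos <;> linarith
  have hβ1 : β < 1 := by rw [hβ, div_lt_one (by linarith)]; linarith
  have hσ : (p - 2) / (p - 1) = 1 - β := by
    rw [hβ]; have : p - 1 ≠ 0 := by linarith
    field_simp; ring
  rw [hσ] at hHol
  have hα0 : 0 < α := by rw [hα]; positivity
  have hα1 : α < 1 := by rw [hα]; linarith
  obtain ⟨K, hK⟩ : ∃ K : ℝ, K = 64 * C := ⟨_, rfl⟩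
  have hK0 : 0 < K := by rw [hK]; positivity
  obtain ⟨L, hL1, hL2, hL3⟩ := exists_L hp hC hK0 (n + 1) hβ0 hα0
  have hL0 : 0 < L := by linarith
  refine ⟨2 * L, by positivity, fun w hw x0 hx0 => ?_⟩
  set φ : ℝ → ℝ := fun r => L * (2 * r - r ^ (1 + α)) with hφ
  set φ' : ℝ → ℝ := fun r => L * (2 - (1 + α) * r ^ α) with hφ'
  have hd1 : ∀ r, 0 < r → HasDerivAt φ (φ' r) r := by
    intro r hr
    have := (((hasDerivAt_id r).const_mul 2).sub
      (Real.hasDerivAt_rpow_const (x := r) (p := 1 + α) (Or.inl hr.ne'))).const_mul L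
    refine this.congr_deriv ?_
    simp [hφ']
  have hd2 : ∀ r, 0 < r → HasDerivAt φ' (L * (-((1 + α) * (α * r ^ (α - 1))))) r := by
    intro r hr
    have := (((Real.hasDerivAt_rpow_const (x := r) (p := α) (Or.inl hr.ne')).const_mul
      (1 + α)).const_sub 2).const_mul L
    exact this
  have hφge : ∀ r, 0 ≤ r → r ≤ 1 → L * r ≤ φ r := by
    intro r h0 h1
    have : r ^ (1 + α) ≤ r := by
      calc r ^ (1 + α) ≤ r ^ (1:ℝ) :=
            Real.rpow_le_rpow_of_exponent_ge' h0 h1 (by norm_num) (by linarith)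
        _ = r := Real.rpow_one r
    simp only [hφ]
    nlinarith
  have hφle : ∀ r, 0 ≤ r → φ r ≤ 2 * L * r := by
    intro r h0
    have : 0 ≤ r ^ (1 + α) := Real.rpow_nonneg h0 _
    simp only [hφ]
    nlinarith
  have hφ0 : φ 0 = 0 := by simp [hφ, Real.zero_rpow (by linarith : 1 + α ≠ 0)]
  have hco : ∀ z, ‖z - x0‖ ≤ 1 / 4 → 1 < z (Fin.last n) := by
    intro z hz
    have := coord_sub_le z x0 (Fin.last n)
    linarith
  have hcd : ∀ z, ‖z - x0‖ ≤ 1 / 4 → ContDiffAt ℝ 2 w z := fun z hz =>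
    hw.c2 z (by linarith [hco z hz])
  have hwc : ContinuousOn w (closedBall x0 (1 / 4)) := by
    intro z hz
    exact (hcd z (by simpa [dist_eq_norm] using hz)).continuousAt.continuousWithinAt
  have hφc : Continuous φ := by
    refine continuous_const.mul ((continuous_const.mul continuous_id).sub ?_)
    exact continuous_id.rpow_const fun _ => Or.inr (by linarith)
  suffices hmain : ∀ y, ‖y - x0‖ ≤ 1 / 4 → w x0 - w y ≤ φ ‖x0 - y‖ by
    refine grad_bound (by positivity) ((hcd x0 (by simp)).differentiableAt (by norm_num)) ?_
    filter_upwards [closedBall_mem_nhds x0 (by norm_num : (0:ℝ) < 1 / 4)] with z hz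
    refine (hmain z (by simpa [dist_eq_norm] using hz)).trans ?_
    rw [norm_sub_rev z x0]
    exact hφle _ (norm_nonneg _)
  intro y1 hy1
  by_contra hcon
  push Not at hcon
  set Φ : EuclideanSpace ℝ (Fin (n + 1)) × EuclideanSpace ℝ (Fin (n + 1)) → ℝ :=
    fun q => w q.1 - w q.2 - φ ‖q.1 - q.2‖ - K * ‖q.1 - x0‖ ^ 2 with hΦ
  set S := closedBall x0 (1 / 4) ×ˢ closedBall x0 (1 / 4) with hS
  have hΦc : ContinuousOn Φ S := by
    refine (((hwc.comp continuousOn_fst fun q hq => hq.1).sub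
      (hwc.comp continuousOn_snd fun q hq => hq.2)).sub ?_).sub ?_
    · exact (hφc.comp (by fun_prop)).continuousOn
    · fun_prop
  have hmem : (x0, y1) ∈ S := ⟨by simp, by simpa [dist_eq_norm] using hy1⟩
  obtain ⟨⟨x, y⟩, hqS, hmax⟩ := ((isCompact_closedBall x0 (1 / 4)).prod
    (isCompact_closedBall x0 (1 / 4))).exists_isMaxOn ⟨_, hmem⟩ hΦc
  have hx : ‖x - x0‖ ≤ 1 / 4 := by simpa [dist_eq_norm] using hqS.1
  have hy : ‖y - x0‖ ≤ 1 / 4 := by simpa [dist_eq_norm] using hqS.2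
  have hpos : 0 < w x - w y - φ ‖x - y‖ - K * ‖x - x0‖ ^ 2 := by
    have h1 : Φ (x0, y1) ≤ Φ (x, y) := hmax hmem
    simp only [hΦ, sub_self, norm_zero] at h1
    have : K * (0:ℝ) ^ 2 = 0 := by ring
    linarith
  have hKx : 0 ≤ K * ‖x - x0‖ ^ 2 := by positivity
  have hxy : x ≠ y := by
    rintro rfl
    simp only [sub_self, norm_zero, hφ0] at hpos
    linarith
  set r := ‖x - y‖ with hr
  have hr0 : 0 < r := by rw [hr, norm_pos_iff, sub_ne_zero]; exact hxy
  have hr2 : r ≤ 1 / 2 := by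
    have : x - y = (x - x0) - (y - x0) := by abel
    rw [hr, this]
    refine (norm_sub_le _ _).trans (by linarith)
  have hH := hHol w hw y x (hco y hy) hr2
  rw [← hr] at hH
  have hφr := hφge r hr0.le (by linarith)
  have hr1β : r ^ (1 - β) ≤ 1 := Real.rpow_le_one hr0.le (by linarith) (by linarith)
  have hx8 : ‖x - x0‖ < 1 / 8 := by
    have h1 : K * ‖x - x0‖ ^ 2 < C := by nlinarith
    rw [hK] at h1
    have h2 : ‖x - x0‖ ^ 2 < (1 / 8) ^ 2 := by nlinarith
    exact lt_of_pow_lt_pow_left₀ 2 (by norm_num) h2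
  have hrβ : r ^ β < C / L := by
    rw [lt_div_iff₀ hL0]
    have h1 : L * r < C * r ^ (1 - β) := by linarith
    have h2 : r = r ^ β * r ^ (1 - β) := by
      rw [← Real.rpow_add hr0]; simp
    have h3 : 0 < r ^ (1 - β) := by positivity
    have h4 : (r ^ β * L) * r ^ (1 - β) < C * r ^ (1 - β) := by
      calc _ = L * r := by nth_rw 3 [h2]; ring
        _ < _ := h1
    exact lt_of_mul_lt_mul_right h4 h3.le
  have hr8 : r < 1 / 8 := by
    have : r ^ β < (1 / 8) ^ β := lt_of_lt_of_le hrβ hL2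
    exact (Real.rpow_lt_rpow_iff hr0.le (by norm_num) hβ0).1 this
  have hy4 : ‖y - x0‖ < 1 / 4 := by
    have : y - x0 = (x - x0) - (x - y) := by abel
    rw [this]
    refine (norm_sub_le _ _).trans_lt (by linarith)
  have hSn : S ∈ 𝓝 (x, y) := prod_mem_nhds
    (closedBall_mem_nhds_of_mem (by simp [dist_eq_norm]; linarith))
    (closedBall_mem_nhds_of_mem (by simp [dist_eq_norm]; linarith))
  have hloc : IsLocalMax Φ (x, y) := hmax.isLocalMax hSn
  obtain ⟨hg, hl⟩ := doubling (hcd x hx) (hcd y hy) hxy (ψ := φ) (ψ' := φ') (K := K) (x0 := x0)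
    (by filter_upwards [lt_mem_nhds hr0] with s hs using hd1 s hs) (hd2 r hr0) hloc
  have hgy : ‖fderiv ℝ w y‖ ≤ 2 * L := by
    refine grad_bound (by positivity) ((hcd y hy).differentiableAt (by norm_num)) ?_
    filter_upwards [closedBall_mem_nhds_of_mem (x := y) (c := x0) (ε := 1 / 4)
      (by simp [dist_eq_norm]; linarith)] with z hz
    have h1 : Φ (x, z) ≤ Φ (x, y) := hmax ⟨hqS.1, hz⟩
    simp only [hΦ] at h1
    have h2 := phi_lip hα0 hα1.le (norm_nonneg (x - z)) hr0.le (by linarith)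
    have h3 : |‖x - z‖ - r| ≤ ‖z - y‖ := by
      refine (abs_norm_sub_norm_le _ _).trans (le_of_eq ?_)
      rw [norm_sub_rev z y]; congr 1; abel
    have h4 : φ ‖x - z‖ - φ r ≤ L * (2 * |‖x - z‖ - r|) := by
      simp only [hφ]; rw [← mul_sub]; gcongr
    have h5 : L * (2 * |‖x - z‖ - r|) ≤ 2 * L * ‖z - y‖ := by
      calc L * (2 * |‖x - z‖ - r|) ≤ L * (2 * ‖z - y‖) := by gcongr
        _ = _ := by ring
    linarith
  have hgx : ‖fderiv ℝ w y‖ - K ≤ ‖fderiv ℝ w x‖ := by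
    have h1 : ‖fderiv ℝ w x - fderiv ℝ w y‖ ≤ K := by
      refine ContinuousLinearMap.opNorm_le_bound _ hK0.le fun ξ => ?_
      rw [_root_.sub_apply, hg, Real.norm_eq_abs, abs_mul,
        abs_of_pos (by positivity)]
      have h2 := abs_real_inner_le_norm (x - x0) ξ
      have h3 : ‖x - x0‖ * ‖ξ‖ ≤ 1 / 2 * ‖ξ‖ := by gcongr; linarith
      calc 2 * K * |inner ℝ (x - x0) ξ| ≤ 2 * K * (1 / 2 * ‖ξ‖) := by
            gcongr; exact h2.trans h3
        _ = K * ‖ξ‖ := by ring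
    have h2 := norm_sub_norm_le (fderiv ℝ w y) (fderiv ℝ w x)
    rw [norm_sub_rev] at h2
    linarith
  have hb := bernoulli_pow (p := p) (by linarith) (norm_nonneg (fderiv ℝ w y))
    (norm_nonneg (fderiv ℝ w x))
  rw [hw.eq x (by linarith [hco x hx]), hw.eq y (by linarith [hco y hy])] at hl
  have hgp : ‖fderiv ℝ w y‖ ^ (p - 1) ≤ (2 * L) ^ (p - 1) :=
    Real.rpow_le_rpow (norm_nonneg _) hgy (by linarith)
  have hb2 : -(p * K * (2 * L) ^ (p - 1)) ≤
      p * ‖fderiv ℝ w y‖ ^ (p - 1) * (‖fderiv ℝ w x‖ - ‖fderiv ℝ w y‖) := by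
    have h0 : 0 ≤ p * ‖fderiv ℝ w y‖ ^ (p - 1) := by positivity
    calc -(p * K * (2 * L) ^ (p - 1)) ≤ -(p * K * ‖fderiv ℝ w y‖ ^ (p - 1)) := by gcongr
      _ = p * ‖fderiv ℝ w y‖ ^ (p - 1) * (-K) := by ring
      _ ≤ _ := by gcongr; linarith
  have hrα : (L / C) ^ (p - 3 / 2) ≤ r ^ (α - 1) := by
    have h1 : r ^ (α - 1) = (r ^ β) ^ (-(p - 3 / 2)) := by
      rw [← Real.rpow_mul hr0.le]; congr 1
      rw [hα, hβ]; have : p - 1 ≠ 0 := by linarith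
      field_simp; ring
    rw [h1]
    calc (L / C) ^ (p - 3 / 2) = (C / L) ^ (-(p - 3 / 2)) := by
          rw [Real.rpow_neg (by positivity), ← Real.inv_rpow (by positivity), inv_div]
      _ ≤ _ := Real.rpow_le_rpow_of_nonpos (by positivity) hrβ.le (by linarith)
  have hfin : 4 * L * α * (L / C) ^ (p - 3 / 2) ≤ 4 * L * α * r ^ (α - 1) := by gcongr
  have hfin2 : 0 ≤ 4 * L * α * α * r ^ (α - 1) := by positivity
  push_cast at hl hL3
  have hfin3 : 4 * (L * (-((1 + α) * (α * r ^ (α - 1))))) =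
      -(4 * L * α * r ^ (α - 1)) - 4 * L * α * α * r ^ (α - 1) := by ring
  linarith


lemma IsSol.scale {n : ℕ} {p : ℝ} (hp : 2 < p) {w : EuclideanSpace ℝ (Fin (n + 1)) → ℝ}
    (hw : IsSol p w) {R : ℝ} (hR : 0 < R) :
    (∀ x, fderiv ℝ (fun z => R ^ (1 / (p - 1) - 1) * w (R • z)) x
        = R ^ (1 / (p - 1)) • fderiv ℝ w (R • x)) ∧
    IsSol p (fun z => R ^ (1 / (p - 1) - 1) * w (R • z)) := by
  obtain ⟨β, hβ⟩ : ∃ β : ℝ, β = 1 / (p - 1) := ⟨_, rfl⟩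
  rw [← hβ]
  have hc : R ^ (β - 1) * R = R ^ β := by
    rw [← Real.rpow_add_one hR.ne']; simp
  have hfd : ∀ x, fderiv ℝ (fun z => R ^ (β - 1) * w (R • z)) x
        = R ^ β • fderiv ℝ w (R • x) := by
    intro x
    have h1 : (fun z => R ^ (β - 1) * w (R • z)) = R ^ (β - 1) • (fun z => w (R • z)) := by
      ext z; simp
    rw [h1, fderiv_const_smul_field, Pi.smul_apply, fderiv_comp_smul, smul_smul, hc]
  have hpos : ∀ x : EuclideanSpace ℝ (Fin (n + 1)), 0 < x (Fin.last n) →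
      0 < (R • x) (Fin.last n) := by
    intro x hx; simp; positivity
  refine ⟨hfd, ?_, ?_⟩
  · intro x hx
    have h1 := hw.c2 (R • x) (hpos x hx)
    exact contDiffAt_const.mul (h1.comp x (by fun_prop))
  · intro x hx
    have hlap : lap (fun z => R ^ (β - 1) * w (R • z)) x = R ^ β * R * lap w (R • x) := by
      unfold lap
      rw [Finset.mul_sum]
      refine Finset.sum_congr rfl fun i _ => ?_
      have h1 : (fun y => fderiv ℝ (fun z => R ^ (β - 1) * w (R • z)) y
          (EuclideanSpace.single i (1 : ℝ))) = R ^ β • (fun y =>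
            (fun q => fderiv ℝ w q (EuclideanSpace.single i (1 : ℝ))) (R • y)) := by
        ext y; rw [hfd]; simp
      rw [h1, fderiv_const_smul_field, Pi.smul_apply, fderiv_comp_smul (f := fun q => fderiv ℝ w q (EuclideanSpace.single i (1 : ℝ)))]
      simp; ring
    rw [hlap, hfd, hw.eq _ (hpos x hx), norm_smul, Real.mul_rpow (norm_nonneg _) (norm_nonneg _),
      Real.norm_of_nonneg (by positivity), ← Real.rpow_mul hR.le, ← Real.rpow_add_one hR.ne']
    congr 2
    rw [hβ]; have : p - 1 ≠ 0 := by linarith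
    field_simp; ring

lemma grad_all {p : ℝ} (hp : 2 < p) (n : ℕ) :
    ∃ G : ℝ, 0 < G ∧ ∀ w : EuclideanSpace ℝ (Fin (n + 1)) → ℝ, IsSol p w →
      ∀ x, 0 < x (Fin.last n) → ‖fderiv ℝ w x‖ ≤ G * x (Fin.last n) ^ (-(1 / (p - 1))) := by
  obtain ⟨G, hG, hgr⟩ := grad_unit hp n
  refine ⟨G * 2 ^ (1 / (p - 1)), by positivity, fun w hw x hx => ?_⟩
  set R := x (Fin.last n) / 2 with hR
  have hR0 : 0 < R := by positivity
  obtain ⟨h1, h2⟩ := hw.scale hp hR0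
  have h3 := hgr _ h2 (R⁻¹ • x) (by simp [hR]; field_simp; norm_num)
  rw [h1, smul_smul, mul_inv_cancel₀ hR0.ne', one_smul, norm_smul,
    Real.norm_of_nonneg (by positivity)] at h3
  have h4 : R ^ (1 / (p - 1)) = x (Fin.last n) ^ (1 / (p - 1)) / 2 ^ (1 / (p - 1)) := by
    rw [hR, Real.div_rpow hx.le (by norm_num)]
  rw [h4] at h3
  rw [Real.rpow_neg hx.le, ← div_eq_mul_inv, le_div_iff₀ (by positivity)]
  rw [div_mul_eq_mul_div, div_le_iff₀ (by positivity)] at h3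
  linarith

lemma int_bound {q q' : ℝ → ℝ} {G β : ℝ} (hβ1 : β < 1) (hq : ContinuousOn q (Ici 0))
    (hd : ∀ t, 0 < t → HasDerivAt q (q' t) t) (hb : ∀ t, 0 < t → q' t ≤ G * t ^ (-β))
    (h0 : q 0 = 0) {t : ℝ} (ht : 0 ≤ t) : q t ≤ G / (1 - β) * t ^ (1 - β) := by
  have hder : ∀ t, 0 < t → HasDerivAt (fun t => q t - G / (1 - β) * t ^ (1 - β))
      (q' t - G * t ^ (-β)) t := by
    intro t ht
    have := (hd t ht).sub ((Real.hasDerivAt_rpow_const (x := t) (p := 1 - β)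
      (Or.inl ht.ne')).const_mul (G / (1 - β)))
    refine this.congr_deriv ?_
    have h1 : 1 - β - 1 = -β := by ring
    have h2 : 1 - β ≠ 0 := by linarith
    rw [h1]; field_simp
  have hanti : AntitoneOn (fun t => q t - G / (1 - β) * t ^ (1 - β)) (Ici 0) := by
    refine antitoneOn_of_deriv_nonpos (convex_Ici 0) ?_ ?_ ?_
    · refine hq.sub (continuousOn_const.mul ?_)
      exact continuousOn_id.rpow_const fun _ _ => Or.inr (by linarith)
    · rw [interior_Ici]
      intro t ht
      exact (hder t ht).differentiableAt.differentiableWithinAt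
    · rw [interior_Ici]
      intro t ht
      rw [(hder t ht).deriv]
      linarith [hb t ht]
  have := hanti (show (0:ℝ) ∈ Ici 0 by simp) (show t ∈ Ici 0 from ht) ht
  simp only [h0, Real.zero_rpow (by linarith : 1 - β ≠ 0)] at this
  linarith

lemma bdry_bound {n : ℕ} {p G : ℝ} (hp : 2 < p) {w : EuclideanSpace ℝ (Fin (n + 1)) → ℝ}
    (hw : IsSol p w) (hwc : ContinuousOn w {x | 0 ≤ x (Fin.last n)})
    (hw0 : ∀ x : EuclideanSpace ℝ (Fin (n + 1)), x (Fin.last n) = 0 → w x = 0)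
    (hG : ∀ x, 0 < x (Fin.last n) → ‖fderiv ℝ w x‖ ≤ G * x (Fin.last n) ^ (-(1 / (p - 1))))
    (x : EuclideanSpace ℝ (Fin (n + 1))) (hx : 0 ≤ x (Fin.last n)) :
    |w x| ≤ G / (1 - 1 / (p - 1)) * x (Fin.last n) ^ (1 - 1 / (p - 1)) := by
  have hβ1 : 1 / (p - 1) < 1 := by rw [div_lt_one (by linarith)]; linarith
  set e : EuclideanSpace ℝ (Fin (n + 1)) := EuclideanSpace.single (Fin.last n) 1 with he
  set c : ℝ → EuclideanSpace ℝ (Fin (n + 1)) := fun t => x + (t - x (Fin.last n)) • e with hc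
  have hcn : ∀ t, c t (Fin.last n) = t := by intro t; simp [hc, he]
  have hcd : ∀ t, HasDerivAt c e t := by
    intro t
    have := (((hasDerivAt_id t).sub_const (x (Fin.last n))).smul_const e).const_add x
    exact this.congr_deriv (by simp)
  have hcc : Continuous c := by simp only [hc]; fun_prop
  have hqc : ContinuousOn (fun t => w (c t)) (Ici 0) := by
    refine hwc.comp hcc.continuousOn fun t ht => ?_
    simpa [hcn] using ht
  have hqd : ∀ t, 0 < t → HasDerivAt (fun t => w (c t)) (fderiv ℝ w (c t) e) t := by
    intro t ht
    have h1 : DifferentiableAt ℝ w (c t) :=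
      (hw.c2 (c t) (by rw [hcn]; exact ht)).differentiableAt (by norm_num)
    exact h1.hasFDerivAt.comp_hasDerivAt t (hcd t)
  have hb : ∀ t, 0 < t → |fderiv ℝ w (c t) e| ≤ G * t ^ (-(1 / (p - 1))) := by
    intro t ht
    have h1 := (fderiv ℝ w (c t)).le_opNorm e
    have h2 : ‖e‖ = 1 := by simp [he]
    have h3 := hG (c t) (by rw [hcn]; exact ht)
    rw [hcn] at h3
    rw [h2, mul_one] at h1
    exact h1.trans h3
  have hc0 : w (c 0) = 0 := hw0 _ (hcn 0)
  have hcx : c (x (Fin.last n)) = x := by simp [hc]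
  have u1 := int_bound hβ1 hqc hqd (fun t ht => (le_abs_self _).trans (hb t ht)) hc0 hx
  have u2 := int_bound hβ1 hqc.neg (fun t ht => (hqd t ht).neg)
    (fun t ht => (neg_le_abs _).trans (hb t ht)) (by simp [hc0]) hx
  simp only [Pi.neg_apply, hcx] at u1 u2
  rw [abs_le]
  constructor <;> linarith

lemma max_test' {N : ℕ} {w s : EuclideanSpace ℝ (Fin N) → ℝ} {x h : EuclideanSpace ℝ (Fin N)}
    (h1 : ContDiffAt ℝ 2 w (x + h)) (h2 : ContDiffAt ℝ 2 w x)
    (hmax : IsLocalMax (fun z => w (z + h) - w z - s z) x) {a b : EuclideanSpace ℝ (Fin N) → ℝ}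
    (hs : ∀ ξ, Has2 (fun t => s (x + t • ξ)) (a ξ) (b ξ)) :
    (∀ ξ, fderiv ℝ w (x + h) ξ - fderiv ℝ w x ξ = a ξ) ∧
      lap w (x + h) - lap w x ≤ ∑ i, b (EuclideanSpace.basisFun (Fin N) ℝ i) := by
  have key : ∀ ξ, fderiv ℝ w (x + h) ξ - fderiv ℝ w x ξ - a ξ = 0 ∧
      fderiv ℝ (fderiv ℝ w) (x + h) ξ ξ - fderiv ℝ (fderiv ℝ w) x ξ ξ - b ξ ≤ 0 := by
    intro ξ
    refine (((has2_line h1 ξ).sub (has2_line h2 ξ)).sub (hs ξ)).localMax ?_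
    have := (tendsto_line x ξ).eventually hmax
    simpa [IsLocalMax, IsMaxFilter, add_right_comm] using this
  refine ⟨fun ξ => by linarith [(key ξ).1], ?_⟩
  rw [lap_eq h1 (EuclideanSpace.basisFun (Fin N) ℝ), lap_eq h2 (EuclideanSpace.basisFun (Fin N) ℝ),
    ← Finset.sum_sub_distrib]
  exact Finset.sum_le_sum fun i _ => by linarith [(key (EuclideanSpace.basisFun (Fin N) ℝ i)).2]


/-- the slowly growing function `√(1+|z|²)` as a radial function -/
lemma sqrt_data (ρ : ℝ) (hρ : 0 ≤ ρ) :
    ∃ k : ℝ, k ≤ 0 ∧ (∀ᶠ s in 𝓝 ρ, HasDerivAt (fun s => √(1 + s)) ((2 * √(1 + s))⁻¹) s) ∧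
      HasDerivAt (fun s => (2 * √(1 + s))⁻¹) k ρ := by
  have hd : ∀ s, -1 < s → HasDerivAt (fun s => √(1 + s)) ((2 * √(1 + s))⁻¹) s := by
    intro s hs
    have := ((hasDerivAt_id s).const_add 1).sqrt (by simp; linarith)
    exact this.congr_deriv (by simp)
  have h1 : 0 < √(1 + ρ) := Real.sqrt_pos.2 (by linarith)
  have h2 := ((hd ρ (by linarith)).const_mul 2).inv (by positivity)
  refine ⟨_, ?_, ?_, h2⟩
  · apply div_nonpos_of_nonpos_of_nonneg
    · simp
    · positivity
  · filter_upwards [lt_mem_nhds (show -1 < ρ by linarith)] with s hs using hd s hs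

set_option maxHeartbeats 1600000 in
lemma strip {n : ℕ} {p G₁ ε a b : ℝ} (hp : 2 < p) {w : EuclideanSpace ℝ (Fin (n + 1)) → ℝ}
    (hw : IsSol p w) {h : EuclideanSpace ℝ (Fin (n + 1))} (hh : h (Fin.last n) = 0)
    (ha : 0 < a) (hε : 0 < ε)
    (hG : ∀ x, a ≤ x (Fin.last n) → ‖fderiv ℝ w x‖ ≤ G₁)
    {M : ℝ} (hM : ∀ x, a ≤ x (Fin.last n) → w (x + h) - w x ≤ M)
    (hva : ∀ x, x (Fin.last n) = a → w (x + h) - w x ≤ ε)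
    (hvb : ∀ x, x (Fin.last n) = b → w (x + h) - w x ≤ ε)
    (x : EuclideanSpace ℝ (Fin (n + 1))) (hxa : a ≤ x (Fin.last n)) (hxb : x (Fin.last n) ≤ b) :
    w (x + h) - w x ≤ ε := by
  have hG0 : 0 ≤ G₁ := (norm_nonneg _).trans (hG x hxa)
  obtain ⟨B, hB⟩ : ∃ B : ℝ, B = p * G₁ ^ (p - 1) := ⟨_, rfl⟩
  have hB0 : 0 ≤ B := by rw [hB]; positivity
  obtain ⟨l, hl⟩ : ∃ l : ℝ, l = B + 1 := ⟨_, rfl⟩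
  have hl1 : 1 ≤ l := by linarith
  obtain ⟨D, hD⟩ : ∃ D : ℝ, D = (n + 1 : ℝ) + B + 1 := ⟨_, rfl⟩
  have hD0 : 0 < D := by rw [hD]; positivity
  have hadd : ∀ z : EuclideanSpace ℝ (Fin (n + 1)), (z + h) (Fin.last n) = z (Fin.last n) := by
    intro z; simp [hh]
  have main : ∀ η : ℝ, 0 < η → w (x + h) - w x - ε ≤
      η * (Real.exp (l * b) - Real.exp (l * x (Fin.last n))) + η / D * √(1 + ‖x‖ ^ 2) := by
    intro η hη
    by_contra hcon
    push Not at hcon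
    set δ := η / D with hδ
    have hδ0 : 0 < δ := by positivity
    set s : EuclideanSpace ℝ (Fin (n + 1)) → ℝ := fun z =>
      η * (Real.exp (l * b) - Real.exp (l * z (Fin.last n))) + δ * √(1 + ‖z - 0‖ ^ 2) with hs
    have hs1 : ∀ z : EuclideanSpace ℝ (Fin (n + 1)), z (Fin.last n) ≤ b → δ * ‖z‖ ≤ s z := by
      intro z hz
      have h1 : Real.exp (l * z (Fin.last n)) ≤ Real.exp (l * b) := by gcongr
      have h2 : ‖z‖ ≤ √(1 + ‖z - 0‖ ^ 2) := Real.le_sqrt_of_sq_le (by simp)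
      have h3 : δ * ‖z‖ ≤ δ * √(1 + ‖z - 0‖ ^ 2) := by gcongr
      have h4 : 0 ≤ η * (Real.exp (l * b) - Real.exp (l * z (Fin.last n))) :=
        mul_nonneg hη.le (by linarith)
      simp only [hs]
      linarith
    have hs0 : ∀ z : EuclideanSpace ℝ (Fin (n + 1)), z (Fin.last n) ≤ b → 0 ≤ s z := fun z hz =>
      le_trans (by positivity) (hs1 z hz)
    have hsx : ε < w (x + h) - w x - s x := by simp only [hs, sub_zero]; linarith
    set ρ := max ‖x‖ (M / δ) with hρ
    set S : Set (EuclideanSpace ℝ (Fin (n + 1))) :=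
      closedBall 0 ρ ∩ {z | a ≤ z (Fin.last n) ∧ z (Fin.last n) ≤ b} with hS
    have hcoord : Continuous fun z : EuclideanSpace ℝ (Fin (n + 1)) => z (Fin.last n) := by fun_prop
    have hScomp : IsCompact S := by
      refine (isCompact_closedBall _ _).inter_right ?_
      exact (isClosed_le continuous_const hcoord).inter (isClosed_le hcoord continuous_const)
    have hcd : ∀ z : EuclideanSpace ℝ (Fin (n + 1)), a ≤ z (Fin.last n) → ContDiffAt ℝ 2 w z :=
      fun z hz => hw.c2 z (by linarith)
    have hcont : ContinuousOn (fun z => w (z + h) - w z - s z) S := by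
      refine ContinuousOn.sub (ContinuousOn.sub ?_ ?_) ?_
      · intro z hz
        have h1 : ContinuousAt w (z + h) := (hcd (z + h) (by rw [hadd]; exact hz.2.1)).continuousAt
        exact (ContinuousAt.comp (f := fun z => z + h) (g := w) h1 (by fun_prop)).continuousWithinAt
      · intro z hz
        exact (hcd z hz.2.1).continuousAt.continuousWithinAt
      · apply Continuous.continuousOn
        simp only [hs]
        fun_prop
    have hxS : x ∈ S := ⟨by simp [hρ], hxa, hxb⟩
    obtain ⟨z, hzS, hmax⟩ := hScomp.exists_isMaxOn ⟨x, hxS⟩ hcont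
    have hz : ε < w (z + h) - w z - s z := lt_of_lt_of_le hsx (hmax hxS)
    obtain ⟨hz1, hz2, hz3⟩ := hzS
    have hz1 : ‖z‖ ≤ ρ := by simpa using hz1
    have hsz := hs0 z hz3
    have hza : a < z (Fin.last n) := by
      refine lt_of_le_of_ne hz2 fun heq => ?_
      linarith [hva z heq.symm]
    have hzb : z (Fin.last n) < b := by
      refine lt_of_le_of_ne hz3 fun heq => ?_
      linarith [hvb z heq]
    have hzρ : ‖z‖ < ρ := by
      refine lt_of_le_of_ne hz1 fun heq => ?_
      have h1 : M / δ ≤ ‖z‖ := by rw [heq]; exact le_max_right _ _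
      rw [div_le_iff₀ hδ0] at h1
      have h2 := hs1 z hz3
      have h3 := hM z hz2
      linarith
    have hSn : S ∈ 𝓝 z := by
      refine inter_mem (closedBall_mem_nhds_of_mem (by simpa using hzρ)) ?_
      filter_upwards [hcoord.continuousAt.eventually (lt_mem_nhds hza),
        hcoord.continuousAt.eventually (gt_mem_nhds hzb)] with q h1 h2 using ⟨h1.le, h2.le⟩
    have hloc : IsLocalMax (fun z => w (z + h) - w z - s z) z := hmax.isLocalMax hSn
    obtain ⟨k, hk0, hk1, hk2⟩ := sqrt_data (‖z - 0‖ ^ 2) (by positivity)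
    set X := Real.exp (l * z (Fin.last n)) with hX
    set f1 := (2 * √(1 + ‖z - 0‖ ^ 2))⁻¹ with hf1
    have hexp : ∀ ξ : EuclideanSpace ℝ (Fin (n + 1)),
        Has2 (fun t => Real.exp (l * (z + t • ξ) (Fin.last n)))
        (l * X * ξ (Fin.last n)) (l ^ 2 * X * ξ (Fin.last n) ^ 2) := by
      intro ξ
      have h0 := has2_quad (ξ (Fin.last n)) 0 (z (Fin.last n))
      have hdE : ∀ τ, HasDerivAt (fun τ => Real.exp (l * τ)) (l * Real.exp (l * τ)) τ := by
        intro τ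
        have := ((hasDerivAt_id τ).const_mul l).exp
        exact this.congr_deriv (by simp; ring)
      have h1 := h0.comp (F := fun τ => Real.exp (l * τ)) (r := z (Fin.last n)) (by simp)
        (Eventually.of_forall hdE) ((hdE _).const_mul l)
      have h2 := h1.congr (g := fun t => Real.exp (l * (z + t • ξ) (Fin.last n)))
        (Eventually.of_forall fun t => by simp; left; ring)
      convert h2 using 1
      simp only [← hX]; ring
    have hsd : ∀ ξ : EuclideanSpace ℝ (Fin (n + 1)), Has2 (fun t => s (z + t • ξ))
        (η * (0 - l * X * ξ (Fin.last n)) + δ * (f1 * (2 * inner ℝ (z - 0) ξ)))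
        (η * (2 * 0 - l ^ 2 * X * ξ (Fin.last n) ^ 2) +
          δ * (k * (2 * inner ℝ (z - 0) ξ) ^ 2 + f1 * (2 * ‖ξ‖ ^ 2))) := by
      intro ξ
      have hconst : Has2 (fun _ => Real.exp (l * b)) 0 (2 * 0) := by
        simpa using has2_quad 0 0 (Real.exp (l * b))
      exact ((hconst.sub (hexp ξ)).const_mul η).add ((has2_radial z 0 ξ hk1 hk2).const_mul δ)
    obtain ⟨hgrad, hlap⟩ := max_test' (hcd (z + h) (by rw [hadd]; exact hz2)) (hcd z hz2) hloc hsd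
    have hsq1 : 1 ≤ √(1 + ‖z - 0‖ ^ 2) := Real.one_le_sqrt.2 (by simp)
    have hf1le : 2 * f1 ≤ 1 := by
      rw [hf1, mul_inv, ← mul_assoc]
      norm_num
      exact inv_le_one_of_one_le₀ (by simpa using hsq1)
    have hf10 : 0 ≤ f1 := by rw [hf1]; positivity
    have hf1z : 2 * f1 * ‖z‖ ≤ 1 := by
      have h2 : ‖z‖ ≤ √(1 + ‖z - 0‖ ^ 2) := Real.le_sqrt_of_sq_le (by simp)
      calc 2 * f1 * ‖z‖ ≤ 2 * f1 * √(1 + ‖z - 0‖ ^ 2) := by gcongr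
        _ = 1 := by rw [hf1]; field_simp
    have hX1 : 1 ≤ X := Real.one_le_exp (mul_nonneg (by linarith) (by linarith))
    have hsum : ∑ i, (η * (2 * 0 - l ^ 2 * X *
          (EuclideanSpace.basisFun (Fin (n + 1)) ℝ i) (Fin.last n) ^ 2) +
        δ * (k * (2 * inner ℝ (z - 0) (EuclideanSpace.basisFun (Fin (n + 1)) ℝ i)) ^ 2
          + f1 * (2 * ‖EuclideanSpace.basisFun (Fin (n + 1)) ℝ i‖ ^ 2)))
        = -(η * l ^ 2 * X) + δ * (4 * ‖z - 0‖ ^ 2 * k + 2 * ((n + 1 : ℕ) : ℝ) * f1) := by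
      rw [Finset.sum_add_distrib, ← Finset.mul_sum _ _ δ, sum_radial]
      congr 1
      have h1 : ∑ i, (EuclideanSpace.basisFun (Fin (n + 1)) ℝ i) (Fin.last n) ^ 2 = 1 := by
        simp [Pi.single_apply]
      rw [← Finset.mul_sum, Finset.sum_sub_distrib, ← Finset.mul_sum _ _ (l ^ 2 * X), h1]
      simp; ring
    rw [hsum] at hlap
    have hlap2 : δ * (4 * ‖z - 0‖ ^ 2 * k + 2 * ((n + 1 : ℕ) : ℝ) * f1) ≤ δ * (n + 1) := by
      refine mul_le_mul_of_nonneg_left ?_ hδ0.le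
      have h1 : 4 * ‖z - 0‖ ^ 2 * k ≤ 0 := mul_nonpos_of_nonneg_of_nonpos (by positivity) hk0
      push_cast
      have h2 : (0:ℝ) ≤ n + 1 := by positivity
      nlinarith
    have hgn : ‖fderiv ℝ w (z + h) - fderiv ℝ w z‖ ≤ η * l * X + δ := by
      refine ContinuousLinearMap.opNorm_le_bound _ (by positivity) fun ξ => ?_
      rw [_root_.sub_apply, hgrad, Real.norm_eq_abs, sub_zero]
      have h1 : |ξ (Fin.last n)| ≤ ‖ξ‖ := by
        simpa using PiLp.norm_apply_le ξ (Fin.last n)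
      have h2 := abs_real_inner_le_norm z ξ
      calc _ ≤ |η * (0 - l * X * ξ (Fin.last n))| + |δ * (f1 * (2 * inner ℝ z ξ))| := abs_add_le _ _
        _ = η * l * X * |ξ (Fin.last n)| + δ * (2 * f1) * |inner ℝ z ξ| := by
            rw [zero_sub, mul_neg, abs_neg, abs_mul, abs_mul, abs_mul, abs_mul δ, abs_mul f1,
              abs_mul 2, abs_of_pos hη, abs_of_pos hδ0, abs_of_nonneg hf10,
              abs_of_pos (by linarith : 0 < l), abs_of_pos (by linarith : 0 < X)]
            norm_num; ring
        _ ≤ η * l * X * ‖ξ‖ + δ * (2 * f1) * (‖z‖ * ‖ξ‖) := by gcongr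
        _ = η * l * X * ‖ξ‖ + δ * (2 * f1 * ‖z‖) * ‖ξ‖ := by ring
        _ ≤ η * l * X * ‖ξ‖ + δ * 1 * ‖ξ‖ := by gcongr
        _ = _ := by ring
    have hbern := bernoulli_pow (p := p) (by linarith) (norm_nonneg (fderiv ℝ w z))
      (norm_nonneg (fderiv ℝ w (z + h)))
    rw [hw.eq z (by linarith), hw.eq (z + h) (by rw [hadd]; linarith)] at hlap
    have hdiff : -(η * l * X + δ) ≤ ‖fderiv ℝ w (z + h)‖ - ‖fderiv ℝ w z‖ := by
      have h1 := norm_sub_norm_le (fderiv ℝ w z) (fderiv ℝ w (z + h))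
      rw [norm_sub_rev] at h1
      linarith
    have hpB : p * ‖fderiv ℝ w z‖ ^ (p - 1) ≤ B := by
      rw [hB]
      have := Real.rpow_le_rpow (norm_nonneg _) (hG z hz2) (by linarith : 0 ≤ p - 1)
      gcongr
    have hpB0 : 0 ≤ p * ‖fderiv ℝ w z‖ ^ (p - 1) := by positivity
    have hlow : -(B * (η * l * X + δ)) ≤
        p * ‖fderiv ℝ w z‖ ^ (p - 1) * (‖fderiv ℝ w (z + h)‖ - ‖fderiv ℝ w z‖) := by
      have h0 : 0 ≤ η * l * X + δ := by positivity
      calc -(B * (η * l * X + δ)) ≤ -(p * ‖fderiv ℝ w z‖ ^ (p - 1) * (η * l * X + δ)) := by gcongr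
        _ = p * ‖fderiv ℝ w z‖ ^ (p - 1) * (-(η * l * X + δ)) := by ring
        _ ≤ _ := by gcongr
    have hfin : η * l * X * (l - B) ≤ δ * ((n + 1) + B) := by nlinarith
    have hlB : l - B = 1 := by rw [hl]; ring
    rw [hlB, mul_one] at hfin
    have h1 : η ≤ η * l * X := by
      have : 1 ≤ l * X := one_le_mul_of_one_le_of_one_le hl1 hX1
      nlinarith
    have h2 : δ * D = η := by rw [hδ]; field_simp
    rw [hD] at h2
    nlinarith
  by_contra hcon
  push Not at hcon
  set c := (Real.exp (l * b) - Real.exp (l * x (Fin.last n))) + 1 / D * √(1 + ‖x‖ ^ 2) with hc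
  have hc0 : 0 ≤ c := by
    have h1 : Real.exp (l * x (Fin.last n)) ≤ Real.exp (l * b) := by gcongr
    have : 0 ≤ 1 / D * √(1 + ‖x‖ ^ 2) := by positivity
    linarith
  have hv : 0 < w (x + h) - w x - ε := by linarith
  have h1 := main ((w (x + h) - w x - ε) / (c + 1)) (by positivity)
  have h2 : (w (x + h) - w x - ε) / (c + 1) * (Real.exp (l * b) - Real.exp (l * x (Fin.last n)))
      + (w (x + h) - w x - ε) / (c + 1) / D * √(1 + ‖x‖ ^ 2)
      = (w (x + h) - w x - ε) / (c + 1) * c := by rw [hc]; ring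
  rw [h2, div_mul_eq_mul_div, le_div_iff₀ (by positivity)] at h1
  nlinarith

lemma diff_nonpos {n : ℕ} {p : ℝ} (hp : 2 < p) {w : EuclideanSpace ℝ (Fin (n + 1)) → ℝ}
    (hw : IsSol p w) (hwc : ContinuousOn w {x | 0 ≤ x (Fin.last n)})
    (hw0 : ∀ x : EuclideanSpace ℝ (Fin (n + 1)), x (Fin.last n) = 0 → w x = 0)
    {h : EuclideanSpace ℝ (Fin (n + 1))} (hh : h (Fin.last n) = 0)
    (x : EuclideanSpace ℝ (Fin (n + 1))) (hx : 0 < x (Fin.last n)) :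
    w (x + h) - w x ≤ 0 := by
  obtain ⟨G, hG0, hGall⟩ := grad_all hp n
  have hG := hGall w hw
  have hbd := bdry_bound hp hw hwc hw0 hG
  obtain ⟨β, hβ⟩ : ∃ β : ℝ, β = 1 / (p - 1) := ⟨_, rfl⟩
  rw [← hβ] at hG hbd
  have hβ0 : 0 < β := by rw [hβ]; apply div_pos <;> linarith
  have hβ1 : β < 1 := by rw [hβ, div_lt_one (by linarith)]; linarith
  have hadd : ∀ z : EuclideanSpace ℝ (Fin (n + 1)), (z + h) (Fin.last n) = z (Fin.last n) := by
    intro z; simp [hh]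
  have hGa : ∀ a : ℝ, 0 < a → ∀ z : EuclideanSpace ℝ (Fin (n + 1)), a ≤ z (Fin.last n) →
      ‖fderiv ℝ w z‖ ≤ G * a ^ (-β) := by
    intro a ha z hz
    refine (hG z (by linarith)).trans ?_
    have h9 : z (Fin.last n) ^ (-β) ≤ a ^ (-β) :=
      Real.rpow_le_rpow_of_nonpos ha hz (by linarith)
    exact mul_le_mul_of_nonneg_left h9 hG0.le
  have hLip : ∀ a : ℝ, 0 < a → ∀ z : EuclideanSpace ℝ (Fin (n + 1)), a ≤ z (Fin.last n) →
      w (z + h) - w z ≤ G * a ^ (-β) * ‖h‖ := by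
    intro a ha z hz
    have hconv : Convex ℝ {z : EuclideanSpace ℝ (Fin (n + 1)) | a ≤ z (Fin.last n)} :=
      convex_halfSpace_ge (f := fun z : EuclideanSpace ℝ (Fin (n + 1)) => z (Fin.last n))
        ⟨fun _ _ => by simp, fun _ _ => by simp⟩ a
    have := hconv.norm_image_sub_le_of_norm_fderiv_le (𝕜 := ℝ) (f := w) (x := z) (y := z + h)
      (fun q hq => (hw.c2 q (lt_of_lt_of_le ha hq)).differentiableAt (by norm_num))
      (fun q hq => hGa a ha q hq) hz
      (show a ≤ (z + h) (Fin.last n) by rw [hadd]; exact hz)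
    rw [add_sub_cancel_left] at this
    exact (le_abs_self _).trans this
  refine le_of_forall_pos_le_add fun ε hε => ?_
  rw [zero_add]
  -- near the boundary
  have hlim1 : Tendsto (fun t : ℝ => 2 * (G / (1 - β)) * t ^ (1 - β)) (𝓝[>] 0) (𝓝 0) := by
    have hc : ContinuousAt (fun t : ℝ => 2 * (G / (1 - β)) * t ^ (1 - β)) 0 :=
      continuousAt_const.mul (Real.continuousAt_rpow_const _ _ (Or.inr (by linarith)))
    have := hc.tendsto
    simp only [Real.zero_rpow (by linarith : 1 - β ≠ 0), mul_zero] at this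
    exact this.mono_left nhdsWithin_le_nhds
  obtain ⟨a, ha1, ha⟩ := ((hlim1.eventually_lt_const hε).and self_mem_nhdsWithin).exists
  have ha : 0 < a := ha
  have hnear : ∀ z : EuclideanSpace ℝ (Fin (n + 1)), 0 < z (Fin.last n) → z (Fin.last n) ≤ a →
      w (z + h) - w z ≤ ε := by
    intro z h0 hz
    have h1 := hbd z h0.le
    have h2 := hbd (z + h) (by rw [hadd]; exact h0.le)
    rw [hadd] at h2
    have h3 : z (Fin.last n) ^ (1 - β) ≤ a ^ (1 - β) :=
      Real.rpow_le_rpow h0.le hz (by linarith)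
    have h4 : 0 < G / (1 - β) := div_pos hG0 (by linarith)
    have h5 : G / (1 - β) * z (Fin.last n) ^ (1 - β) ≤ G / (1 - β) * a ^ (1 - β) := by gcongr
    have h6 := (abs_le.1 h1).1
    have h7 := (abs_le.1 h2).2
    linarith
  have hlim2 : Tendsto (fun t : ℝ => G * t ^ (-β) * ‖h‖) atTop (𝓝 0) := by
    simpa using ((tendsto_rpow_neg_atTop hβ0).const_mul G).mul_const ‖h‖
  obtain ⟨b, hb1, hb⟩ := ((hlim2.eventually_lt_const hε).and (eventually_gt_atTop 0)).exists
  have hfar : ∀ z : EuclideanSpace ℝ (Fin (n + 1)), b ≤ z (Fin.last n) →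
      w (z + h) - w z ≤ ε := fun z hz => (hLip b hb z hz).trans hb1.le
  rcases le_total (x (Fin.last n)) a with h1 | h1
  · exact hnear x hx h1
  rcases le_total b (x (Fin.last n)) with h2 | h2
  · exact hfar x h2
  exact strip hp hw hh ha hε (hGa a ha) (hLip a ha)
    (fun z hz => hnear z (by linarith) hz.le) (fun z hz => hfar z hz.ge) x h1 h2

theorem stmt0 {n : ℕ} (p : ℝ) (hp : 2 < p)
    (u : EuclideanSpace ℝ (Fin (n + 1)) → ℝ)
    (hu_cont : ContinuousOn u {x | 0 ≤ x (Fin.last n)})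
    (hu_C2 : ContDiffOn ℝ 2 u {x | 0 < x (Fin.last n)})
    (hPDE : ∀ x : EuclideanSpace ℝ (Fin (n + 1)), 0 < x (Fin.last n) →
      -lap u x = ‖gradient u x‖ ^ p)
    (hbd : ∀ x : EuclideanSpace ℝ (Fin (n + 1)), x (Fin.last n) = 0 → u x = 0) :
    ∀ x y : EuclideanSpace ℝ (Fin (n + 1)), 0 ≤ x (Fin.last n) → 0 ≤ y (Fin.last n) →
      x (Fin.last n) = y (Fin.last n) → u x = u y := by
  have hopen : IsOpen {x : EuclideanSpace ℝ (Fin (n + 1)) | 0 < x (Fin.last n)} :=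
    isOpen_lt continuous_const (by fun_prop)
  have hfd : ∀ x, fderiv ℝ (fun z => -u z) x = -fderiv ℝ u x := fun x => fderiv_fun_neg
  have hw : IsSol p (fun z => -u z) := by
    constructor
    · intro x hx
      exact (hu_C2.contDiffAt (hopen.mem_nhds hx)).neg
    · intro x hx
      have h1 : lap (fun z => -u z) x = -lap u x := by
        unfold lap
        rw [← Finset.sum_neg_distrib]
        refine Finset.sum_congr rfl fun i _ => ?_
        simp only [hfd, _root_.neg_apply]
        rw [fderiv_fun_neg]; simp
      rw [h1, hPDE x hx, hfd, norm_neg]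
      simp [gradient]
  have hle : ∀ x y : EuclideanSpace ℝ (Fin (n + 1)), 0 < x (Fin.last n) →
      x (Fin.last n) = y (Fin.last n) → u x ≤ u y := by
    intro x y hx hxy
    have := diff_nonpos hp hw hu_cont.neg (fun z hz => by simp [hbd z hz]) (h := y - x)
      (by simp [hxy]) x hx
    simp only [add_sub_cancel] at this
    linarith
  intro x y hx hy hxy
  rcases hx.eq_or_lt with h0 | h0
  · rw [hbd x h0.symm, hbd y (by rw [← hxy, ← h0])]
  · exact le_antisymm (hle x y h0 hxy) (hle y x (by rw [← hxy]; exact h0) hxy.symm)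
end
end

section
/- Let u : ℝⁿ → ℝ be continuous on the closed half-space {x ∈ ℝⁿ : xₙ ≥ 0} and twice continuously differentiable on the open half-space ℝⁿ₊, satisfying −Δu(x) = |∇u(x)|^p for every x ∈ ℝⁿ₊ and u(x̃, 0) = 0 for every x̃ ∈ ℝ^{n−1}. Then either u ≡ 0 on the closed half-space, or there exists α ≥ 0 such that u(x) = c_p ((α + xₙ)^{1−β} − α^{1−β}) for all x with xₙ ≥ 0. -/
open Set Metric Filter RealInnerProductSpace

noncomputable section

set_option linter.unusedVariables false

open Topology

/-- second derivative in direction `a` -/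
def D2 {n : ℕ} (u : EuclideanSpace ℝ (Fin n) → ℝ) (x a : EuclideanSpace ℝ (Fin n)) : ℝ :=
  fderiv ℝ (fderiv ℝ u) x a a

lemma isOpen_H (n : ℕ) : IsOpen {x : EuclideanSpace ℝ (Fin (n+1)) | 0 < x (Fin.last n)} :=
  isOpen_lt continuous_const (by fun_prop)

lemma isClosed_H (n : ℕ) : IsClosed {x : EuclideanSpace ℝ (Fin (n+1)) | 0 ≤ x (Fin.last n)} :=
  isClosed_le continuous_const (by fun_prop)

/-- one-dimensional second order condition at a local max -/
lemma second_order {g g1 : ℝ → ℝ} {c : ℝ} (hmax : IsLocalMax g 0)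
    (h1 : ∀ᶠ t in 𝓝 (0:ℝ), HasDerivAt g (g1 t) t) (h2 : HasDerivAt g1 c 0) :
    g1 0 = 0 ∧ c ≤ 0 := by
  have h0 : g1 0 = 0 := hmax.hasDerivAt_eq_zero h1.self_of_nhds
  refine ⟨h0, ?_⟩
  by_contra hc
  push Not at hc
  have e1 : deriv g =ᶠ[𝓝 0] g1 := h1.mono fun t ht => ht.deriv
  have e2 : deriv (deriv g) 0 = c := by rw [e1.deriv_eq]; exact h2.deriv
  have hmin : IsLocalMin g 0 := isLocalMin_of_deriv_deriv_pos (by rw [e2]; exact hc)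
    (by rw [e1.eq_of_nhds, h0]) h1.self_of_nhds.continuousAt
  have hconst : g =ᶠ[𝓝 0] fun _ => g 0 := by
    filter_upwards [hmax, hmin] with t a b using le_antisymm a b
  have e3 : deriv g =ᶠ[𝓝 0] deriv (fun _ => g 0) := hconst.deriv
  have e4 : deriv (deriv g) 0 = 0 := by
    rw [e3.deriv_eq]; simp
  rw [e2] at e4
  linarith

section
variable {n : ℕ} {u : EuclideanSpace ℝ (Fin (n+1)) → ℝ}

lemma cd_at (hC : ContDiffOn ℝ 2 u {x | 0 < x (Fin.last n)}) {x : EuclideanSpace ℝ (Fin (n+1))}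
    (hx : 0 < x (Fin.last n)) : ContDiffAt ℝ 2 u x :=
  hC.contDiffAt ((isOpen_H n).mem_nhds hx)

lemma diff_fd (hC : ContDiffOn ℝ 2 u {x | 0 < x (Fin.last n)}) {x : EuclideanSpace ℝ (Fin (n+1))}
    (hx : 0 < x (Fin.last n)) : DifferentiableAt ℝ (fderiv ℝ u) x :=
  ((cd_at hC hx).fderiv_right (m := 1) (by norm_num)).differentiableAt (by norm_num)

lemma diff_u (hC : ContDiffOn ℝ 2 u {x | 0 < x (Fin.last n)}) {x : EuclideanSpace ℝ (Fin (n+1))}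
    (hx : 0 < x (Fin.last n)) : DifferentiableAt ℝ u x :=
  (cd_at hC hx).differentiableAt (by norm_num)

lemma lap_eq_basis (hC : ContDiffOn ℝ 2 u {x | 0 < x (Fin.last n)})
    {x : EuclideanSpace ℝ (Fin (n+1))} (hx : 0 < x (Fin.last n))
    (b : OrthonormalBasis (Fin (n+1)) ℝ (EuclideanSpace ℝ (Fin (n+1)))) :
    lap u x = ∑ i, D2 u x (b i) := by
  have h1 := congrFun (InnerProductSpace.laplacian_eq_iteratedFDeriv_orthonormalBasis u b) x
  have h2 := congrFun (InnerProductSpace.laplacian_eq_iteratedFDeriv_orthonormalBasis u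
    (EuclideanSpace.basisFun (Fin (n+1)) ℝ)) x
  rw [h1] at h2
  simp only [iteratedFDeriv_two_apply] at h2
  unfold lap D2
  simp only [Matrix.cons_val_zero, Matrix.cons_val_one] at h2
  rw [h2]
  refine Finset.sum_congr rfl fun i _ => ?_
  rw [fderiv_clm_apply (diff_fd hC hx) (by fun_prop)]
  simp

lemma grad_apply (x a : EuclideanSpace ℝ (Fin (n+1))) :
    fderiv ℝ u x a = inner ℝ (gradient u x) a := by
  simp [gradient]

lemma line_deriv (hC : ContDiffOn ℝ 2 u {x | 0 < x (Fin.last n)})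
    {x : EuclideanSpace ℝ (Fin (n+1))} (hx : 0 < x (Fin.last n)) (a : EuclideanSpace ℝ (Fin (n+1))) :
    (∀ᶠ t in 𝓝 (0:ℝ), HasDerivAt (fun t : ℝ => u (x + t • a)) (fderiv ℝ u (x + t • a) a) t) ∧
    HasDerivAt (fun t : ℝ => fderiv ℝ u (x + t • a) a) (D2 u x a) 0 := by
  have hl : ∀ t : ℝ, HasDerivAt (fun t : ℝ => x + t • a) a t := fun t => by
    simpa using ((hasDerivAt_id t).smul_const a).const_add x
  constructor
  · have hc : ContinuousAt (fun t : ℝ => x + t • a) 0 := (hl 0).continuousAt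
    have := hc.eventually (f := fun t : ℝ => x + t • a) ((isOpen_H n).mem_nhds (by simpa using hx) :
      {x : EuclideanSpace ℝ (Fin (n+1)) | 0 < x (Fin.last n)} ∈ 𝓝 (x + (0:ℝ) • a))
    filter_upwards [this] with t ht
    exact (diff_u hC ht).hasFDerivAt.comp_hasDerivAt t (hl t)
  · have h1 : HasFDerivAt (fderiv ℝ u) (fderiv ℝ (fderiv ℝ u) x) (x + (0:ℝ) • a) := by
      simpa using (diff_fd hC hx).hasFDerivAt
    have h2 := h1.comp_hasDerivAt (0:ℝ) (hl 0)
    exact h2.clm_apply (hasDerivAt_const (0:ℝ) a) |>.congr_deriv (by simp [D2])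

/-- the basic touching test -/
lemma touch (hC : ContDiffOn ℝ 2 u {x | 0 < x (Fin.last n)})
    {x y : EuclideanSpace ℝ (Fin (n+1))} (hx : 0 < x (Fin.last n)) (hy : 0 < y (Fin.last n))
    (a b : EuclideanSpace ℝ (Fin (n+1))) (c1 c2 : ℝ) {P P1 : ℝ → ℝ} {P2 : ℝ}
    (hP : ∀ᶠ t in 𝓝 (0:ℝ), HasDerivAt P (P1 t) t) (hP1 : HasDerivAt P1 P2 0)
    (hmax : ∀ᶠ t in 𝓝 (0:ℝ), c1 * u (x + t • a) + c2 * u (y + t • b) - P t ≤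
      c1 * u x + c2 * u y - P 0) :
    c1 * fderiv ℝ u x a + c2 * fderiv ℝ u y b = P1 0 ∧
    c1 * D2 u x a + c2 * D2 u y b ≤ P2 := by
  obtain ⟨hx1, hx2⟩ := line_deriv hC hx a
  obtain ⟨hy1, hy2⟩ := line_deriv hC hy b
  have := second_order (g := fun t : ℝ => c1 * u (x + t • a) + c2 * u (y + t • b) - P t)
    (g1 := fun t : ℝ => c1 * fderiv ℝ u (x + t • a) a + c2 * fderiv ℝ u (y + t • b) b - P1 t)
    (c := c1 * D2 u x a + c2 * D2 u y b - P2)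
    (by
      filter_upwards [hmax] with t ht
      simpa using ht)
    (by
      filter_upwards [hx1, hy1, hP] with t h1 h2 h3
      exact ((h1.const_mul c1).add (h2.const_mul c2)).sub h3)
    (((hx2.const_mul c1).add (hy2.const_mul c2)).sub hP1)
  simp at this
  exact ⟨by linarith [this.1], by linarith [this.2]⟩

lemma exists_basis (e : EuclideanSpace ℝ (Fin (n+1))) (he : ‖e‖ = 1) :
    ∃ b : OrthonormalBasis (Fin (n+1)) ℝ (EuclideanSpace ℝ (Fin (n+1))), b 0 = e ∧
      ∀ i, i ≠ 0 → inner ℝ e (b i) = 0 := by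
  have : Orthonormal ℝ (({0} : Set (Fin (n+1))).domRestrict (fun _ => e)) := by
    constructor
    · intro i; simpa using he
    · intro i j hij
      exact absurd (Subsingleton.elim i j) hij
  obtain ⟨b, hb⟩ := this.exists_orthonormalBasis_extension_of_card_eq (by simp)
  refine ⟨b, hb 0 rfl, fun i hi => ?_⟩
  rw [← hb 0 rfl]
  exact b.orthonormal.2 (Ne.symm hi)

end

lemma fB_deriv {D β R s : ℝ} (hβ : β < 1) (hs : 0 < s) (hR : s < R) :
    HasDerivAt (fun r : ℝ => D / (1-β) * (r ^ (1-β) + R ^ (1-β) - (R - r) ^ (1-β)))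
      (D * (s ^ (-β) + (R - s) ^ (-β))) s := by
  have h1 : HasDerivAt (fun r : ℝ => r ^ (1-β)) ((1-β) * s ^ (1 - β - 1)) s :=
    Real.hasDerivAt_rpow_const (Or.inl hs.ne')
  have h2 : HasDerivAt (fun r : ℝ => (R - r) ^ (1-β)) (-1 * (1-β) * (R - s) ^ (1 - β - 1)) s :=
    ((hasDerivAt_id s).const_sub R).rpow_const (Or.inl (by simp; linarith))
  have h3 := ((h1.add_const (R ^ (1-β))).sub h2).const_mul (D / (1-β))
  refine h3.congr_deriv ?_
  have : 1 - β ≠ 0 := by linarith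
  rw [show 1 - β - 1 = -β by ring]
  field_simp
  ring

lemma fB_deriv2 {D β R s : ℝ} (hs : 0 < s) (hR : s < R) :
    HasDerivAt (fun r : ℝ => D * (r ^ (-β) + (R - r) ^ (-β)))
      (D * β * ((R - s) ^ (-β-1) - s ^ (-β-1))) s := by
  have h1 : HasDerivAt (fun r : ℝ => r ^ (-β)) ((-β) * s ^ (-β - 1)) s :=
    Real.hasDerivAt_rpow_const (Or.inl hs.ne')
  have h2 : HasDerivAt (fun r : ℝ => (R - r) ^ (-β)) (-1 * (-β) * (R - s) ^ (-β - 1)) s :=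
    ((hasDerivAt_id s).const_sub R).rpow_const (Or.inl (by simp; linarith))
  refine ((h1.add h2).const_mul D).congr_deriv ?_
  ring

/-- the algebraic inequality behind the barrier -/
lemma fB_ineq {p β N R s : ℝ} (hp : 2 < p) (hβ : β = 1 / (p - 1)) (hN : 0 ≤ N)
    (hs : 0 < s) (hR : s < R) {D : ℝ} (hD : D = (β + N + 1) ^ β) :
    D * β * ((R - s) ^ (-β-1) - s ^ (-β-1)) + N * (D * (s ^ (-β) + (R - s) ^ (-β)) / s)
      < (D * (s ^ (-β) + (R - s) ^ (-β))) ^ p := by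
  have hp1 : 0 < p - 1 := by linarith
  have hβ0 : 0 < β := by rw [hβ]; positivity
  have hRs : 0 < R - s := by linarith
  set A := s ^ (-β) with hA
  set B := (R - s) ^ (-β) with hB
  have hA0 : 0 < A := Real.rpow_pos_of_pos hs _
  have hB0 : 0 < B := Real.rpow_pos_of_pos hRs _
  have hD0 : 0 < D := by rw [hD]; positivity
  have hβp : β * (p - 1) = 1 := by rw [hβ]; field_simp
  have e1 : 1 / s = A ^ (p - 1) := by
    rw [hA, ← Real.rpow_mul hs.le, show -β * (p-1) = -1 by linarith, Real.rpow_neg_one, one_div]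
  have e2 : (R - s) ^ (-β - 1) = B ^ p := by
    rw [hB, ← Real.rpow_mul hRs.le]; congr 1; linarith
  have e3 : D ^ p = D * (β + N + 1) := by
    have : D ^ (p - 1) = β + N + 1 := by
      rw [hD, ← Real.rpow_mul (by positivity), hβp, Real.rpow_one]
    rw [show p = 1 + (p - 1) by ring, Real.rpow_add hD0, Real.rpow_one, show 1 + (p-1) - 1 = p - 1 by ring] at *
    rw [this]
  have e4 : 0 < s ^ (-β - 1) := Real.rpow_pos_of_pos hs _
  have e5 : B ^ p ≤ (A + B) ^ p := Real.rpow_le_rpow hB0.le (by linarith) (by linarith)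
  have e6 : (A + B) * A ^ (p - 1) ≤ (A + B) ^ p := by
    have : (A + B) ^ p = (A + B) * (A + B) ^ (p - 1) := by
      conv_lhs => rw [show p = 1 + (p - 1) by ring]
      rw [Real.rpow_add (by positivity), Real.rpow_one]
    rw [this]
    exact mul_le_mul_of_nonneg_left (Real.rpow_le_rpow hA0.le (by linarith) (by linarith)) (by positivity)
  rw [Real.mul_rpow hD0.le (by positivity), e3, e2]
  have e7 : D * (A + B) / s = D * ((A + B) * A ^ (p - 1)) := by rw [← e1]; ring
  rw [e7]
  have e8 : 0 < (A + B) ^ p := by positivity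
  have e9 : D * β * (B ^ p - s ^ (-β - 1)) ≤ D * β * (A + B) ^ p :=
    mul_le_mul_of_nonneg_left (by linarith) (by positivity)
  have e10 : N * (D * ((A + B) * A ^ (p - 1))) ≤ N * (D * (A + B) ^ p) := by gcongr
  have e11 : 0 < D * (A + B) ^ p := by positivity
  nlinarith

lemma fB_mono {D β R s t : ℝ} (hD : 0 < D) (hβ : β < 1) (hs : 0 ≤ s) (hst : s ≤ t) (hR : t ≤ R) :
    D / (1-β) * (s ^ (1-β) + R ^ (1-β) - (R - s) ^ (1-β)) ≤
    D / (1-β) * (t ^ (1-β) + R ^ (1-β) - (R - t) ^ (1-β)) := by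
  have h1 : 0 < 1 - β := by linarith
  have h2 : s ^ (1-β) ≤ t ^ (1-β) := Real.rpow_le_rpow hs hst h1.le
  have h3 : (R - t) ^ (1-β) ≤ (R - s) ^ (1-β) := Real.rpow_le_rpow (by linarith) (by linarith) h1.le
  apply mul_le_mul_of_nonneg_left _ (by positivity)
  linarith

lemma rpow_sub_le {γ R r : ℝ} (h0 : 0 ≤ γ) (h1 : γ ≤ 1) (hr : 0 ≤ r) (hR : r ≤ R) :
    R ^ γ - (R - r) ^ γ ≤ r ^ γ := by
  have := Real.rpow_add_le_add_rpow hr (sub_nonneg.2 hR) h0 h1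
  rw [show r + (R - r) = R by ring] at this
  linarith

section
variable {n : ℕ} {u : EuclideanSpace ℝ (Fin (n+1)) → ℝ}

lemma barrier_interior {p β : ℝ} (hp : 2 < p) (hβ : β = 1 / (p - 1))
    (hC : ContDiffOn ℝ 2 u {x | 0 < x (Fin.last n)})
    (hPDE : ∀ x : EuclideanSpace ℝ (Fin (n + 1)), 0 < x (Fin.last n) →
      -lap u x = ‖gradient u x‖ ^ p)
    {x y : EuclideanSpace ℝ (Fin (n+1))} {R D : ℝ} (hD : D = (β + n + 1) ^ β)
    (hx : 0 < x (Fin.last n)) (h0 : 0 < ‖x - y‖) (hR : ‖x - y‖ < R)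
    (hmax : ∀ᶠ z in 𝓝 x, 
      -u z - D / (1-β) * (‖z - y‖ ^ (1-β) + R ^ (1-β) - (R - ‖z - y‖) ^ (1-β)) ≤
      -u x - D / (1-β) * (‖x - y‖ ^ (1-β) + R ^ (1-β) - (R - ‖x - y‖) ^ (1-β))) : False := by
  have hp1 : 0 < p - 1 := by linarith
  have hβ0 : 0 < β := by rw [hβ]; positivity
  have hβ1 : β < 1 := by rw [hβ, div_lt_one hp1]; linarith
  have hD0 : 0 < D := by rw [hD]; positivity
  set r := ‖x - y‖ with hr
  set e := (1 / r) • (x - y) with he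
  have hne : ‖e‖ = 1 := by
    rw [he, norm_smul, ← hr, Real.norm_eq_abs, abs_of_pos (by positivity)]; field_simp
  have hxy : x - y = r • e := by rw [he, smul_smul]; field_simp; simp
  obtain ⟨b, hb0, hb⟩ := exists_basis e hne
  have hcont : ∀ a : EuclideanSpace ℝ (Fin (n+1)), Tendsto (fun t : ℝ => x + t • a) (𝓝 0) (𝓝 x) := by
    intro a
    have : Continuous (fun t : ℝ => x + t • a) := by fun_prop
    simpa using this.tendsto 0
  -- direction e
  have T1 := touch hC hx hx e 0 (-1) 0 
    (P := fun t => D / (1-β) * ((r + t) ^ (1-β) + R ^ (1-β) - (R - (r + t)) ^ (1-β)))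
    (P1 := fun t => D * ((r + t) ^ (-β) + (R - (r + t)) ^ (-β)))
    (P2 := D * β * ((R - r) ^ (-β-1) - r ^ (-β-1)))
    (by
      have : ∀ᶠ t in 𝓝 (0:ℝ), r + t ∈ Ioo 0 R := by
        have hc : Continuous (fun t : ℝ => r + t) := by fun_prop
        exact (isOpen_Ioo.preimage hc).mem_nhds (by simpa using ⟨h0, hR⟩)
      filter_upwards [this] with t ht
      have := (fB_deriv (D := D) hβ1 ht.1 ht.2).comp_const_add r t
      exact this)
    (by
      have := (fB_deriv2 (D := D) (β := β) (s := r + 0) (R := R) (by simpa using h0) (by simpa using hR)).comp_const_add r 0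
      simpa using this)
    (by
      have h2 : ∀ᶠ t in 𝓝 (0:ℝ), -r < t := lt_mem_nhds (by linarith)
      filter_upwards [(hcont e).eventually hmax, h2] with t ht ht2
      have : ‖x + t • e - y‖ = r + t := by
        rw [show x + t • e - y = (r + t) • e by rw [add_smul, ← hxy]; abel, norm_smul, hne]
        simp; linarith
      rw [this] at ht
      simp only [add_zero, smul_zero, zero_mul]
      linarith)
  -- other directions
  have T2 : ∀ i, i ≠ 0 → -D2 u x (b i) ≤ D * (r ^ (-β) + (R - r) ^ (-β)) / r := by
    intro i hi
    have hq : ∀ t : ℝ, HasDerivAt (fun t : ℝ => r + t^2 / (2 * r)) (t / r) t := by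
      intro t
      have := (((hasDerivAt_id t).pow 2).div_const (2 * r)).const_add r
      refine this.congr_deriv ?_
      simp; field_simp
    have hin : ∀ᶠ t in 𝓝 (0:ℝ), r + t^2 / (2 * r) ∈ Ioo 0 R := by
      have hc : Continuous (fun t : ℝ => r + t^2 / (2 * r)) := by fun_prop
      exact (isOpen_Ioo.preimage hc).mem_nhds (by simpa using ⟨h0, hR⟩)
    have := touch hC hx hx (b i) 0 (-1) 0 
      (P := fun t => D / (1-β) * ((r + t^2 / (2 * r)) ^ (1-β) + R ^ (1-β) - (R - (r + t^2 / (2 * r))) ^ (1-β)))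
      (P1 := fun t => D * ((r + t^2 / (2 * r)) ^ (-β) + (R - (r + t^2 / (2 * r))) ^ (-β)) * (t / r))
      (P2 := D * (r ^ (-β) + (R - r) ^ (-β)) / r)
      (by
        filter_upwards [hin] with t ht
        have := HasDerivAt.comp (h := fun t : ℝ => r + t^2 / (2 * r)) t (fB_deriv (D := D) hβ1 ht.1 ht.2) (hq t)
        exact this)
      (by
        have h1 := (fB_deriv2 (D := D) (β := β) (s := r + 0^2 / (2 * r)) (R := R) (by simpa using h0) (by simpa using hR)).comp 0 (hq 0)
        have h2 : HasDerivAt (fun t : ℝ => t / r) (1 / r) 0 := (hasDerivAt_id (0:ℝ)).div_const r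
        refine (h1.mul h2).congr_deriv ?_
        simp
        ring)
      (by
        filter_upwards [(hcont (b i)).eventually hmax, hin] with t ht ht2
        have hn : ‖x + t • b i - y‖ ≤ r + t^2 / (2 * r) := by
          apply le_of_sq_le_sq _ ht2.1.le
          rw [show x + t • b i - y = r • e + t • b i by rw [← hxy]; abel, norm_add_sq_real]
          simp only [norm_smul, hne, b.orthonormal.1 i, inner_smul_left, inner_smul_right, hb i hi]
          have : (r + t^2 / (2 * r))^2 = r^2 + t^2 + (t^2 / (2 * r))^2 := by field_simp; ring
          rw [this]
          simp
          positivity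
        have hm := fB_mono (D := D) (R := R) hD0 hβ1 (norm_nonneg _) hn ht2.2.le
        simp only [add_zero, smul_zero, zero_mul]
        norm_num
        norm_num at hm ht
        linarith)
    linarith [this.2]
  have hlap := lap_eq_basis hC hx b
  rw [Fin.sum_univ_succ, hb0] at hlap
  have hsum : ∑ i : Fin n, -D2 u x (b i.succ) ≤ ∑ i : Fin n, D * (r ^ (-β) + (R - r) ^ (-β)) / r :=
    Finset.sum_le_sum fun i _ => T2 _ (Fin.succ_ne_zero i)
  rw [Finset.sum_neg_distrib] at hsum
  simp only [Finset.sum_const, Finset.card_univ, Fintype.card_fin, nsmul_eq_mul] at hsum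
  have hin := fB_ineq hp hβ (N := n) (by positivity) h0 hR hD
  have hg : D * (r ^ (-β) + (R - r) ^ (-β)) ≤ ‖gradient u x‖ := by
    have h1 := T1.1
    simp only [add_zero, zero_mul] at h1
    rw [← h1, grad_apply, neg_one_mul]
    have := abs_real_inner_le_norm (gradient u x) e
    rw [hne, mul_one] at this
    exact (neg_le_abs _).trans this
  have hr1 := Real.rpow_pos_of_pos h0 (-β)
  have hr2 := Real.rpow_pos_of_pos (sub_pos.2 hR) (-β)
  have hg2 := Real.rpow_le_rpow (by positivity) hg (show 0 ≤ p by linarith)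
  rw [← hPDE x hx] at hg2
  have := T1.2
  linarith

lemma barrier {p β : ℝ} (hp : 2 < p) (hβ : β = 1 / (p - 1))
    (hu : ContinuousOn u {x | 0 ≤ x (Fin.last n)})
    (hC : ContDiffOn ℝ 2 u {x | 0 < x (Fin.last n)})
    (hPDE : ∀ x : EuclideanSpace ℝ (Fin (n + 1)), 0 < x (Fin.last n) →
      -lap u x = ‖gradient u x‖ ^ p)
    {y : EuclideanSpace ℝ (Fin (n+1))} {R D : ℝ} (hD : D = (β + n + 1) ^ β)
    (hR : 0 < R) (hy : 0 ≤ y (Fin.last n))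
    (hb : ∀ x : EuclideanSpace ℝ (Fin (n+1)), ‖x - y‖ ≤ R → x (Fin.last n) = 0 → u y ≤ u x)
    (x : EuclideanSpace ℝ (Fin (n+1))) (hx : 0 ≤ x (Fin.last n)) (hxR : ‖x - y‖ ≤ R) :
    u y - u x ≤ 2 * D / (1 - β) * ‖x - y‖ ^ (1 - β) := by
  have hp1 : 0 < p - 1 := by linarith
  have hβ0 : 0 < β := by rw [hβ]; positivity
  have hβ1 : β < 1 := by rw [hβ, div_lt_one hp1]; linarith
  have hD0 : 0 < D := by rw [hD]; positivity
  have hγ : 0 < 1 - β := by linarith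
  set f : ℝ → ℝ := fun r => D / (1-β) * (r ^ (1-β) + R ^ (1-β) - (R - r) ^ (1-β)) with hf
  have hf0 : f 0 = 0 := by simp [hf, Real.zero_rpow hγ.ne']
  have hfnn : ∀ r, 0 ≤ r → r ≤ R → 0 ≤ f r := by
    intro r h0 h1
    have := fB_mono (D := D) hD0 hβ1 le_rfl h0 h1
    rw [← hf0]; exact this
  have hfc : Continuous f := by
    have h1 : Continuous fun r : ℝ => r ^ (1-β) := Real.continuous_rpow_const hγ.le
    have h2 : Continuous fun r : ℝ => (R - r) ^ (1-β) := h1.comp (by fun_prop)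
    fun_prop
  set K : Set (EuclideanSpace ℝ (Fin (n+1))) := closedBall y R ∩ {x | 0 ≤ x (Fin.last n)} with hK
  have hKc : IsCompact K := (isCompact_closedBall y R).inter_right (isClosed_H n)
  have hΘ : ContinuousOn (fun z => -u z - f ‖z - y‖) K := by
    apply ContinuousOn.sub
    · exact (hu.mono inter_subset_right).neg
    · exact (hfc.comp (by fun_prop)).continuousOn
  obtain ⟨z, hzK, hz⟩ := hKc.exists_isMaxOn ⟨x, by simpa [dist_eq_norm] using hxR, hx⟩ hΘ
  have hzR : ‖z - y‖ ≤ R := by simpa [dist_eq_norm] using hzK.1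
  have hz0 : 0 ≤ z (Fin.last n) := hzK.2
  have key : -u z - f ‖z - y‖ ≤ -u y := by
    by_contra hcon
    push Not at hcon
    have hzy : 0 < ‖z - y‖ := by
      rcases (norm_nonneg (z - y)).eq_or_lt with h | h
      · rw [← h, hf0] at hcon
        have : z = y := by rw [← sub_eq_zero, ← norm_eq_zero]; exact h.symm
        rw [this] at hcon; linarith
      · exact h
    have hzpos : 0 < z (Fin.last n) := by
      rcases hz0.eq_or_lt with h | h
      · have := hb z hzR h.symm
        have := hfnn _ (norm_nonneg _) hzR
        linarith
      · exact h
    have hHn := (isOpen_H n).mem_nhds hzpos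
    rcases hzR.lt_or_eq with hlt | heq
    · refine barrier_interior hp hβ hC hPDE hD hzpos hzy hlt ?_
      have h1 : ∀ᶠ w in 𝓝 z, w ∈ ball y R := isOpen_ball.mem_nhds (by simpa [dist_eq_norm] using hlt)
      filter_upwards [hHn, h1] with w hw1 hw2
      exact hz ⟨ball_subset_closedBall hw2, le_of_lt hw1⟩
    · -- outer sphere
      set a := -((1 / R) • (z - y)) with ha
      have hd := (line_deriv hC hzpos a).1.self_of_nhds
      have hO := hd.isBigO_sub
      obtain ⟨c, hc⟩ := hO.bound
      have hcont : Tendsto (fun t : ℝ => z + t • a) (𝓝 0) (𝓝 z) := by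
        have : Continuous (fun t : ℝ => z + t • a) := by fun_prop
        simpa using this.tendsto 0
      have hev : ∀ᶠ t in 𝓝[>] (0:ℝ), D / (1 - β) ≤ c * t ^ β := by
        have h1 : ∀ᶠ t in 𝓝[>] (0:ℝ), t < R := nhdsWithin_le_nhds (gt_mem_nhds hR)
        filter_upwards [nhdsWithin_le_nhds hc, nhdsWithin_le_nhds (hcont.eventually hHn), h1,
          self_mem_nhdsWithin] with t ht1 ht2 ht3 ht4
        have ht0 : 0 < t := ht4
        have hn : ‖z + t • a - y‖ = R - t := by
          have : z + t • a - y = (1 - t / R) • (z - y) := by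
            rw [ha, smul_neg, smul_smul, sub_smul, one_smul, mul_one_div]; abel
          rw [this, norm_smul, heq, Real.norm_eq_abs, abs_of_pos (by rw [sub_pos, div_lt_one hR]; exact ht3)]
          field_simp
        have hle := hz (a := z + t • a) ⟨by rw [mem_closedBall, dist_eq_norm, hn]; linarith, le_of_lt ht2⟩
        simp only [mem_ofPred_eq] at hle
        rw [hn, heq] at hle
        simp only [zero_smul, add_zero, sub_zero, Real.norm_eq_abs] at ht1
        rw [abs_of_pos ht0] at ht1
        have h5 := le_trans (le_abs_self _) ht1
        have h6 : D / (1 - β) * t ^ (1 - β) ≤ c * t := by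
          have h7 : D / (1 - β) * t ^ (1 - β) ≤ f R - f (R - t) := by
            simp only [hf, sub_self, Real.zero_rpow hγ.ne', sub_sub_cancel]
            have : (R - t) ^ (1 - β) ≤ R ^ (1 - β) := Real.rpow_le_rpow (by linarith) (by linarith) hγ.le
            rw [← mul_sub]
            apply mul_le_mul_of_nonneg_left _ (by positivity)
            linarith
          linarith
        have h8 : t = t ^ β * t ^ (1 - β) := by rw [← Real.rpow_add ht0]; simp
        have h9 : 0 < t ^ (1 - β) := Real.rpow_pos_of_pos ht0 _
        rw [← mul_le_mul_iff_left₀ h9]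
        calc _ ≤ c * t := h6
          _ = _ := by rw [mul_assoc, ← h8]
      have hlim : Tendsto (fun t : ℝ => c * t ^ β) (𝓝[>] 0) (𝓝 0) := by
        have h1 : Continuous fun t : ℝ => c * t ^ β := (Real.continuous_rpow_const hβ0.le).const_mul c
        have := h1.tendsto 0
        simp only [Real.zero_rpow hβ0.ne', mul_zero] at this
        exact this.mono_left nhdsWithin_le_nhds
      have := ge_of_tendsto hlim hev
      have : 0 < D / (1 - β) := by positivity
      linarith
  have h1 := hz (a := x) ⟨by simpa [dist_eq_norm] using hxR, hx⟩
  simp only [mem_ofPred_eq] at h1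
  have h2 := rpow_sub_le hγ.le (by linarith) (norm_nonneg (x - y)) hxR
  have h3 : f ‖x - y‖ ≤ 2 * D / (1 - β) * ‖x - y‖ ^ (1 - β) := by
    calc f ‖x - y‖ ≤ D / (1 - β) * (2 * ‖x - y‖ ^ (1 - β)) := by
          apply mul_le_mul_of_nonneg_left _ (by positivity)
          linarith
      _ = _ := by ring
  linarith

end

/-- the hypotheses of the theorem -/
structure Sol {n : ℕ} (p β : ℝ) (u : EuclideanSpace ℝ (Fin (n+1)) → ℝ) : Prop where
  hp : 2 < p
  hβ : β = 1 / (p - 1)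
  cont : ContinuousOn u {x | 0 ≤ x (Fin.last n)}
  C2 : ContDiffOn ℝ 2 u {x | 0 < x (Fin.last n)}
  pde : ∀ x : EuclideanSpace ℝ (Fin (n + 1)), 0 < x (Fin.last n) → -lap u x = ‖gradient u x‖ ^ p
  bd : ∀ x : EuclideanSpace ℝ (Fin (n + 1)), x (Fin.last n) = 0 → u x = 0

section
variable {n : ℕ} {u : EuclideanSpace ℝ (Fin (n+1)) → ℝ} {p β : ℝ}

lemma coord_le (x y : EuclideanSpace ℝ (Fin (n+1))) (i : Fin (n+1)) : |x i - y i| ≤ ‖x - y‖ := by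
  have := PiLp.norm_apply_le (x - y) i
  simpa using this

/-- last basis vector -/
def en (n : ℕ) : EuclideanSpace ℝ (Fin (n+1)) := EuclideanSpace.single (Fin.last n) (1:ℝ)

@[simp] lemma en_last : (en n) (Fin.last n) = 1 := by simp [en]
@[simp] lemma norm_en : ‖en n‖ = 1 := by simp [en]

lemma Sol.β0 (S : Sol p β u) : 0 < β := by
  have := S.hp; rw [S.hβ]; apply one_div_pos.2; linarith
lemma Sol.β1 (S : Sol p β u) : β < 1 := by
  have := S.hp; rw [S.hβ, div_lt_one (by linarith)]; linarith

/-- the Hölder constant -/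
def HC (n : ℕ) (β : ℝ) : ℝ := 2 * (β + n + 1) ^ β / (1 - β)

lemma Sol.HC0 (S : Sol p β u) : 0 < HC n β := by
  have := S.β0
  have := S.β1
  have : 0 < 1 - β := by linarith
  unfold HC; positivity

lemma Sol.holder (S : Sol p β u) (x y : EuclideanSpace ℝ (Fin (n+1)))
    (h : ‖x - y‖ < y (Fin.last n)) : u y - u x ≤ HC n β * ‖x - y‖ ^ (1 - β) := by
  have hn := norm_nonneg (x - y)
  have hx := abs_le.1 (coord_le x y (Fin.last n))
  refine barrier S.hp S.hβ S.cont S.C2 S.pde rfl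
    (R := (‖x - y‖ + y (Fin.last n)) / 2) (by linarith) (by linarith) ?_ x (by linarith) (by linarith)
  intro z hz hz0
  have := abs_le.1 (coord_le z y (Fin.last n))
  linarith

lemma Sol.lower (S : Sol p β u) (x : EuclideanSpace ℝ (Fin (n+1))) (hx : 0 ≤ x (Fin.last n)) :
    -(HC n β * (x (Fin.last n)) ^ (1 - β)) ≤ u x := by
  have hy : (x - x (Fin.last n) • en n) (Fin.last n) = 0 := by simp
  have := barrier S.hp S.hβ S.cont S.C2 S.pde rfl (y := x - x (Fin.last n) • en n)
    (R := x (Fin.last n) + 1) (by linarith) hy.ge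
    (fun z _ hz => by rw [S.bd z hz, S.bd _ hy]) x hx (by simp [norm_smul, abs_of_nonneg hx])
  rw [S.bd _ hy] at this
  simp only [sub_sub_cancel, norm_smul, norm_en, mul_one, Real.norm_eq_abs, abs_of_nonneg hx] at this
  unfold HC
  linarith

lemma Sol.upper (S : Sol p β u) (y : EuclideanSpace ℝ (Fin (n+1))) (hy : 0 ≤ y (Fin.last n)) :
    u y ≤ HC n β * (y (Fin.last n)) ^ (1 - β) := by
  have hβ1 := S.β1
  rcases hy.eq_or_lt with h | hy0
  · rw [S.bd y h.symm, ← h, Real.zero_rpow (by linarith)]; simp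
  set T := y (Fin.last n) with hT
  have hc : ContinuousOn (fun s : ℝ => u (y - (T - s) • en n)) (Ici 0) := by
    apply S.cont.comp (by fun_prop)
    intro s hs
    have : (0:ℝ) ≤ s := hs
    simp only [Set.mem_setOf_eq]
    simpa [← hT] using this
  have hl := (hc 0 self_mem_Ici).tendsto
  have h0 : u (y - (T - 0) • en n) = 0 := S.bd _ (by simp [hT])
  rw [h0] at hl
  have hl2 := (hl.const_sub (u y)).mono_left (nhdsWithin_mono (0:ℝ) Ioi_subset_Ici_self)
  rw [sub_zero] at hl2
  refine le_of_tendsto hl2 ?_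
  filter_upwards [self_mem_nhdsWithin, nhdsWithin_le_nhds (gt_mem_nhds hy0)] with s hs hs2
  have hs : 0 < s := hs
  have hn : ‖y - (T - s) • en n - y‖ = T - s := by
    simp [norm_smul, abs_of_pos (sub_pos.2 hs2)]
  have := S.holder (y - (T - s) • en n) y (by rw [hn]; linarith)
  rw [hn] at this
  refine this.trans (mul_le_mul_of_nonneg_left ?_ S.HC0.le)
  exact Real.rpow_le_rpow (by linarith) (by linarith) (by linarith)

lemma Sol.abs_le (S : Sol p β u) (y : EuclideanSpace ℝ (Fin (n+1))) (hy : 0 ≤ y (Fin.last n)) :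
    |u y| ≤ HC n β * (y (Fin.last n)) ^ (1 - β) :=
  _root_.abs_le.2 ⟨S.lower y hy, S.upper y hy⟩

end

lemma rpow_diff_le {p G ξ : ℝ} (hp : 1 ≤ p) (hG : 0 ≤ G) (hξ : 0 ≤ ξ) :
    (G + ξ) ^ p - G ^ p ≤ p * ξ * (G + ξ) ^ (p - 1) := by
  rcases (add_nonneg hG hξ).eq_or_lt with h | h
  · have h1 : G = 0 := by linarith
    have h2 : ξ = 0 := by linarith
    subst h1 h2; simp
  · have := one_add_mul_self_le_rpow_one_add (s := -(ξ / (G + ξ))) (by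
      rw [neg_le_neg_iff, div_le_one h]; linarith) hp
    have e1 : 1 + -(ξ / (G + ξ)) = G / (G + ξ) := by field_simp; ring
    rw [e1, Real.div_rpow hG h.le] at this
    have hpos : 0 < (G + ξ) ^ p := Real.rpow_pos_of_pos h p
    rw [le_div_iff₀ hpos] at this
    have e2 : (G + ξ) ^ (p - 1) = (G + ξ) ^ p / (G + ξ) := Real.rpow_sub_one h.ne' p
    rw [e2]
    have e3 : p * ξ * ((G + ξ) ^ p / (G + ξ)) = p * (ξ / (G + ξ)) * (G + ξ) ^ p := by ring
    rw [e3]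
    linarith

section
variable {n : ℕ} {u : EuclideanSpace ℝ (Fin (n+1)) → ℝ} {p β : ℝ}

lemma sq_line (z a : EuclideanSpace ℝ (Fin (n+1))) (t : ℝ) :
    ‖z + t • a‖ ^ 2 = ‖z‖ ^ 2 + 2 * t * inner ℝ z a + t ^ 2 * ‖a‖ ^ 2 := by
  rw [norm_add_sq_real, inner_smul_right, norm_smul, mul_pow, Real.norm_eq_abs, sq_abs]; ring

lemma IL_point (S : Sol p β u) {x y x0 : EuclideanSpace ℝ (Fin (n+1))} {K L δ : ℝ}
    (hK : 0 < K) (hL : 0 ≤ L) (hδ0 : 0 < δ) (hδ1 : δ < 1)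
    (hx : 0 < x (Fin.last n)) (hy : 0 < y (Fin.last n)) (hr : 0 < ‖x - y‖)
    (hmax : ∀ᶠ q : EuclideanSpace ℝ (Fin (n+1)) × EuclideanSpace ℝ (Fin (n+1)) in 𝓝 (x, y),
      u q.1 - u q.2 - K * ‖q.1 - q.2‖ ^ δ - L * ‖q.1 - x0‖ ^ 2 ≤
      u x - u y - K * ‖x - y‖ ^ δ - L * ‖x - x0‖ ^ 2) :
    4 * K * δ * (1 - δ) * ‖x - y‖ ^ (δ - 2) ≤ 2 * L * (n + 1) +
      p * (2 * L * ‖x - x0‖) * (K * δ * ‖x - y‖ ^ (δ - 1) + 2 * L * ‖x - x0‖) ^ (p - 1) := by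
  set r := ‖x - y‖ with hrdef
  set e := (1 / r) • (x - y) with he
  have hne : ‖e‖ = 1 := by
    rw [he, norm_smul, ← hrdef, Real.norm_eq_abs, abs_of_pos (by positivity)]; field_simp
  have hxy : x - y = r • e := by rw [he, smul_smul]; field_simp; simp
  clear_value e
  obtain ⟨b, hb0, hb⟩ := exists_basis e hne
  have hcont : ∀ a c : EuclideanSpace ℝ (Fin (n+1)),
      Tendsto (fun t : ℝ => (x + t • a, y + t • c)) (𝓝 0) (𝓝 (x, y)) := by
    intro a c
    have : Continuous (fun t : ℝ => (x + t • a, y + t • c)) := by fun_prop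
    simpa using this.tendsto 0
  have hp := S.hp
  -- quadratic
  have hquad : ∀ A B t : ℝ, HasDerivAt (fun t : ℝ => L * (A + 2 * t * B + t ^ 2 * 1)) (L * (2 * B + 2 * t)) t := by
    intro A B t
    have h1 := ((((hasDerivAt_id t).const_mul 2).mul_const B).const_add A).add (((hasDerivAt_id t).pow 2).mul_const 1)
    refine (h1.const_mul L).congr_deriv ?_
    simp
  have hquad2 : ∀ B t : ℝ, HasDerivAt (fun t : ℝ => L * (2 * B + 2 * t)) (L * 2) t := by
    intro B t
    refine ((((hasDerivAt_id t).const_mul 2).const_add (2 * B)).const_mul L).congr_deriv ?_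
    simp
  -- direction (e,-e)
  have T1 := touch S.C2 hx hy e (-e) 1 (-1)
    (P := fun t => K * (r + 2 * t) ^ δ + L * (‖x - x0‖ ^ 2 + 2 * t * inner ℝ (x - x0) e + t ^ 2 * 1))
    (P1 := fun t => K * (2 * δ * (r + 2 * t) ^ (δ - 1)) + L * (2 * inner ℝ (x - x0) e + 2 * t))
    (P2 := K * (2 * δ * (2 * (δ - 1) * r ^ (δ - 1 - 1))) + L * 2)
    (by
      have : ∀ᶠ t in 𝓝 (0:ℝ), -r / 2 < t := lt_mem_nhds (by linarith)
      filter_upwards [this] with t ht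
      have h1 : HasDerivAt (fun t : ℝ => r + 2 * t) 2 t := by
        simpa using ((hasDerivAt_id t).const_mul 2).const_add r
      exact ((h1.rpow_const (p := δ) (Or.inl (by linarith))).const_mul K).add (hquad _ _ t))
    (by
      have h1 : HasDerivAt (fun t : ℝ => r + 2 * t) 2 0 := by
        simpa using ((hasDerivAt_id (0:ℝ)).const_mul 2).const_add r
      have h2 := h1.rpow_const (p := δ - 1) (Or.inl (by simpa using hr.ne'))
      simp only [mul_zero, add_zero] at h2
      exact ((h2.const_mul (2 * δ)).const_mul K).add (hquad2 _ 0))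
    (by
      have : ∀ᶠ t in 𝓝 (0:ℝ), -r / 2 < t := lt_mem_nhds (by linarith)
      filter_upwards [(hcont e (-e)).eventually hmax, this] with t ht ht2
      have h1 : ‖x + t • e - (y + t • -e)‖ = r + 2 * t := by
        rw [show x + t • e - (y + t • -e) = (r + 2 * t) • e by
          rw [add_smul, ← hxy, two_mul, add_smul, smul_neg]; abel, norm_smul, hne]
        simp; linarith
      have h2 := sq_line (x - x0) e t
      rw [hne] at h2
      rw [h1, show x + t • e - x0 = x - x0 + t • e by abel, h2] at ht
      norm_num
      norm_num at ht
      linarith)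
  -- direction (a,a)
  have T2 : ∀ a : EuclideanSpace ℝ (Fin (n+1)), ‖a‖ = 1 →
      fderiv ℝ u x a - fderiv ℝ u y a = 2 * L * inner ℝ (x - x0) a ∧
      D2 u x a - D2 u y a ≤ 2 * L := by
    intro a ha
    have := touch S.C2 hx hy a a 1 (-1)
      (P := fun t => L * (‖x - x0‖ ^ 2 + 2 * t * inner ℝ (x - x0) a + t ^ 2 * 1))
      (P1 := fun t => L * (2 * inner ℝ (x - x0) a + 2 * t))
      (P2 := L * 2)
      (Filter.Eventually.of_forall fun t => hquad _ _ t) (hquad2 _ 0)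
      (by
        filter_upwards [(hcont a a).eventually hmax] with t ht
        have h1 : x + t • a - (y + t • a) = x - y := by abel
        have h2 := sq_line (x - x0) a t
        rw [ha] at h2
        rw [h1, show x + t • a - x0 = x - x0 + t • a by abel, h2] at ht
        norm_num
        norm_num at ht
        linarith)
    constructor
    · have := this.1
      simp at this
      linarith
    · linarith [this.2]
  -- gradient of u at y
  have G1 : ∀ v : EuclideanSpace ℝ (Fin (n+1)), fderiv ℝ u y v = K * δ * r ^ (δ - 1) * inner ℝ e v := by
    intro v
    have hd := (line_deriv S.C2 hy v).1.self_of_nhds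
    have h1 : HasDerivAt (fun t : ℝ => r ^ 2 + 2 * t * (-(r * inner ℝ e v)) + t ^ 2 * ‖v‖ ^ 2)
        (2 * (-(r * inner ℝ e v))) 0 := by
      have h1 := ((((hasDerivAt_id (0:ℝ)).const_mul 2).mul_const (-(r * inner ℝ e v))).const_add (r^2)).add
        (((hasDerivAt_id (0:ℝ)).pow 2).mul_const (‖v‖^2))
      refine h1.congr_deriv ?_
      simp
    have h2 := h1.rpow_const (p := δ / 2) (Or.inl (by simpa using hr.ne'))
    have h3 := hd.neg.sub (h2.const_mul K)
    have hm : IsLocalMax (fun t : ℝ => -u (y + t • v) - K * (r ^ 2 + 2 * t * (-(r * inner ℝ e v)) + t ^ 2 * ‖v‖ ^ 2) ^ (δ / 2)) 0 := by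
      filter_upwards [(hcont 0 v).eventually hmax] with t ht
      have h5 : r ^ 2 + 2 * t * (-(r * inner ℝ e v)) + t ^ 2 * ‖v‖ ^ 2 = ‖x + t • (0:EuclideanSpace ℝ (Fin (n+1))) - (y + t • v)‖ ^ 2 := by
        rw [show x + t • (0:EuclideanSpace ℝ (Fin (n+1))) - (y + t • v) = (x - y) + t • (-v) by
          rw [smul_zero, smul_neg]; abel, sq_line, inner_neg_right, norm_neg, ← hrdef, hxy, inner_smul_left]
        simp
      have h6 : ∀ s : ℝ, 0 ≤ s → (s ^ 2) ^ (δ / 2) = s ^ δ := by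
        intro s hs
        rw [← Real.rpow_natCast, ← Real.rpow_mul hs]; congr 1; push_cast; ring
      rw [h5, h6 _ (norm_nonneg _)]
      have h7 : r ^ 2 + 2 * 0 * (-(r * inner ℝ e v)) + 0 ^ 2 * ‖v‖ ^ 2 = r ^ 2 := by ring
      rw [h7, h6 _ hr.le]
      simp only [smul_zero, add_zero, zero_smul] at ht ⊢
      linarith
    have h4 := hm.hasDerivAt_eq_zero h3
    simp only [zero_smul, add_zero, mul_zero, zero_mul, ne_eq, OfNat.ofNat_ne_zero, not_false_eq_true, zero_pow] at h4
    have h8 : (r ^ 2) ^ (δ / 2 - 1) * r = r ^ (δ - 1) := by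
      rw [← Real.rpow_natCast, ← Real.rpow_mul hr.le]
      nth_rewrite 2 [← Real.rpow_one r]
      rw [← Real.rpow_add hr]; congr 1; push_cast; ring
    rw [← h8]
    linear_combination -h4
  have hM0 : 0 ≤ K * δ * r ^ (δ - 1) := by positivity
  have G2 : ‖gradient u y‖ ≤ K * δ * r ^ (δ - 1) := by
    have : gradient u y = (K * δ * r ^ (δ - 1)) • e := by
      apply ext_inner_right ℝ
      intro v
      rw [← grad_apply, G1 v, inner_smul_left]; simp
    rw [this, norm_smul, hne, mul_one, Real.norm_eq_abs, abs_of_nonneg hM0]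
  have G3 : gradient u x = gradient u y + (2 * L) • (x - x0) := by
    apply ext_inner_right ℝ
    intro v
    rcases eq_or_ne v 0 with rfl | hv
    · simp
    have hv' : ‖v‖ ≠ 0 := by simpa using hv
    have := (T2 ((1 / ‖v‖) • v) (by rw [norm_smul]; simp; field_simp)).1
    simp only [map_smul, inner_smul_right, smul_eq_mul] at this
    rw [inner_add_left, inner_smul_left, ← grad_apply, ← grad_apply]
    simp only [conj_trivial]
    field_simp at this
    linarith
  have G4 : ‖gradient u x‖ ≤ ‖gradient u y‖ + 2 * L * ‖x - x0‖ := by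
    rw [G3]
    refine (norm_add_le _ _).trans ?_
    rw [norm_smul, Real.norm_eq_abs, abs_of_nonneg (by positivity)]
  have hxi : 0 ≤ 2 * L * ‖x - x0‖ := by positivity
  -- Laplacians
  have hlx := lap_eq_basis S.C2 hx b
  have hly := lap_eq_basis S.C2 hy b
  rw [Fin.sum_univ_succ, hb0] at hlx hly
  have hsum : ∑ i : Fin n, (D2 u x (b i.succ) - D2 u y (b i.succ)) ≤ ∑ i : Fin n, 2 * L :=
    Finset.sum_le_sum fun i _ => (T2 _ (b.orthonormal.1 _)).2
  rw [Finset.sum_sub_distrib] at hsum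
  simp only [Finset.sum_const, Finset.card_univ, Fintype.card_fin, nsmul_eq_mul] at hsum
  have hneg : D2 u y (-e) = D2 u y e := by simp [D2]
  have hT1 := T1.2
  rw [hneg, show δ - 1 - 1 = δ - 2 by ring] at hT1
  have hPx := S.pde x hx
  have hPy := S.pde y hy
  have hd1 : ‖gradient u x‖ ^ p - ‖gradient u y‖ ^ p ≤
      p * (2 * L * ‖x - x0‖) * (K * δ * r ^ (δ - 1) + 2 * L * ‖x - x0‖) ^ (p - 1) := by
    have h1 := Real.rpow_le_rpow (norm_nonneg _) G4 (show 0 ≤ p by linarith)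
    have h2 := rpow_diff_le (p := p) (by linarith) (norm_nonneg (gradient u y)) hxi
    have h3 : (‖gradient u y‖ + 2 * L * ‖x - x0‖) ^ (p - 1) ≤ (K * δ * r ^ (δ - 1) + 2 * L * ‖x - x0‖) ^ (p - 1) :=
      Real.rpow_le_rpow (by positivity) (by linarith) (by linarith)
    have h4 := mul_le_mul_of_nonneg_left h3 (show 0 ≤ p * (2 * L * ‖x - x0‖) by
      apply mul_nonneg _ hxi; linarith)
    linarith
  linarith

end

lemma IL_real {p β K C r1 N δ : ℝ} (hp : 2 < p) (hβ : β = 1 / (p - 1)) (hK : 0 < K) (hC : 0 < C)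
    (hr1 : 0 < r1) (hN : 0 ≤ N) (hδ : δ = 1 - β / 2) :
    ∃ R1 : ℝ, 1 ≤ R1 ∧ ∀ R, R1 ≤ R → ∀ r, 0 < r → r ≤ r1 → ∀ ξ, 0 ≤ ξ → ξ ≤ 2 * C * R ^ (-β) →
      ∀ L, L ≤ C * R ^ (-β) →
      2 * L * N + p * ξ * (K * δ * r ^ (δ - 1) + ξ) ^ (p - 1) < 4 * K * δ * (1 - δ) * r ^ (δ - 2) := by
  have hp1 : 0 < p - 1 := by linarith
  have hβ0 : 0 < β := by rw [hβ]; positivity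
  have hβ1 : β < 1 := by rw [hβ, div_lt_one hp1]; linarith
  have hβp : β * (p - 1) = 1 := by rw [hβ]; field_simp
  have hδ0 : 0 < δ := by linarith
  have hδ1 : 0 < 1 - δ := by linarith
  set Q := (K * δ * r1 ^ ((2 - δ) * β + δ - 1) + r1 ^ ((2 - δ) * β) * (2 * C)) ^ (p - 1) with hQ
  have hQ0 : 0 ≤ Q := by positivity
  set W := 2 * C * N * r1 ^ (2 - δ) + 2 * C * p * Q with hW
  have hlim : Tendsto (fun R : ℝ => R ^ (-β) * W) atTop (𝓝 0) := by
    simpa using (tendsto_rpow_neg_atTop hβ0).mul_const W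
  have hev := hlim.eventually (gt_mem_nhds (show 0 < 4 * K * δ * (1 - δ) by positivity))
  obtain ⟨R1, hR1⟩ := eventually_atTop.1 (hev.and (eventually_ge_atTop 1))
  refine ⟨max R1 1, le_max_right _ _, fun R hR r hr0 hr ξ hξ0 hξ L hL => ?_⟩
  obtain ⟨h1, h2⟩ := hR1 R ((le_max_left _ _).trans hR)
  set η := R ^ (-β) with hη
  have hη0 : 0 < η := Real.rpow_pos_of_pos (by linarith) _
  have hη1 : η ≤ 1 := Real.rpow_le_one_of_one_le_of_nonpos h2 (by linarith)
  have hξ1 : ξ ≤ 2 * C := hξ.trans (by nlinarith)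
  have ha : r ^ (2 - δ) * (K * δ * r ^ (δ - 1) + ξ) ^ (p - 1) ≤ Q := by
    have e1 : r ^ (2 - δ) = (r ^ ((2 - δ) * β)) ^ (p - 1) := by
      rw [← Real.rpow_mul hr0.le, mul_assoc, hβp, mul_one]
    rw [e1, ← Real.mul_rpow (by positivity) (by positivity), hQ]
    apply Real.rpow_le_rpow (by positivity) _ hp1.le
    rw [mul_add]
    apply add_le_add
    · have e2 : r ^ ((2 - δ) * β) * (K * δ * r ^ (δ - 1)) = K * δ * r ^ ((2 - δ) * β + δ - 1) := by
        rw [show (2 - δ) * β + δ - 1 = (2 - δ) * β + (δ - 1) by ring, Real.rpow_add hr0]; ring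
      rw [e2]
      apply mul_le_mul_of_nonneg_left _ (by positivity)
      apply Real.rpow_le_rpow hr0.le hr
      rw [hδ]; nlinarith
    · apply mul_le_mul _ hξ1 hξ0 (by positivity)
      apply Real.rpow_le_rpow hr0.le hr
      have : 0 < 2 - δ := by linarith
      positivity
  have hb : r ^ (2 - δ) ≤ r1 ^ (2 - δ) := Real.rpow_le_rpow hr0.le hr (by linarith)
  have hr2 : 0 < r ^ (2 - δ) := Real.rpow_pos_of_pos hr0 _
  have hinv : r ^ (2 - δ) * r ^ (δ - 2) = 1 := by rw [← Real.rpow_add hr0]; simp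
  rw [← mul_lt_mul_iff_right₀ hr2]
  calc r ^ (2 - δ) * (2 * L * N + p * ξ * (K * δ * r ^ (δ - 1) + ξ) ^ (p - 1))
      = 2 * L * N * r ^ (2 - δ) + p * ξ * (r ^ (2 - δ) * (K * δ * r ^ (δ - 1) + ξ) ^ (p - 1)) := by ring
    _ ≤ 2 * (C * η) * N * r ^ (2 - δ) + p * ξ * Q := by
        gcongr
    _ ≤ 2 * (C * η) * N * r1 ^ (2 - δ) + p * (2 * C * η) * Q := by
        gcongr
    _ = η * W := by rw [hW]; ring
    _ < 4 * K * δ * (1 - δ) := h1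
    _ = 4 * K * δ * (1 - δ) * (r ^ (2 - δ) * r ^ (δ - 2)) := by rw [hinv, mul_one]
    _ = _ := by ring

section
variable {n : ℕ} {u : EuclideanSpace ℝ (Fin (n+1)) → ℝ} {p β : ℝ}

lemma Sol.decay (S : Sol p β u) (h : EuclideanSpace ℝ (Fin (n+1))) {ε : ℝ} (hε : 0 < ε) :
    ∃ R0 : ℝ, 0 < R0 ∧ ∀ x0 : EuclideanSpace ℝ (Fin (n+1)), R0 ≤ x0 (Fin.last n) →
      u x0 - u (x0 + h) ≤ ε := by
  rcases eq_or_ne h 0 with rfl | hh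
  · exact ⟨1, one_pos, fun x0 _ => by simpa using hε.le⟩
  have hh0 : 0 < ‖h‖ := norm_pos_iff.2 hh
  have hβ0 := S.β0
  have hβ1 := S.β1
  have hp := S.hp
  set C := HC n β with hCdef
  have hC : 0 < C := S.HC0
  set δ := 1 - β / 2 with hδ
  have hδ0 : 0 < δ := by linarith
  have hδ1 : δ < 1 := by linarith
  set K := ε / ‖h‖ ^ δ with hKdef
  have hK : 0 < K := by positivity
  set r1 := (C / K) ^ (2 / β) with hr1def
  have hr1 : 0 < r1 := by positivity
  obtain ⟨R1, hR1, hIL⟩ := IL_real (N := (n + 1 : ℝ)) hp S.hβ hK hC hr1 (by positivity) hδ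
  set R := max R1 (max (r1 + 1) ‖h‖) with hR
  have hRR1 : R1 ≤ R := le_max_left _ _
  have hRr1 : r1 + 1 ≤ R := (le_max_left _ _).trans (le_max_right _ _)
  have hRh : ‖h‖ ≤ R := (le_max_right _ _).trans (le_max_right _ _)
  have hR0 : 0 < R := by linarith
  refine ⟨4 * R, by linarith, fun x0 hx0 => ?_⟩
  by_contra hcon
  push Not at hcon
  set L := C * R ^ (-β - 1) with hLdef
  have hL : 0 < L := by positivity
  set Ω : Set (EuclideanSpace ℝ (Fin (n+1)) × EuclideanSpace ℝ (Fin (n+1))) :=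
    {q | ‖q.1 - x0‖ ≤ R ∧ ‖q.1 - q.2‖ ≤ R} with hΩ
  have c1 : Continuous fun q : EuclideanSpace ℝ (Fin (n+1)) × EuclideanSpace ℝ (Fin (n+1)) =>
      ‖q.1 - x0‖ := by fun_prop
  have c2 : Continuous fun q : EuclideanSpace ℝ (Fin (n+1)) × EuclideanSpace ℝ (Fin (n+1)) =>
      ‖q.1 - q.2‖ := by fun_prop
  have hΩc : IsCompact Ω := by
    apply Metric.isCompact_of_isClosed_isBounded
    · exact (isClosed_le c1 continuous_const).inter (isClosed_le c2 continuous_const)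
    · apply ((isBounded_closedBall (x := x0) (r := R)).prod (isBounded_closedBall (x := x0) (r := 2 * R))).subset
      rintro ⟨a, b⟩ ⟨h1, h2⟩
      simp only at h1 h2
      refine ⟨by simpa [dist_eq_norm] using h1, ?_⟩
      simp only [mem_closedBall, dist_eq_norm]
      calc ‖b - x0‖ = ‖(a - x0) - (a - b)‖ := by congr 1; abel
        _ ≤ ‖a - x0‖ + ‖a - b‖ := norm_sub_le _ _
        _ ≤ 2 * R := by linarith
  have hpos : ∀ q ∈ Ω, 3 * R ≤ q.1 (Fin.last n) ∧ 2 * R ≤ q.2 (Fin.last n) := by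
    rintro ⟨a, b⟩ ⟨h1, h2⟩
    simp only at h1 h2 ⊢
    have h3 := _root_.abs_le.1 (coord_le a x0 (Fin.last n))
    have h4 := _root_.abs_le.1 (coord_le a b (Fin.last n))
    constructor <;> linarith
  have hΦ : ContinuousOn (fun q : EuclideanSpace ℝ (Fin (n+1)) × EuclideanSpace ℝ (Fin (n+1)) =>
      u q.1 - u q.2 - K * ‖q.1 - q.2‖ ^ δ - L * ‖q.1 - x0‖ ^ 2) Ω := by
    apply ContinuousOn.sub
    · apply ContinuousOn.sub
      · apply ContinuousOn.sub
        · exact S.cont.comp continuous_fst.continuousOn fun q hq => by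
            have := (hpos q hq).1
            show 0 ≤ q.1 (Fin.last n)
            linarith
        · exact S.cont.comp continuous_snd.continuousOn fun q hq => by
            have := (hpos q hq).2
            show 0 ≤ q.2 (Fin.last n)
            linarith
      · have : Continuous fun s : ℝ => s ^ δ := Real.continuous_rpow_const hδ0.le
        exact (continuous_const.mul (this.comp (by fun_prop))).continuousOn
    · fun_prop
  have hq0 : (x0, x0 + h) ∈ Ω := by
    constructor
    · simpa using hR0.le
    · simpa using hRh
  obtain ⟨⟨x, y⟩, hqΩ, hq⟩ := hΩc.exists_isMaxOn ⟨_, hq0⟩ hΦ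
  have hv := hq hq0
  have hKh : K * ‖h‖ ^ δ = ε := by rw [hKdef]; field_simp
  simp only [mem_ofPred_eq, sub_add_cancel_left, norm_neg, hKh, sub_self, norm_zero] at hv
  obtain ⟨hx, hy⟩ := hpos _ hqΩ
  obtain ⟨hxR, hxyR⟩ := hqΩ
  simp only at hx hy hxR hxyR
  have hhol := S.holder y x (by rw [norm_sub_rev]; linarith)
  rw [norm_sub_rev y x] at hhol
  have hineq : K * ‖x - y‖ ^ δ + L * ‖x - x0‖ ^ 2 < C * ‖x - y‖ ^ (1 - β) := by
    norm_num at hv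
    linarith
  have hr : 0 < ‖x - y‖ := by
    rcases (norm_nonneg (x - y)).eq_or_lt with h0 | h0
    · rw [← h0, Real.zero_rpow hδ0.ne', Real.zero_rpow (by linarith)] at hineq
      have : 0 ≤ L * ‖x - x0‖ ^ 2 := by positivity
      linarith
    · exact h0
  have hrr1 : ‖x - y‖ ≤ r1 := by
    have h1 : K * ‖x - y‖ ^ δ < C * ‖x - y‖ ^ (1 - β) := by
      have : 0 ≤ L * ‖x - x0‖ ^ 2 := by positivity
      linarith
    have h2 : ‖x - y‖ ^ δ = ‖x - y‖ ^ (β / 2) * ‖x - y‖ ^ (1 - β) := by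
      rw [← Real.rpow_add hr]; congr 1; rw [hδ]; ring
    have h3 : 0 < ‖x - y‖ ^ (1 - β) := Real.rpow_pos_of_pos hr _
    rw [h2, ← mul_assoc] at h1
    have h4 := lt_of_mul_lt_mul_right h1 h3.le
    have h5 : ‖x - y‖ ^ (β / 2) ≤ C / K := by rw [le_div_iff₀ hK]; linarith
    have h6 := Real.rpow_le_rpow (by positivity) h5 (show 0 ≤ 2 / β by positivity)
    rw [← Real.rpow_mul hr.le, show β / 2 * (2 / β) = 1 by field_simp, Real.rpow_one] at h6
    exact h6
  have hxR' : ‖x - x0‖ < R := by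
    by_contra hc
    have hc : ‖x - x0‖ = R := le_antisymm hxR (not_lt.1 hc)
    rw [hc] at hineq
    have h1 : L * R ^ 2 = C * R ^ (1 - β) := by
      rw [hLdef, mul_assoc, ← Real.rpow_natCast R 2, ← Real.rpow_add hR0]; congr 2; push_cast; ring
    have h2 : ‖x - y‖ ^ (1 - β) ≤ R ^ (1 - β) := Real.rpow_le_rpow hr.le hxyR (by linarith)
    have h3 := mul_le_mul_of_nonneg_left h2 hC.le
    have h4 : 0 < K * ‖x - y‖ ^ δ := by positivity
    linarith
  have hpt := IL_point S (x0 := x0) hK hL.le hδ0 hδ1 (by linarith) (by linarith) hr (by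
    have ho : IsOpen {q : EuclideanSpace ℝ (Fin (n+1)) × EuclideanSpace ℝ (Fin (n+1)) |
        ‖q.1 - x0‖ < R ∧ ‖q.1 - q.2‖ < R} :=
      (isOpen_lt c1 continuous_const).inter (isOpen_lt c2 continuous_const)
    have hm : (x, y) ∈ {q : EuclideanSpace ℝ (Fin (n+1)) × EuclideanSpace ℝ (Fin (n+1)) |
        ‖q.1 - x0‖ < R ∧ ‖q.1 - q.2‖ < R} := ⟨hxR', show ‖x - y‖ < R by linarith⟩
    filter_upwards [ho.mem_nhds hm] with q hq'
    exact hq ⟨hq'.1.le, hq'.2.le⟩)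
  have hRβ : R ^ (-β) = R ^ (-β - 1) * R := by
    nth_rewrite 3 [← Real.rpow_one R]
    rw [← Real.rpow_add hR0]; congr 1; ring
  have hfin := hIL R hRR1 ‖x - y‖ hr hrr1 (2 * L * ‖x - x0‖) (by positivity)
    (by
      rw [hRβ]
      calc 2 * L * ‖x - x0‖ ≤ 2 * L * R := by gcongr
        _ = _ := by rw [hLdef]; ring) L
    (by
      rw [hLdef]
      apply mul_le_mul_of_nonneg_left _ hC.le
      exact Real.rpow_le_rpow_of_exponent_le (by linarith) (by linarith))
  linarith

end

section
variable {n : ℕ} {u : EuclideanSpace ℝ (Fin (n+1)) → ℝ} {p β : ℝ}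

lemma conv_pow {p θ : ℝ} (hp : 1 ≤ p) (h0 : 0 < θ) (h1 : θ < 1) {E : Type*} [NormedAddCommGroup E]
    [NormedSpace ℝ E] (b ξ : E) :
    ‖θ • b + ξ‖ ^ p ≤ θ * ‖b‖ ^ p + (1 - θ) * (‖ξ‖ / (1 - θ)) ^ p := by
  have hs : 0 < 1 - θ := by linarith
  have h2 : ‖θ • b + ξ‖ ≤ θ * ‖b‖ + (1 - θ) * (‖ξ‖ / (1 - θ)) := by
    calc ‖θ • b + ξ‖ ≤ ‖θ • b‖ + ‖ξ‖ := norm_add_le _ _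
      _ = _ := by rw [norm_smul, Real.norm_eq_abs, abs_of_pos h0]; field_simp
  refine (Real.rpow_le_rpow (norm_nonneg _) h2 (by linarith)).trans ?_
  have := (convexOn_rpow hp).2 (show ‖b‖ ∈ Ici (0:ℝ) from norm_nonneg _)
    (show ‖ξ‖ / (1 - θ) ∈ Ici (0:ℝ) from by simp only [mem_Ici]; positivity) h0.le hs.le (by ring)
  simpa [smul_eq_mul] using this

lemma slab_point (S : Sol p β u) {x x1 h : EuclideanSpace ℝ (Fin (n+1))} {θ η κ : ℝ}
    (hh : h (Fin.last n) = 0) (h0 : 0 < θ) (h1 : θ < 1) (hη : 0 < η) (hκ : 0 ≤ κ)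
    (hx : 0 < x (Fin.last n))
    (hmax : ∀ᶠ q : EuclideanSpace ℝ (Fin (n+1)) in 𝓝 x,
      u (q + h) - θ * u q + η * q (Fin.last n) ^ 2 - κ * ‖q - x1‖ ^ 2 ≤
      u (x + h) - θ * u x + η * x (Fin.last n) ^ 2 - κ * ‖x - x1‖ ^ 2) :
    2 * η - 2 * κ * (n + 1) ≤
      (1 - θ) * ((2 * κ * ‖x - x1‖ + 2 * η * x (Fin.last n)) / (1 - θ)) ^ p := by
  have hs : 0 < 1 - θ := by linarith
  have hp := S.hp
  have hy : 0 < (x + h) (Fin.last n) := by simpa [hh] using hx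
  set X := x (Fin.last n) with hX
  have T : ∀ a : EuclideanSpace ℝ (Fin (n+1)),
      fderiv ℝ u (x + h) a - θ * fderiv ℝ u x a =
        2 * κ * inner ℝ (x - x1) a - 2 * η * X * a (Fin.last n) ∧
      D2 u (x + h) a - θ * D2 u x a ≤ 2 * κ * ‖a‖ ^ 2 - 2 * η * a (Fin.last n) ^ 2 := by
    intro a
    have := touch S.C2 hy hx a a 1 (-θ)
      (P := fun t => κ * (‖x - x1‖ ^ 2 + 2 * t * inner ℝ (x - x1) a + t ^ 2 * ‖a‖ ^ 2)
        - η * (X + t * a (Fin.last n)) ^ 2)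
      (P1 := fun t => κ * (2 * inner ℝ (x - x1) a + 2 * t * ‖a‖ ^ 2)
        - η * (2 * (X + t * a (Fin.last n)) * a (Fin.last n)))
      (P2 := κ * (2 * ‖a‖ ^ 2) - η * (2 * a (Fin.last n) * a (Fin.last n)))
      (Filter.Eventually.of_forall fun t => by
        have e1 := ((((hasDerivAt_id t).const_mul 2).mul_const (inner ℝ (x - x1) a)).const_add
          (‖x - x1‖ ^ 2)).add (((hasDerivAt_id t).pow 2).mul_const (‖a‖ ^ 2))
        have e2 := (((hasDerivAt_id t).mul_const (a (Fin.last n))).const_add X).pow 2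
        refine ((e1.const_mul κ).sub (e2.const_mul η)).congr_deriv ?_
        simp)
      (by
        have e1 := (((hasDerivAt_id (0:ℝ)).const_mul 2).mul_const (‖a‖ ^ 2)).const_add
          (2 * inner ℝ (x - x1) a)
        have e2 := ((((hasDerivAt_id (0:ℝ)).mul_const (a (Fin.last n))).const_add X).const_mul 2).mul_const
          (a (Fin.last n))
        refine ((e1.const_mul κ).sub (e2.const_mul η)).congr_deriv ?_
        simp)
      (by
        have hc : Tendsto (fun t : ℝ => x + t • a) (𝓝 0) (𝓝 x) := by
          have : Continuous (fun t : ℝ => x + t • a) := by fun_prop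
          simpa using this.tendsto 0
        filter_upwards [hc.eventually hmax] with t ht
        have h2 := sq_line (x - x1) a t
        rw [show x + t • a - x1 = x - x1 + t • a by abel, h2,
          show x + t • a + h = x + h + t • a by abel] at ht
        simp only [PiLp.add_apply, PiLp.smul_apply, smul_eq_mul, ← hX] at ht
        norm_num
        linarith)
    obtain ⟨t1, t2⟩ := this
    simp only [zero_mul, mul_zero, add_zero] at t1
    exact ⟨by linarith, by nlinarith⟩
  have hgrad : gradient u (x + h) = θ • gradient u x +
      ((2 * κ) • (x - x1) - (2 * η * X) • en n) := by
    apply ext_inner_right ℝ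
    intro a
    have := (T a).1
    simp only [inner_add_left, inner_sub_left (𝕜 := ℝ) ((2 * κ) • (x - x1)), inner_smul_left]
    have e : inner ℝ (en n) a = a (Fin.last n) := by
      simp [en, EuclideanSpace.inner_single_left]
    rw [e]
    simp
    linarith
  have hξ : ‖(2 * κ) • (x - x1) - (2 * η * X) • en n‖ ≤ 2 * κ * ‖x - x1‖ + 2 * η * X := by
    refine (norm_sub_le _ _).trans (le_of_eq ?_)
    rw [norm_smul, norm_smul, norm_en, Real.norm_eq_abs, Real.norm_eq_abs,
      abs_of_nonneg (by positivity), abs_of_nonneg (by positivity), mul_one]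
  set b := EuclideanSpace.basisFun (Fin (n+1)) ℝ with hb
  have hL : lap u (x + h) - θ * lap u x ≤ 2 * κ * (n + 1) - 2 * η := by
    rw [lap_eq_basis S.C2 hy b, lap_eq_basis S.C2 hx b, Finset.mul_sum, ← Finset.sum_sub_distrib]
    calc _ ≤ ∑ i, (2 * κ * ‖b i‖ ^ 2 - 2 * η * (b i) (Fin.last n) ^ 2) :=
          Finset.sum_le_sum fun i _ => (T (b i)).2
      _ = _ := by
          rw [Finset.sum_sub_distrib, ← Finset.mul_sum, ← Finset.mul_sum]
          have e1 : ∑ i, ‖b i‖ ^ 2 = (n + 1 : ℝ) := by simp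
          have e2 : ∑ i, (b i) (Fin.last n) ^ 2 = 1 := by
            rw [Finset.sum_eq_single (Fin.last n)]
            · simp [hb]
            · intro i _ hi; simp [hb, hi.symm]
            · simp
          rw [e1, e2, mul_one]
  have P1 := S.pde _ hy
  have P2 := S.pde _ hx
  have hcv := conv_pow (show 1 ≤ p by linarith) h0 h1 (gradient u x) ((2 * κ) • (x - x1) - (2 * η * X) • en n)
  rw [← hgrad, ← P1, ← P2] at hcv
  have hm : (1 - θ) * (‖(2 * κ) • (x - x1) - (2 * η * X) • en n‖ / (1 - θ)) ^ p ≤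
      (1 - θ) * ((2 * κ * ‖x - x1‖ + 2 * η * X) / (1 - θ)) ^ p := by gcongr
  linarith

set_option maxHeartbeats 1000000 in
lemma Sol.tangential_le (S : Sol p β u) {h : EuclideanSpace ℝ (Fin (n+1))} (hh : h (Fin.last n) = 0)
    {x1 : EuclideanSpace ℝ (Fin (n+1))} (hx1 : 0 ≤ x1 (Fin.last n)) {ε : ℝ} (hε : 0 < ε) :
    u (x1 + h) - u x1 ≤ 3 * ε := by
  by_contra hcon
  push Not at hcon
  have hβ0 := S.β0
  have hβ1 := S.β1
  have hp := S.hp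
  have hγ : 0 < 1 - β := by linarith
  set C := HC n β with hCdef
  have hC : 0 < C := S.HC0
  obtain ⟨R, hR0, hR⟩ := S.decay (-h) hε
  have hR' : ∀ x : EuclideanSpace ℝ (Fin (n+1)), R ≤ x (Fin.last n) → u (x + h) - u x ≤ ε := by
    intro x hx
    have := hR (x + h) (by simpa [hh] using hx)
    simpa using this
  have hx1R : x1 (Fin.last n) < R := by
    by_contra hc
    have := hR' x1 (not_lt.1 hc)
    linarith
  set d := (ε / (2 * C)) ^ (1 / (1 - β)) with hd
  have hd0 : 0 < d := by positivity
  have hdγ : C * d ^ (1 - β) = ε / 2 := by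
    rw [hd, ← Real.rpow_mul (by positivity), one_div_mul_cancel hγ.ne', Real.rpow_one]
    field_simp
  have hlow : ∀ x : EuclideanSpace ℝ (Fin (n+1)), 0 ≤ x (Fin.last n) → x (Fin.last n) ≤ d →
      u (x + h) - u x ≤ ε := by
    intro x hx hxd
    have e := S.upper (x + h) (by simpa [hh] using hx)
    have f := S.lower x hx
    simp only [PiLp.add_apply, hh, add_zero] at e
    have : C * x (Fin.last n) ^ (1 - β) ≤ C * d ^ (1 - β) := by gcongr
    linarith
  set C1 := C * R ^ (1 - β) with hC1
  have hC10 : 0 < C1 := by positivity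
  have hbd : ∀ x : EuclideanSpace ℝ (Fin (n+1)), 0 ≤ x (Fin.last n) → x (Fin.last n) ≤ R →
      -C1 ≤ u x ∧ u x ≤ C1 := by
    intro x hx hxR
    have e := S.upper x hx
    have f := S.lower x hx
    have : C * x (Fin.last n) ^ (1 - β) ≤ C * R ^ (1 - β) := by gcongr
    constructor <;> linarith
  set s := min (1 / 2) (ε / (4 * C1)) with hs
  have hs0 : 0 < s := by rw [hs]; positivity
  have hs1 : s ≤ 1 / 2 := min_le_left _ _
  have hsC : s * C1 ≤ ε / 4 := by
    have : s ≤ ε / (4 * C1) := min_le_right _ _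
    calc s * C1 ≤ ε / (4 * C1) * C1 := by gcongr
      _ = ε / 4 := by field_simp
  -- choice of η
  obtain ⟨η, hη, hη1, hη2⟩ : ∃ η : ℝ, 0 < η ∧ η * R ^ 2 ≤ ε / 4 ∧ s * (4 * η * R / s) ^ p < η := by
    have l1 : Tendsto (fun η : ℝ => η * R ^ 2) (𝓝[>] 0) (𝓝 0) := by
      have : Continuous fun η : ℝ => η * R ^ 2 := by fun_prop
      simpa using (this.tendsto 0).mono_left nhdsWithin_le_nhds
    have l2 : Tendsto (fun η : ℝ => s * (4 * R / s) ^ p * η ^ (p - 1)) (𝓝[>] 0) (𝓝 0) := by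
      have : Continuous fun η : ℝ => s * (4 * R / s) ^ p * η ^ (p - 1) :=
        continuous_const.mul (Real.continuous_rpow_const (by linarith))
      have := (this.tendsto 0).mono_left (nhdsWithin_le_nhds (s := Ioi 0))
      rwa [Real.zero_rpow (by linarith), mul_zero] at this
    have e1 := l1.eventually (gt_mem_nhds (show 0 < ε / 4 by linarith))
    have e2 := l2.eventually (gt_mem_nhds (show (0:ℝ) < 1 by norm_num))
    obtain ⟨η, ⟨h1, h2⟩, h3⟩ := ((e1.and e2).and self_mem_nhdsWithin).exists
    have h3 : 0 < η := h3
    refine ⟨η, h3, h1.le, ?_⟩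
    rw [show 4 * η * R / s = (4 * R / s) * η by ring, Real.mul_rpow (by positivity) h3.le,
      show η ^ p = η ^ (p - 1) * η by
        nth_rewrite 3 [← Real.rpow_one η]
        rw [← Real.rpow_add h3]; congr 1; ring]
    nlinarith
  set B := 2 * C1 + ε with hB
  have hB0 : 0 < B := by positivity
  set ρ := 1 + 2 * B * (n + 1) / η + B / (η * R) with hρ
  have hρ1 : 1 ≤ ρ := by
    have : 0 ≤ 2 * B * (n + 1) / η := by positivity
    have : 0 ≤ B / (η * R) := by positivity
    linarith
  have hρ0 : 0 < ρ := by linarith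
  have hρ2 : 2 * B * (n + 1) ≤ η * ρ := by
    have h2 : 0 ≤ B / (η * R) := by positivity
    calc 2 * B * (n + 1) = η * (2 * B * (n + 1) / η) := by field_simp
      _ ≤ η * ρ := by gcongr; linarith
  have hρ3 : B ≤ η * R * ρ := by
    have h2 : 0 ≤ 2 * B * (n + 1) / η := by positivity
    calc B = η * R * (B / (η * R)) := by field_simp
      _ ≤ η * R * ρ := by gcongr; linarith
  set κ := B / ρ ^ 2 with hκ
  have hκ0 : 0 < κ := by positivity
  have hκρ : κ * ρ ^ 2 = B := by rw [hκ]; field_simp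
  set Ω : Set (EuclideanSpace ℝ (Fin (n+1))) :=
    {x | 0 ≤ x (Fin.last n) ∧ x (Fin.last n) ≤ R ∧ ‖x - x1‖ ≤ ρ} with hΩ
  have c1 : Continuous fun x : EuclideanSpace ℝ (Fin (n+1)) => x (Fin.last n) := by fun_prop
  have c2 : Continuous fun x : EuclideanSpace ℝ (Fin (n+1)) => ‖x - x1‖ := by fun_prop
  have hΩc : IsCompact Ω := by
    apply Metric.isCompact_of_isClosed_isBounded
    · exact (isClosed_le continuous_const c1).inter
        ((isClosed_le c1 continuous_const).inter (isClosed_le c2 continuous_const))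
    · apply (isBounded_closedBall (x := x1) (r := ρ)).subset
      rintro x ⟨_, _, h3⟩
      simpa [dist_eq_norm] using h3
  have hΦ : ContinuousOn (fun q : EuclideanSpace ℝ (Fin (n+1)) =>
      u (q + h) - (1 - s) * u q + η * q (Fin.last n) ^ 2 - κ * ‖q - x1‖ ^ 2) Ω := by
    have a1 : ContinuousOn (fun q => u (q + h)) Ω :=
      S.cont.comp (by fun_prop) fun q hq => by
        show 0 ≤ (q + h) (Fin.last n)
        simpa [hh] using hq.1
    have a2 : ContinuousOn u Ω := S.cont.mono fun q hq => hq.1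
    have a3 : ContinuousOn (fun q : EuclideanSpace ℝ (Fin (n+1)) => η * q (Fin.last n) ^ 2) Ω :=
      (continuous_const.mul (c1.pow 2)).continuousOn
    have a4 : ContinuousOn (fun q : EuclideanSpace ℝ (Fin (n+1)) => κ * ‖q - x1‖ ^ 2) Ω :=
      (continuous_const.mul (c2.pow 2)).continuousOn
    exact ((a1.sub (a2.const_mul (1 - s))).add a3).sub a4
  have hx1Ω : x1 ∈ Ω := ⟨hx1, hx1R.le, by simpa using hρ0.le⟩
  obtain ⟨x, hxΩ, hx⟩ := hΩc.exists_isMaxOn ⟨_, hx1Ω⟩ hΦ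
  have hv := hx hx1Ω
  simp only [mem_ofPred_eq, sub_self, norm_zero] at hv
  obtain ⟨hx0, hxR, hxρ⟩ := hxΩ
  have b1 := hbd x1 hx1 hx1R.le
  have b2 := hbd x hx0 hxR
  have b3 := hbd (x + h) (by simpa [hh] using hx0) (by simpa [hh] using hxR)
  have s1 : -(ε / 4) ≤ s * u x1 := by linarith [mul_le_mul_of_nonneg_left b1.1 hs0.le]
  have s2 : s * u x ≤ ε / 4 := by linarith [mul_le_mul_of_nonneg_left b2.2 hs0.le]
  have s3 : -(ε / 4) ≤ s * u x := by linarith [mul_le_mul_of_nonneg_left b2.1 hs0.le]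
  have q1 : 0 ≤ η * x1 (Fin.last n) ^ 2 := by positivity
  have q2 : η * x (Fin.last n) ^ 2 ≤ ε / 4 := by
    refine le_trans ?_ hη1
    gcongr
  have q3 : 0 ≤ κ * ‖x - x1‖ ^ 2 := by positivity
  have hZ : 2 * ε < u (x + h) - (1 - s) * u x + η * x (Fin.last n) ^ 2 - κ * ‖x - x1‖ ^ 2 := by
    norm_num at hv
    linarith
  have hxd : d < x (Fin.last n) := by
    by_contra hc
    have := hlow x hx0 (not_lt.1 hc)
    linarith
  have hxR' : x (Fin.last n) < R := by
    by_contra hc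
    have := hR' x (not_lt.1 hc)
    linarith
  have hxρ' : ‖x - x1‖ < ρ := by
    by_contra hc
    have hc : ‖x - x1‖ = ρ := le_antisymm hxρ (not_lt.1 hc)
    rw [hc, hκρ] at hZ
    linarith
  have hpt := slab_point S (x := x) (x1 := x1) (h := h) (θ := 1 - s) (η := η) (κ := κ) hh
    (by linarith) (by linarith) hη hκ0.le (by linarith) (by
      have ho : IsOpen {q : EuclideanSpace ℝ (Fin (n+1)) |
          d < q (Fin.last n) ∧ q (Fin.last n) < R ∧ ‖q - x1‖ < ρ} :=
        (isOpen_lt continuous_const c1).inter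
          ((isOpen_lt c1 continuous_const).inter (isOpen_lt c2 continuous_const))
      filter_upwards [ho.mem_nhds ⟨hxd, hxR', hxρ'⟩] with q hq
      exact hx ⟨by linarith [hq.1], hq.2.1.le, hq.2.2.le⟩)
  rw [sub_sub_cancel] at hpt
  have k1 : 2 * κ * (n + 1) ≤ η := by
    have : κ * ρ * ρ = B := by rw [← hκρ]; ring
    have k2 : 2 * κ * (n + 1) * (ρ * ρ) ≤ η * (ρ * ρ) := by
      calc 2 * κ * (n + 1) * (ρ * ρ) = 2 * B * (n + 1) * 1 := by rw [← this]; ring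
        _ ≤ η * ρ * ρ := by gcongr
        _ = _ := by ring
    exact le_of_mul_le_mul_right k2 (by positivity)
  have k3 : 2 * κ * ‖x - x1‖ + 2 * η * x (Fin.last n) ≤ 4 * η * R := by
    have : κ * ρ ≤ η * R := by
      have k2 : κ * ρ * ρ ≤ η * R * ρ := by
        calc κ * ρ * ρ = B := by rw [← hκρ]; ring
          _ ≤ _ := hρ3
      exact le_of_mul_le_mul_right k2 hρ0
    have e1 : κ * ‖x - x1‖ ≤ κ * ρ := by gcongr
    have e2 : η * x (Fin.last n) ≤ η * R := by gcongr
    linarith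
  have hlast : s * ((2 * κ * ‖x - x1‖ + 2 * η * x (Fin.last n)) / s) ^ p ≤ s * (4 * η * R / s) ^ p := by
    gcongr
  linarith

lemma Sol.tangential (S : Sol p β u) {h : EuclideanSpace ℝ (Fin (n+1))} (hh : h (Fin.last n) = 0)
    {x : EuclideanSpace ℝ (Fin (n+1))} (hx : 0 ≤ x (Fin.last n)) : u (x + h) = u x := by
  have key : ∀ h x : EuclideanSpace ℝ (Fin (n+1)), h (Fin.last n) = 0 → 0 ≤ x (Fin.last n) →
      u (x + h) ≤ u x := by
    intro h x hh hx
    apply le_of_forall_pos_le_add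
    intro ε hε
    have := S.tangential_le hh hx (ε := ε / 3) (by positivity)
    linarith
  apply le_antisymm (key h x hh hx)
  have := key (-h) (x + h) (by simpa using hh) (by simpa [hh] using hx)
  simpa using this

lemma Sol.oneD (S : Sol p β u) {x : EuclideanSpace ℝ (Fin (n+1))} (hx : 0 ≤ x (Fin.last n)) :
    u x = u (x (Fin.last n) • en n) := by
  have := S.tangential (h := x - x (Fin.last n) • en n) (by simp) (x := x (Fin.last n) • en n) (by simpa using hx)
  rw [← this]; congr 1; abel

end

lemma const_Ioi {G : ℝ → ℝ} {a : ℝ} (h : ∀ t, a < t → HasDerivAt G 0 t) {s t : ℝ} (hs : a < s) (ht : a < t) :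
    G s = G t := by
  have key : ∀ s t, a < s → s ≤ t → G t = G s := by
    intro s t hs hst
    refine constant_of_has_deriv_right_zero (a := s) (b := t) (f := G) ?_ ?_ t ⟨hst, le_rfl⟩
    · intro r hr
      exact (h r (lt_of_lt_of_le hs hr.1)).continuousAt.continuousWithinAt
    · intro r hr
      exact (h r (lt_of_lt_of_le hs hr.1)).hasDerivWithinAt
  rcases le_total s t with hst | hst
  · exact (key s t hs hst).symm
  · exact key t s ht hst

lemma const_Ici {G : ℝ → ℝ} (hc : ContinuousOn G (Ici 0)) (h0 : G 0 = 0)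
    (h : ∀ t, 0 < t → HasDerivAt G 0 t) {t : ℝ} (ht : 0 ≤ t) : G t = 0 := by
  rcases ht.eq_or_lt with rfl | ht
  · exact h0
  have hl := ((hc 0 self_mem_Ici).tendsto).mono_left (nhdsWithin_mono (0:ℝ) Ioi_subset_Ici_self)
  rw [h0] at hl
  have hl2 : Tendsto G (𝓝[>] 0) (𝓝 (G t)) := by
    apply tendsto_const_nhds.congr'
    filter_upwards [self_mem_nhdsWithin] with s hs
    exact const_Ioi h ht hs
  exact tendsto_nhds_unique hl2 hl

lemma ode {p β cp : ℝ} (hp : 2 < p) (hβ : β = 1 / (p - 1)) (hcp : cp = β ^ β / (1 - β))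
    {U z : ℝ → ℝ} (hU : ContinuousOn U (Ici 0)) (hU0 : U 0 = 0)
    (h1 : ∀ t, 0 < t → HasDerivAt U (z t) t) (h2 : ∀ t, 0 < t → HasDerivAt z (-|z t| ^ p) t) :
    (∀ t, 0 ≤ t → U t = 0) ∨ ∃ α : ℝ, 0 ≤ α ∧ ∀ t, 0 ≤ t →
      U t = cp * ((α + t) ^ (1 - β) - α ^ (1 - β)) := by
  have hp1 : 0 < p - 1 := by linarith
  have hβ0 : 0 < β := by rw [hβ]; positivity
  have hβ1 : β < 1 := by rw [hβ, div_lt_one hp1]; linarith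
  have hβp : β * (p - 1) = 1 := by rw [hβ]; field_simp
  have hz : ContinuousOn z (Ioi 0) := fun t ht => (h2 t ht).continuousAt.continuousWithinAt
  have hanti : AntitoneOn z (Ioi 0) := by
    apply antitoneOn_of_deriv_nonpos (convex_Ioi 0) hz
    · rw [interior_Ioi]
      exact fun t ht => (h2 t ht).differentiableAt.differentiableWithinAt
    · rw [interior_Ioi]
      intro t ht
      rw [(h2 t ht).deriv]
      have : 0 ≤ |z t| ^ p := by positivity
      linarith
  have hnn : ∀ t, 0 < t → 0 ≤ z t := by
    intro t0 ht0
    by_contra hc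
    push Not at hc
    have hneg : ∀ t, t0 ≤ t → z t < 0 := fun t ht =>
      lt_of_le_of_lt (hanti ht0 (lt_of_lt_of_le ht0 ht) ht) hc
    have hd : ∀ t, t0 < t → HasDerivAt (fun t => (-z t) ^ (1 - p) + (p - 1) * t) 0 t := by
      intro t ht
      have hn := hneg t ht.le
      have hpos : 0 < -z t := by linarith
      have d1 := ((h2 t (ht0.trans ht)).fun_neg).rpow_const (p := 1 - p) (Or.inl hpos.ne')
      refine (d1.add ((hasDerivAt_id t).const_mul (p - 1))).congr_deriv ?_
      rw [abs_of_neg hn, neg_neg, mul_right_comm, ← Real.rpow_add hpos]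
      rw [show p + (1 - p - 1) = 0 by ring, Real.rpow_zero]
      ring
    set w := (-z (t0 + 1)) ^ (1 - p) with hw
    have hw0 : 0 < w := Real.rpow_pos_of_pos (by linarith [hneg (t0 + 1) (by linarith)]) _
    have := const_Ioi hd (s := t0 + 1) (t := t0 + 1 + w / (p - 1)) (by linarith)
      (by have : 0 < w / (p - 1) := by positivity
          linarith)
    simp only [← hw] at this
    have hw1 : 0 < (-z (t0 + 1 + w / (p - 1))) ^ (1 - p) := by
      apply Real.rpow_pos_of_pos
      have h3 : 0 < w / (p - 1) := by positivity
      linarith [hneg (t0 + 1 + w / (p - 1)) (by linarith)]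
    have e : (p - 1) * (t0 + 1 + w / (p - 1)) = (p - 1) * (t0 + 1) + w := by field_simp
    linarith
  by_cases hzero : ∃ t0, 0 < t0 ∧ z t0 = 0
  · left
    obtain ⟨t0, ht0, hzt⟩ := hzero
    have hz0 : ∀ t, 0 < t → z t = 0 := by
      intro t1 ht1
      rcases le_total t0 t1 with hle | hle
      · have := hanti ht0 ht1 hle
        have := hnn t1 ht1
        linarith
      by_contra hne
      have hpos : 0 < z t1 := lt_of_le_of_ne (hnn t1 ht1) (Ne.symm hne)
      set k := z t1 ^ (p - 1) with hk
      have hd : ∀ t, 0 < t → HasDerivAt (fun t => z t * Real.exp (k * t))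
          (-|z t| ^ p * Real.exp (k * t) + z t * (Real.exp (k * t) * k)) t := by
        intro t ht
        have e := ((hasDerivAt_id t).const_mul k).exp
        simp only [id, mul_one] at e
        exact (h2 t ht).mul e
      have hm : MonotoneOn (fun t => z t * Real.exp (k * t)) (Icc t1 t0) := by
        apply monotoneOn_of_deriv_nonneg (convex_Icc _ _)
        · intro t ht
          exact (hd t (lt_of_lt_of_le ht1 ht.1)).continuousAt.continuousWithinAt
        · rw [interior_Icc]
          intro t ht
          exact (hd t (ht1.trans ht.1)).differentiableAt.differentiableWithinAt
        · rw [interior_Icc]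
          intro t ht
          have htp := ht1.trans ht.1
          rw [(hd t htp).deriv]
          have hzn := hnn t htp
          have hle1 : z t ≤ z t1 := hanti ht1 htp ht.1.le
          rw [abs_of_nonneg hzn]
          have hpw : z t ^ p ≤ z t * k := by
            rcases hzn.eq_or_lt with h0 | h0
            · rw [← h0, Real.zero_rpow (by linarith)]; simp
            · have : z t ^ p = z t * z t ^ (p - 1) := by
                nth_rewrite 2 [← Real.rpow_one (z t)]
                rw [← Real.rpow_add h0]; congr 1; ring
              rw [this, hk]
              gcongr
          have he := Real.exp_pos (k * t)
          have := mul_le_mul_of_nonneg_right hpw he.le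
          nlinarith
      have := hm ⟨le_rfl, hle⟩ ⟨hle, le_rfl⟩ hle
      simp only [hzt, zero_mul] at this
      have he := Real.exp_pos (k * t1)
      nlinarith
    intro t ht
    exact const_Ici hU hU0 (fun t ht => by simpa [hz0 t ht] using h1 t ht) ht
  · right
    push Not at hzero
    have hpos : ∀ t, 0 < t → 0 < z t := fun t ht => lt_of_le_of_ne (hnn t ht) (hzero t ht).symm
    have hd : ∀ t, 0 < t → HasDerivAt (fun t => z t ^ (1 - p) - (p - 1) * t) 0 t := by
      intro t ht
      have hp := hpos t ht
      have d1 := (h2 t ht).rpow_const (p := 1 - p) (Or.inl hp.ne')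
      refine (d1.sub ((hasDerivAt_id t).const_mul (p - 1))).congr_deriv ?_
      rw [abs_of_pos hp, mul_right_comm, neg_mul, ← Real.rpow_add hp]
      rw [show p + (1 - p - 1) = 0 by ring, Real.rpow_zero]
      ring
    set k := z 1 ^ (1 - p) - (p - 1) * 1 with hk
    have hw : ∀ t, 0 < t → z t ^ (1 - p) = k + (p - 1) * t := by
      intro t ht
      have := const_Ioi hd ht one_pos
      simp only [← hk] at this
      linarith
    have hk0 : 0 ≤ k := by
      by_contra hc
      push Not at hc
      have ht : 0 < -k / (p - 1) := div_pos (by linarith) hp1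
      have h3 := hw _ ht
      have h4 := Real.rpow_pos_of_pos (hpos _ ht) (1 - p)
      rw [h3, mul_div_cancel₀ _ hp1.ne'] at h4
      linarith
    have hzf : ∀ t, 0 < t → z t = β ^ β * (β * k + t) ^ (-β) := by
      intro t ht
      have hp := hpos t ht
      have e1 : k + (p - 1) * t = β⁻¹ * (β * k + t) := by
        have : β⁻¹ = p - 1 := by rw [hβ]; field_simp
        rw [mul_add, this, ← mul_assoc, mul_comm (p - 1) β, hβp, one_mul]
      calc z t = (z t ^ (1 - p)) ^ (-β) := by
            rw [← Real.rpow_mul hp.le, show (1 - p) * -β = 1 by linarith, Real.rpow_one]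
        _ = _ := by
            rw [hw t ht, e1, Real.mul_rpow (by positivity) (by positivity), Real.inv_rpow hβ0.le,
              Real.rpow_neg hβ0.le, inv_inv]
    refine ⟨β * k, by positivity, fun t ht => ?_⟩
    have := const_Ici (G := fun t => U t - cp * ((β * k + t) ^ (1 - β) - (β * k) ^ (1 - β))) (by
        apply hU.sub
        apply Continuous.continuousOn
        have : Continuous fun s : ℝ => s ^ (1 - β) := Real.continuous_rpow_const (by linarith)
        exact continuous_const.mul ((this.comp (by fun_prop)).sub continuous_const)) (by simp [hU0])
      (fun t ht => by
        have hb : 0 < β * k + t := by positivity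
        have d1 := (((hasDerivAt_id t).const_add (β * k)).rpow_const (p := 1 - β) (Or.inl hb.ne')).sub_const
          ((β * k) ^ (1 - β))
        refine ((h1 t ht).sub (d1.const_mul cp)).congr_deriv ?_
        rw [hzf t ht, hcp]
        simp only [id]
        rw [show 1 - β - 1 = -β by ring]
        have : 1 - β ≠ 0 := by linarith
        field_simp
        ring) ht
    linarith

section
variable {n : ℕ} {u : EuclideanSpace ℝ (Fin (n+1)) → ℝ} {p β : ℝ}

lemma Sol.fd_tan (S : Sol p β u) {x a : EuclideanSpace ℝ (Fin (n+1))} (hx : 0 < x (Fin.last n))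
    (ha : a (Fin.last n) = 0) : fderiv ℝ u x a = 0 := by
  have h1 := (line_deriv S.C2 hx a).1.self_of_nhds
  have h2 : (fun t : ℝ => u (x + t • a)) = fun _ => u x := by
    funext t
    exact S.tangential (by simp [ha]) hx.le
  rw [h2] at h1
  have := h1.unique (hasDerivAt_const (0:ℝ) (u x))
  simpa using this

lemma Sol.D2_tan (S : Sol p β u) {x a : EuclideanSpace ℝ (Fin (n+1))} (hx : 0 < x (Fin.last n))
    (ha : a (Fin.last n) = 0) : D2 u x a = 0 := by
  have h1 := (line_deriv S.C2 hx a).2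
  have h2 : (fun t : ℝ => fderiv ℝ u (x + t • a) a) = fun _ => 0 := by
    funext t
    exact S.fd_tan (by simpa [ha] using hx) ha
  rw [h2] at h1
  exact h1.unique (hasDerivAt_const (0:ℝ) (0:ℝ))

lemma Sol.ode2 (S : Sol p β u) {x : EuclideanSpace ℝ (Fin (n+1))} (hx : 0 < x (Fin.last n)) :
    D2 u x (en n) = -|fderiv ℝ u x (en n)| ^ p := by
  have h1 : lap u x = D2 u x (en n) := by
    rw [lap_eq_basis S.C2 hx (EuclideanSpace.basisFun (Fin (n+1)) ℝ),
      Finset.sum_eq_single (Fin.last n)]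
    · simp [en]
    · intro i _ hi
      exact S.D2_tan hx (by simp [hi.symm])
    · simp
  have h2 : gradient u x = (fderiv ℝ u x (en n)) • en n := by
    apply ext_inner_right ℝ
    intro a
    rw [← grad_apply]
    have h3 := S.fd_tan hx (a := a - a (Fin.last n) • en n) (by simp)
    rw [map_sub, map_smul] at h3
    have e : inner ℝ (en n) a = a (Fin.last n) := by
      simp [en, EuclideanSpace.inner_single_left]
    rw [inner_smul_left, e]
    simp at h3 ⊢
    linarith
  have h3 := S.pde x hx
  rw [h1, h2, norm_smul, norm_en, mul_one, Real.norm_eq_abs] at h3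
  linarith

end

theorem stmt1 {n : ℕ} (p β cp : ℝ) (hp : 2 < p)
    (hβ : β = 1 / (p - 1)) (hcp : cp = β ^ β / (1 - β))
    (u : EuclideanSpace ℝ (Fin (n + 1)) → ℝ)
    (hu_cont : ContinuousOn u {x | 0 ≤ x (Fin.last n)})
    (hu_C2 : ContDiffOn ℝ 2 u {x | 0 < x (Fin.last n)})
    (hPDE : ∀ x : EuclideanSpace ℝ (Fin (n + 1)), 0 < x (Fin.last n) →
      -lap u x = ‖gradient u x‖ ^ p)
    (hbd : ∀ x : EuclideanSpace ℝ (Fin (n + 1)), x (Fin.last n) = 0 → u x = 0) :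
    (∀ x : EuclideanSpace ℝ (Fin (n + 1)), 0 ≤ x (Fin.last n) → u x = 0) ∨
      ∃ α : ℝ, 0 ≤ α ∧ ∀ x : EuclideanSpace ℝ (Fin (n + 1)), 0 ≤ x (Fin.last n) →
        u x = cp * ((α + x (Fin.last n)) ^ (1 - β) - α ^ (1 - β)) := by
  have S : Sol p β u := ⟨hp, hβ, hu_cont, hu_C2, hPDE, hbd⟩
  have hl : ∀ t : ℝ, (t • en n) (Fin.last n) = t := fun t => by simp
  have hsub : ∀ t s : ℝ, t • en n + (s - t) • en n = s • en n := fun t s => by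
    rw [← add_smul]; congr 1; ring
  have hode := ode (U := fun t : ℝ => u (t • en n)) (z := fun t : ℝ => fderiv ℝ u (t • en n) (en n))
    hp hβ hcp
    (by
      apply hu_cont.comp (by fun_prop)
      intro t ht
      show 0 ≤ (t • en n) (Fin.last n)
      rw [hl]; exact ht)
    (hbd _ (by simp))
    (fun t ht => by
      have h1 := (line_deriv hu_C2 (x := t • en n) (by rwa [hl]) (en n)).1.self_of_nhds
      rw [← sub_self t] at h1
      have h2 := h1.comp_sub_const t t
      simp only [hsub] at h2
      exact h2)
    (fun t ht => by
      have h1 := (line_deriv hu_C2 (x := t • en n) (by rwa [hl]) (en n)).2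
      rw [← sub_self t] at h1
      have h2 := h1.comp_sub_const t t
      simp only [hsub] at h2
      rw [S.ode2 (by rwa [hl])] at h2
      exact h2)
  rcases hode with h | ⟨α, hα, h⟩
  · left
    intro x hx
    rw [S.oneD hx]
    exact h _ hx
  · right
    refine ⟨α, hα, fun x hx => ?_⟩
    rw [S.oneD hx]
    exact h _ hx
end
end

section
/- Let p > 2 and let w : [0,∞) → ℝ be continuous on [0,∞), twice continuously differentiable on (0,∞), with w(0) = 0 and −w''(s) = |w'(s)|^p for all s > 0. Then either w ≡ 0, or there exists α ≥ 0 such that w(s) = c_p ((α + s)^{1−β} − α^{1−β}) for all s ≥ 0. -/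
open Set Metric Filter RealInnerProductSpace

noncomputable section

set_option linter.unusedVariables false

theorem aux_lin (f : ℝ → ℝ) (a c : ℝ) (hf : ContinuousOn f (Ici a))
    (hd : ∀ x, a < x → HasDerivAt f c x) : ∀ x, a ≤ x → f x = f a + c * (x - a) := by
  intro x hx
  rcases hx.eq_or_lt with rfl | hx
  · simp
  · obtain ⟨y, hy, h⟩ := exists_hasDerivAt_eq_slope f (fun _ => c) hx
      (hf.mono Icc_subset_Ici_self) (fun y hy => hd y hy.1)
    have : x - a ≠ 0 := by linarith
    field_simp at h
    linarith

theorem stmt2 (p β cp : ℝ) (hp : 2 < p)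
    (hβ : β = 1 / (p - 1)) (hcp : cp = β ^ β / (1 - β))
    (w : ℝ → ℝ) (hw0 : w 0 = 0)
    (hcont : ContinuousOn w (Ici 0))
    (hC2 : ContDiffOn ℝ 2 w (Ioi 0))
    (hODE : ∀ s : ℝ, 0 < s → -deriv (deriv w) s = |deriv w s| ^ p) :
    (∀ s : ℝ, 0 ≤ s → w s = 0) ∨
      ∃ α : ℝ, 0 ≤ α ∧ ∀ s : ℝ, 0 ≤ s →
        w s = cp * ((α + s) ^ (1 - β) - α ^ (1 - β)) := by
  have hw' : ∀ s, 0 < s → HasDerivAt w (deriv w s) s := fun s hs =>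
    ((hC2.contDiffAt (Ioi_mem_nhds hs)).differentiableAt (by norm_num)).hasDerivAt
  have hv' : ∀ s, 0 < s → HasDerivAt (deriv w) (-|deriv w s| ^ p) s := by
    intro s hs
    have h1 : ContDiffOn ℝ 1 (deriv w) (Ioi 0) :=
      ((contDiffOn_succ_iff_deriv_of_isOpen (n := 1) isOpen_Ioi).1 (by
        simpa [one_add_one_eq_two] using hC2)).2.2
    have := ((h1.contDiffAt (Ioi_mem_nhds hs)).differentiableAt (by norm_num)).hasDerivAt
    rwa [← hODE s hs, neg_neg]
  generalize deriv w = v at hw' hv'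
  clear hODE hC2
  have hvc : ∀ a, 0 < a → ContinuousOn v (Ici a) := fun a ha x hx =>
    (hv' x (lt_of_lt_of_le ha hx)).continuousAt.continuousWithinAt
  have hanti : ∀ a b, 0 < a → a ≤ b → v b ≤ v a := by
    intro a b ha hab
    rcases hab.eq_or_lt with rfl | hab
    · rfl
    · obtain ⟨y, hy, h⟩ := exists_hasDerivAt_eq_slope v (fun s => -|v s| ^ p) hab
        ((hvc a ha).mono Icc_subset_Ici_self) (fun y hy => hv' y (ha.trans hy.1))
      have h1 : 0 < b - a := by linarith
      have h2 : (v b - v a) / (b - a) ≤ 0 := by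
        rw [← h]
        have : 0 ≤ |v y| ^ p := Real.rpow_nonneg (abs_nonneg _) _
        linarith
      rw [div_le_iff₀ h1] at h2
      linarith
  have hnn : ∀ s, 0 < s → 0 ≤ v s := by
    intro s hs
    by_contra! hneg
    have hn : ∀ x, s ≤ x → 0 < -v x := fun x hx => by
      have := hanti s x hs hx
      linarith
    have hd : ∀ x, s ≤ x → HasDerivAt (fun x => (-v x) ^ (1 - p)) (1 - p) x := by
      intro x hx
      have h1 := ((hv' x (hs.trans_le hx)).neg).rpow_const (p := 1 - p) (Or.inl (hn x hx).ne')
      refine HasDerivAt.congr_deriv h1 ?_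
      have h2 := hn x hx
      have h3 : |v x| = -v x := abs_of_neg (by linarith)
      have h4 : (-v x) ^ p * (-v x) ^ (1 - p - 1) = 1 := by
        rw [← Real.rpow_add h2]
        simp
      simp only [Pi.neg_apply, h3, neg_neg]
      linear_combination (1 - p) * h4
    have hl := aux_lin _ s (1 - p) (fun x hx => (hd x hx).continuousAt.continuousWithinAt)
      (fun x hx => hd x hx.le)
    have hA : 0 < (-v s) ^ (1 - p) := Real.rpow_pos_of_pos (hn s le_rfl) _
    have hq : 0 < p - 1 := by linarith
    have hx : s ≤ s + (-v s) ^ (1 - p) / (p - 1) := by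
      have := div_pos hA hq
      linarith
    have h5 := hl _ hx
    have h6 := Real.rpow_pos_of_pos (hn _ hx) (1 - p)
    have h7 : (1 - p) * (s + (-v s) ^ (1 - p) / (p - 1) - s) = - (-v s) ^ (1 - p) := by
      field_simp
      ring
    rw [h7] at h5
    linarith
  by_cases hz : ∀ s, 0 < s → v s = 0
  · left
    intro s hs
    have := aux_lin w 0 0 hcont (fun x hx => by simpa [hz x hx] using hw' x hx) s hs
    simpa [hw0] using this
  right
  push Not at hz
  obtain ⟨s0, hs0, hne⟩ := hz
  have hv0 : 0 < v s0 := lt_of_le_of_ne (hnn s0 hs0) hne.symm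
  have hpos : ∀ s, 0 < s → 0 < v s := by
    intro s hs
    rcases le_total s s0 with h | h
    · exact hv0.trans_le (hanti s s0 hs h)
    set M := v s0 ^ (p - 1) with hM
    rcases h.eq_or_lt with rfl | h
    · exact hv0
    have hd : ∀ x, s0 ≤ x → HasDerivAt (fun x => v x * Real.exp (M * x))
        (-|v x| ^ p * Real.exp (M * x) + v x * (Real.exp (M * x) * (M * 1))) x := fun x hx =>
      (hv' x (hs0.trans_le hx)).mul (((hasDerivAt_id x).const_mul M).exp)
    obtain ⟨y, hy, h1⟩ := exists_hasDerivAt_eq_slope _ _ h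
      (fun x hx => (hd x hx.1).continuousAt.continuousWithinAt) (fun y hy => hd y hy.1.le)
    have hy0 := hnn y (hs0.trans hy.1)
    have h2 : |v y| ^ p ≤ v y * M := by
      rw [abs_of_nonneg hy0]
      have h3 : v y ^ p = v y * v y ^ (p - 1) := by
        rw [← Real.rpow_one_add' hy0 (by linarith)]
        congr 1
        ring
      rw [h3]
      exact mul_le_mul_of_nonneg_left
        (Real.rpow_le_rpow hy0 (hanti s0 y hs0 hy.1.le) (by linarith)) hy0
    have h4 : 0 ≤ -|v y| ^ p * Real.exp (M * y) + v y * (Real.exp (M * y) * (M * 1)) := by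
      have := mul_nonneg (sub_nonneg.2 h2) (Real.exp_pos (M * y)).le
      linarith
    rw [h1, le_div_iff₀ (by linarith)] at h4
    have h5 : 0 < v s0 * Real.exp (M * s0) := mul_pos hv0 (Real.exp_pos _)
    have h6 : 0 < v s * Real.exp (M * s) := by linarith
    exact pos_of_mul_pos_left h6 (Real.exp_pos _).le
  have hd : ∀ x, 0 < x → HasDerivAt (fun x => (v x) ^ (1 - p)) (p - 1) x := by
    intro x hx
    have h2 := hpos x hx
    have h1 := (hv' x hx).rpow_const (p := 1 - p) (Or.inl h2.ne')
    refine HasDerivAt.congr_deriv h1 ?_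
    have h4 : (v x) ^ p * (v x) ^ (1 - p - 1) = 1 := by
      rw [← Real.rpow_add h2]
      simp
    rw [abs_of_pos h2]
    linear_combination (p - 1) * h4
  have hl : ∀ a x, 0 < a → a ≤ x → v x ^ (1 - p) = v a ^ (1 - p) + (p - 1) * (x - a) :=
    fun a x ha hx => aux_lin _ a (p - 1)
      (fun x hx => (hd x (ha.trans_le hx)).continuousAt.continuousWithinAt)
      (fun x hx => hd x (ha.trans hx)) x hx
  have hq : 0 < p - 1 := by linarith
  obtain ⟨α, hα⟩ : ∃ α, α = v 1 ^ (1 - p) / (p - 1) - 1 := ⟨_, rfl⟩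
  have hg : ∀ x, 0 < x → v x ^ (1 - p) = (p - 1) * (α + x) := by
    intro x hx
    have e : (p - 1) * (α + x) = v 1 ^ (1 - p) + (p - 1) * (x - 1) := by
      rw [hα]
      field_simp
      ring
    rw [e]
    rcases le_total 1 x with h | h
    · exact hl 1 x one_pos h
    · have := hl x 1 hx h
      linarith
  have hα0 : 0 ≤ α := by
    by_contra! h
    have h1 := hg (-α) (by linarith)
    have h2 := Real.rpow_pos_of_pos (hpos (-α) (by linarith)) (1 - p)
    rw [h1] at h2
    simp at h2
  have hβ0 : 0 < β := by rw [hβ]; positivity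
  have hβ1 : β < 1 := by rw [hβ, div_lt_one hq]; linarith
  have hβq : β * (p - 1) = 1 := by rw [hβ]; field_simp
  have hve : ∀ x, 0 < x → v x = β ^ β * (α + x) ^ (-β) := by
    intro x hx
    have h1 : v x = (v x ^ (1 - p)) ^ (-β) := by
      rw [← Real.rpow_mul (hpos x hx).le]
      have : (1 - p) * -β = 1 := by linarith
      rw [this, Real.rpow_one]
    have h2 : p - 1 = β⁻¹ := by rw [hβ]; simp
    rw [h1, hg x hx, Real.mul_rpow hq.le (by linarith), h2, Real.inv_rpow hβ0.le,
      Real.rpow_neg hβ0.le, inv_inv]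
  refine ⟨α, hα0, fun s hs => ?_⟩
  have hcc : ContinuousOn (fun x => w x - cp * (α + x) ^ (1 - β)) (Ici 0) := by
    refine hcont.sub (Continuous.continuousOn ?_)
    exact continuous_const.mul ((continuous_const.add continuous_id).rpow_const
      (fun x => Or.inr (by linarith)))
  have := aux_lin _ 0 0 hcc (fun x hx => by
    have h1 := ((((hasDerivAt_id x).const_add α).rpow_const (p := 1 - β)
      (Or.inl (by simp only [id]; linarith))).const_mul cp)
    refine HasDerivAt.congr_deriv ((hw' x hx).sub h1) ?_
    rw [hve x hx, hcp]
    have : 1 - β ≠ 0 := by linarith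
    have e : 1 - β - 1 = -β := by ring
    simp only [id, e]
    field_simp
    ring) s hs
  simp only [hw0, add_zero] at this
  linarith
end
end
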